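/- arXiv:0802.3320 — 6 statements merged into one kernel-verified Lean document; each statement's English description precedes it below -/
import Mathlib

section
/- For every integer n and every natural number k, the function f(r, z) = (cos r)^{|n|} · P_k^{0,|n|}(cos 2r) · e^{inz} (of the real variables r ∈ (0, π/2) and z ∈ ℝ, with values in ℂ) satisfies L f = -(4k(k+|n|+1) + 2|n|) · f, where L is the differential operator L f = ∂²f/∂r² + 2·cot(2r)·∂f/∂r + tan²(r)·∂²f/∂z². -/
open Real

/-- The Jacobi polynomial `P_k^{0,m}` defined by the Rodrigues-type formula. -/
noncomputable def jacobiP (k m : ℕ) (x : ℝ) : ℝ :=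
  ((-1 : ℝ) ^ k / (2 ^ k * (Nat.factorial k : ℝ) * (1 + x) ^ m)) *
    iteratedDeriv k (fun y : ℝ => (1 + y) ^ m * (1 - y ^ 2) ^ k) x

/-- The function `f(r,z) = (cos r)^{|n|} P_k^{0,|n|}(cos 2r) e^{inz}`. -/
noncomputable def eigenFun (n : ℤ) (k : ℕ) (r z : ℝ) : ℂ :=
  (((Real.cos r) ^ n.natAbs * jacobiP k n.natAbs (Real.cos (2 * r)) : ℝ) : ℂ) *
    Complex.exp ((n : ℂ) * (z : ℂ) * Complex.I)

/-!
Write `m = |n|`. The weight `w = (1 - x)ᵏ (1 + x)ᵐ⁺ᵏ` satisfies the Pearson equation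
`(1 - x²) w' = (m - (m + 2k) x) w`; differentiating it `k + 1` times gives a second-order equation
for `w⁽ᵏ⁾`. Because `1 + cos 2r = 2 cos² r`, dividing by `(1 + x)ᵐ` in the Rodrigues formula turns
the factor `cosᵐ r` of the eigenfunction into a constant times `cos⁻ᵐ r`. On the mode `e^{inz}` the
sublaplacian acts as an ordinary differential operator in `r`. Applied to `cosˢ r · q(cos 2r)` with
`s² = n²`, its `tan²` terms cancel and a polynomial operator in `x = cos 2r` acting on `q` remains;
for `s = -m` and `q = w⁽ᵏ⁾` this is the equation above.
-/

section Rodrigues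

open Polynomial

variable {R : Type*} [CommRing R]

lemma iterate_derivative_of_pearson {σ τ p : R[X]} (hσ : derivative^[3] σ = 0)
    (hτ : derivative^[2] τ = 0) (hp : σ * derivative p = τ * p) (j : ℕ) :
    σ * derivative^[j + 2] p + ((j + 1 : ℕ) * derivative σ - τ) * derivative^[j + 1] p +
      (((j + 1).choose 2 : ℕ) * derivative (derivative σ) - (j + 1 : ℕ) * derivative τ) *
        derivative^[j] p = 0 := by
  simp only [Function.iterate_succ_apply', Function.iterate_zero_apply] at hσ hτ ⊢
  induction j with
  | zero =>
    have hp' := congrArg derivative hp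
    simp only [derivative_mul] at hp'
    simp only [Function.iterate_zero_apply, zero_add, Nat.cast_one,
      Nat.choose_eq_zero_of_lt one_lt_two, Nat.cast_zero]
    linear_combination hp'
  | succ j ih =>
    have ih' := congrArg derivative ih
    simp only [derivative_add, derivative_sub, derivative_mul, derivative_natCast, hσ, hτ,
      derivative_zero] at ih'
    have hchoose : (j + 1 + 1).choose 2 = (j + 1) + (j + 1).choose 2 := by
      rw [Nat.choose_succ_succ' (j + 1) 1, Nat.choose_one_right]
    simp only [Function.iterate_succ_apply', hchoose]
    push_cast at ih' ⊢
    linear_combination ih'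

lemma mul_derivative_pow (p : R[X]) (n : ℕ) :
    p * derivative (p ^ n) = n * derivative p * p ^ n := by
  cases n with
  | zero => simp
  | succ n =>
    rw [derivative_pow_succ, map_add, map_natCast, map_one, Nat.cast_add_one]
    ring

lemma jacobiWeight_pearson (a b : ℕ) :
    (1 - X ^ 2) * derivative ((1 - X) ^ a * (1 + X) ^ b : R[X]) =
      (C (b - a : R) - C (a + b : R) * X) * ((1 - X) ^ a * (1 + X) ^ b) := by
  have h_sub := mul_derivative_pow (1 - X : R[X]) a
  have h_add := mul_derivative_pow (1 + X : R[X]) b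
  rw [derivative_mul]
  simp only [derivative_sub, derivative_add, derivative_one, derivative_X] at h_sub h_add
  simp only [map_sub, map_add, map_natCast]
  linear_combination (1 + X) * (1 + X) ^ b * h_sub + (1 - X) * (1 - X) ^ a * h_add

variable (R) in
/-- The numerator `dᵏ/dxᵏ [(1 - x)^(α + k) (1 + x)^(β + k)]` of the Rodrigues formula for the Jacobi
polynomial `P_k^{α,β}`, as a polynomial over `R`. -/
noncomputable def jacobiRodrigues (α β k : ℕ) : R[X] :=
  derivative^[k] ((1 - X) ^ (α + k) * (1 + X) ^ (β + k))

lemma jacobiRodrigues_ode (α β k : ℕ) :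
    (1 - X ^ 2) * derivative (derivative (jacobiRodrigues R α β k)) +
      (C (α - β : R) + C (α + β - 2 : R) * X) * derivative (jacobiRodrigues R α β k) +
      C ((k + 1) * (k + α + β) : R) * jacobiRodrigues R α β k = 0 := by
  have hode := iterate_derivative_of_pearson (by simp) (by simp)
    (jacobiWeight_pearson (R := R) (α + k) (β + k)) k
  have hchoose : (2 * (k + 1).choose 2 : R[X]) = (k + 1) * k := by
    have := Nat.add_one_mul_choose_eq k 1
    rw [Nat.choose_one_right, mul_comm ((k + 1).choose 2)] at this
    exact_mod_cast congrArg (Nat.cast (R := R[X])) this.symm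
  have hσ' : derivative (1 - X ^ 2 : R[X]) = -2 * X := by
    rw [derivative_sub, derivative_one, derivative_X_sq, map_ofNat]
    ring
  have hσ'' : derivative (-2 * X : R[X]) = -2 := by simp
  simp only [Function.iterate_succ_apply', hσ', hσ'', derivative_sub, derivative_C,
    derivative_C_mul, derivative_X] at hode
  unfold jacobiRodrigues
  generalize derivative^[k] ((1 - X) ^ (α + k) * (1 + X) ^ (β + k) : R[X]) = g at hode ⊢
  simp only [map_add, map_sub, map_mul, map_natCast, map_one, map_ofNat] at hode ⊢
  push_cast at hode
  linear_combination hode + g * hchoose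

lemma iteratedDeriv_polynomial_eval {𝕜 : Type*} [NontriviallyNormedField 𝕜] (p : 𝕜[X]) (k : ℕ) :
    iteratedDeriv k (fun y => p.eval y) = fun y => (derivative^[k] p).eval y := by
  induction k with
  | zero => simp
  | succ k ih =>
    funext y
    rw [iteratedDeriv_succ, ih, Polynomial.deriv, Function.iterate_succ_apply']

lemma jacobiP_eq_jacobiRodrigues (k m : ℕ) (x : ℝ) :
    jacobiP k m x =
      (-1) ^ k / (2 ^ k * (k.factorial : ℝ) * (1 + x) ^ m) * (jacobiRodrigues ℝ 0 m k).eval x := by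
  have hweight : (fun y : ℝ => (1 + y) ^ m * (1 - y ^ 2) ^ k) =
      fun y => ((1 - X) ^ (0 + k) * (1 + X) ^ (m + k) : ℝ[X]).eval y := by
    funext y
    simp only [eval_mul, eval_pow, eval_sub, eval_add, eval_one, eval_X]
    rw [show 1 - y ^ 2 = (1 - y) * (1 + y) by ring, mul_pow]
    ring
  rw [jacobiP, hweight, iteratedDeriv_polynomial_eval, jacobiRodrigues]

-- Where `cos r = 0` and `m ≠ 0`, both sides vanish through `x / 0 = 0`.
lemma cos_pow_mul_jacobiP_cos_two_mul (k m : ℕ) (r : ℝ) :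
    cos r ^ m * jacobiP k m (cos (2 * r)) =
      cos r ^ (-m : ℤ) * ((-1) ^ k / (2 ^ k * (k.factorial : ℝ) * 2 ^ m) *
        (jacobiRodrigues ℝ 0 m k).eval (cos (2 * r))) := by
  have hbase : (1 + cos (2 * r)) ^ m = 2 ^ m * (cos r ^ m * cos r ^ m) := by
    rw [cos_two_mul]
    ring
  rw [jacobiP_eq_jacobiRodrigues, hbase, zpow_neg, zpow_natCast, ← div_self_mul_self' (cos r ^ m)]
  ring

end Rodrigues

section Sublaplacian

/-- The sublaplacian of `SU(2)` in cylindric coordinates `(r, θ, z)`, on functions of `(r, z)`. -/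
noncomputable def sublaplacian (f : ℝ → ℝ → ℂ) (r z : ℝ) : ℂ :=
  deriv (fun r' => deriv (fun r'' => f r'' z) r') r
    + 2 * ((cos (2 * r) / sin (2 * r) : ℝ) : ℂ) * deriv (fun r' => f r' z) r
    + ((tan r ^ 2 : ℝ) : ℂ) * deriv (fun z' => deriv (fun z'' => f r z'') z') z

/-- The radial operator by which the sublaplacian acts on the functions `u(r) e^{iνz}`. -/
noncomputable def sublaplacianMode (ν : ℝ) (u : ℝ → ℝ) (r : ℝ) : ℝ :=
  deriv (deriv u) r + 2 * (cos (2 * r) / sin (2 * r)) * deriv u r - ν ^ 2 * tan r ^ 2 * u r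

lemma deriv_ofReal_comp (u : ℝ → ℝ) (x : ℝ) :
    deriv (fun y => (u y : ℂ)) x = ((deriv u x : ℝ) : ℂ) := by
  by_cases hu : DifferentiableAt ℝ u x
  · exact hu.hasDerivAt.ofReal_comp.deriv
  · have hu_complex : ¬ DifferentiableAt ℝ (fun y => (u y : ℂ)) x := fun h =>
      hu (Complex.reCLM.differentiableAt.comp x h)
    rw [deriv_zero_of_not_differentiableAt hu, deriv_zero_of_not_differentiableAt hu_complex,
      Complex.ofReal_zero]

lemma deriv_cexp_mul_ofReal_mul_I (ν : ℂ) (z : ℝ) :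
    deriv (fun y : ℝ => Complex.exp (ν * y * Complex.I)) z =
      ν * Complex.I * Complex.exp (ν * z * Complex.I) := by
  have hphase : HasDerivAt (fun y : ℝ => ν * (y : ℂ) * Complex.I) (ν * 1 * Complex.I) z :=
    ((Complex.ofRealCLM.hasDerivAt (x := z)).const_mul ν).mul_const Complex.I
  rw [hphase.cexp.deriv]
  ring

lemma sublaplacian_ofReal_mul_cexp (ν : ℝ) (u : ℝ → ℝ) (r z : ℝ) :
    sublaplacian (fun r z => (u r : ℂ) * Complex.exp (ν * z * Complex.I)) r z =
      (sublaplacianMode ν u r : ℂ) * Complex.exp (ν * z * Complex.I) := by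
  simp only [sublaplacian, sublaplacianMode, deriv_mul_const_field, deriv_const_mul_field,
    deriv_ofReal_comp, deriv_cexp_mul_ofReal_mul_I]
  push_cast
  linear_combination (Complex.tan r ^ 2 * u r * ν ^ 2 * Complex.exp (ν * z * Complex.I)) *
    Complex.I_sq

lemma hasDerivAt_comp_cos_two_mul {q : ℝ → ℝ} {q' x : ℝ} (hq : HasDerivAt q q' (cos (2 * x))) :
    HasDerivAt (fun y => q (cos (2 * y))) (q' * (-2 * sin (2 * x))) x := by
  have hcos : HasDerivAt (fun y => cos (2 * y)) (-2 * sin (2 * x)) x := by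
    simpa [mul_comm] using ((hasDerivAt_id x).const_mul (2 : ℝ)).cos
  exact hq.comp x hcos

lemma hasDerivAt_sin_two_mul (x : ℝ) :
    HasDerivAt (fun y => sin (2 * y)) (2 * cos (2 * x)) x := by
  simpa [mul_comm] using ((hasDerivAt_id x).const_mul (2 : ℝ)).sin

lemma hasDerivAt_cos_zpow_mul (s : ℤ) {v : ℝ → ℝ} {v' x : ℝ} (hv : HasDerivAt v v' x)
    (hx : cos x ≠ 0) :
    HasDerivAt (fun y => cos y ^ s * v y) (cos x ^ s * (v' - s * tan x * v x)) x := by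
  have hpow : HasDerivAt (fun y => cos y ^ s) (s * cos x ^ (s - 1) * -sin x) x :=
    (hasDerivAt_zpow s (cos x) (Or.inl hx)).comp x (hasDerivAt_cos x)
  refine (hpow.mul hv).congr_deriv ?_
  rw [zpow_sub_one₀ hx, tan_eq_sin_div_cos]
  ring

lemma tan_mul_sin_two_mul {r : ℝ} (hr : cos r ≠ 0) : tan r * sin (2 * r) = 1 - cos (2 * r) := by
  rw [sin_two_mul, cos_two_mul', ← sin_sq_add_cos_sq r]
  linear_combination 2 * sin r * tan_mul_cos hr

lemma one_div_cos_sq_add_two_mul_cot_two_mul_mul_tan {r : ℝ} (hr : sin (2 * r) ≠ 0) :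
    1 / cos r ^ 2 + 2 * (cos (2 * r) / sin (2 * r)) * tan r = 2 := by
  obtain ⟨hsin, hcos⟩ : sin r ≠ 0 ∧ cos r ≠ 0 := by simpa [sin_two_mul] using hr
  rw [sin_two_mul, cos_two_mul, tan_eq_sin_div_cos]
  field_simp
  ring

lemma sublaplacianMode_cos_zpow_mul_comp_cos_two_mul {ν : ℝ} {s : ℤ} (hν : ν ^ 2 = (s : ℝ) ^ 2)
    {q q' q'' : ℝ → ℝ} (hq : ∀ x, HasDerivAt q (q' x) x) (hq' : ∀ x, HasDerivAt q' (q'' x) x)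
    {r : ℝ} (hr : sin (2 * r) ≠ 0) :
    sublaplacianMode ν (fun x => cos x ^ s * q (cos (2 * x))) r =
      cos r ^ s * (4 * (1 - cos (2 * r) ^ 2) * q'' (cos (2 * r)) +
        4 * (s - (s + 2) * cos (2 * r)) * q' (cos (2 * r)) - 2 * s * q (cos (2 * r))) := by
  have hcos : cos r ≠ 0 := by
    rw [sin_two_mul] at hr
    exact right_ne_zero_of_mul hr
  set u := fun x => cos x ^ s * q (cos (2 * x))
  have hu' {x : ℝ} (hx : cos x ≠ 0) : deriv u x = cos x ^ s *
      (q' (cos (2 * x)) * (-2 * sin (2 * x)) - s * tan x * q (cos (2 * x))) :=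
    (hasDerivAt_cos_zpow_mul s (hasDerivAt_comp_cos_two_mul (hq _)) hx).deriv
  have hu'' : deriv (deriv u) r = cos r ^ s *
      (q'' (cos (2 * r)) * (-2 * sin (2 * r)) * (-2 * sin (2 * r)) +
        q' (cos (2 * r)) * (-2 * (2 * cos (2 * r))) -
        (s * (1 / cos r ^ 2) * q (cos (2 * r)) +
          s * tan r * (q' (cos (2 * r)) * (-2 * sin (2 * r)))) -
        s * tan r * (q' (cos (2 * r)) * (-2 * sin (2 * r)) - s * tan r * q (cos (2 * r)))) := by
    rw [Filter.EventuallyEq.deriv_eq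
      ((continuous_cos.continuousAt.eventually_ne hcos).mono fun _ => hu')]
    exact (hasDerivAt_cos_zpow_mul s
      (((hasDerivAt_comp_cos_two_mul (hq' _)).mul ((hasDerivAt_sin_two_mul r).const_mul (-2))).sub
        (((hasDerivAt_tan hcos).const_mul (s : ℝ)).mul (hasDerivAt_comp_cos_two_mul (hq _))))
      hcos).deriv
  rw [sublaplacianMode, hu'', hu' hcos]
  have hcot : cos (2 * r) / sin (2 * r) * sin (2 * r) = cos (2 * r) := div_mul_cancel₀ _ hr
  linear_combination cos r ^ s *
    (4 * q'' (cos (2 * r)) * sin_sq (2 * r) +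
      4 * s * q' (cos (2 * r)) * tan_mul_sin_two_mul hcos - 4 * q' (cos (2 * r)) * hcot -
      s * q (cos (2 * r)) * one_div_cos_sq_add_two_mul_cot_two_mul_mul_tan hr -
      tan r ^ 2 * q (cos (2 * r)) * hν)

lemma sublaplacianMode_cos_pow_mul_jacobiP {ν : ℝ} {m : ℕ} (hν : ν ^ 2 = (m : ℝ) ^ 2) (k : ℕ)
    {r : ℝ} (hr : sin (2 * r) ≠ 0) :
    sublaplacianMode ν (fun x => cos x ^ m * jacobiP k m (cos (2 * x))) r =
      -(4 * k * (k + m + 1) + 2 * m) * (cos r ^ m * jacobiP k m (cos (2 * r))) := by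
  have hν_neg : ν ^ 2 = ((-m : ℤ) : ℝ) ^ 2 := by simpa using hν
  set g := jacobiRodrigues ℝ 0 m k
  have hmode := sublaplacianMode_cos_zpow_mul_comp_cos_two_mul hν_neg
    (fun x => (g.hasDerivAt x).const_mul ((-1) ^ k / (2 ^ k * (k.factorial : ℝ) * 2 ^ m)))
    (fun x => (g.derivative.hasDerivAt x).const_mul _) hr
  have hode := congrArg (Polynomial.eval (cos (2 * r))) (jacobiRodrigues_ode (R := ℝ) 0 m k)
  simp only [Polynomial.eval_add, Polynomial.eval_sub, Polynomial.eval_mul, Polynomial.eval_pow,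
    Polynomial.eval_C, Polynomial.eval_X, Polynomial.eval_one, Polynomial.eval_zero] at hode
  simp only [cos_pow_mul_jacobiP_cos_two_mul]
  rw [hmode]
  push_cast at hode ⊢
  linear_combination 4 * cos r ^ (-m : ℤ) * ((-1) ^ k / (2 ^ k * (k.factorial : ℝ) * 2 ^ m)) * hode

theorem stmt_0_general (n : ℤ) (k : ℕ) {r : ℝ} (hr : sin (2 * r) ≠ 0) (z : ℝ) :
    sublaplacian (eigenFun n k) r z =
      -(4 * (k : ℂ) * ((k : ℂ) + (n.natAbs : ℂ) + 1) + 2 * (n.natAbs : ℂ)) *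
        eigenFun n k r z := by
  have hν : (n : ℝ) ^ 2 = (n.natAbs : ℝ) ^ 2 := by simp
  have hsep : eigenFun n k = fun r z =>
      ((cos r ^ n.natAbs * jacobiP k n.natAbs (cos (2 * r)) : ℝ) : ℂ) *
        Complex.exp ((n : ℝ) * (z : ℝ) * Complex.I) := by
    funext r z
    rw [eigenFun, Complex.ofReal_intCast]
  simp only [hsep]
  rw [sublaplacian_ofReal_mul_cexp, sublaplacianMode_cos_pow_mul_jacobiP hν k hr]
  push_cast
  ring

end Sublaplacian

/-- For every `n : ℤ` and `k : ℕ`, the function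
`f(r,z) = (cos r)^{|n|} P_k^{0,|n|}(cos 2r) e^{inz}` satisfies
`L f = -(4k(k+|n|+1) + 2|n|) f`, where
`L f = ∂²f/∂r² + 2 cot(2r) ∂f/∂r + tan²(r) ∂²f/∂z²`. -/
theorem stmt_0 (n : ℤ) (k : ℕ) (r : ℝ) (hr : r ∈ Set.Ioo 0 (Real.pi / 2)) (z : ℝ) :
    deriv (fun r' => deriv (fun r'' => eigenFun n k r'' z) r') r
      + 2 * ((Real.cos (2 * r) / Real.sin (2 * r) : ℝ) : ℂ) *
          deriv (fun r' => eigenFun n k r' z) r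
      + ((Real.tan r ^ 2 : ℝ) : ℂ) *
          deriv (fun z' => deriv (fun z'' => eigenFun n k r z'') z') z
    = -(4 * (k : ℂ) * ((k : ℂ) + (n.natAbs : ℂ) + 1) + 2 * (n.natAbs : ℂ)) *
        eigenFun n k r z := by
  have hsin : sin (2 * r) ≠ 0 :=
    (sin_pos_of_mem_Ioo ⟨by linarith [hr.1], by linarith [hr.2]⟩).ne'
  exact stmt_0_general n k hsin z
end

section
/- For every smooth function f : ℂ-valued, of the variables (r, θ, z) ∈ (0, π/2) × ℝ × ℝ, one has the operator identity (X + iY)(L f) = (L - 4iZ + 4)((X + iY) f), where X, Y, Z are the explicit first-order differential operators given in the context and L = X² + Y². -/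
open Real

/-- Partial derivative in `r` of a function of `(r, θ, z)`. -/
noncomputable def Dr (f : ℝ → ℝ → ℝ → ℂ) (r θ z : ℝ) : ℂ := deriv (fun r' => f r' θ z) r

/-- Partial derivative in `θ` of a function of `(r, θ, z)`. -/
noncomputable def Dtheta (f : ℝ → ℝ → ℝ → ℂ) (r θ z : ℝ) : ℂ := deriv (fun θ' => f r θ' z) θ

/-- Partial derivative in `z` of a function of `(r, θ, z)`. -/
noncomputable def Dz (f : ℝ → ℝ → ℝ → ℂ) (r θ z : ℝ) : ℂ := deriv (fun z' => f r θ z') z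

/-- The left-invariant vector field `X` on `SU(2)` in cylindric coordinates. -/
noncomputable def Xop (f : ℝ → ℝ → ℝ → ℂ) (r θ z : ℝ) : ℂ :=
  (Real.cos (2 * z - θ) : ℂ) * Dr f r θ z +
    (Real.sin (2 * z - θ) : ℂ) * ((Real.tan r : ℂ) * Dz f r θ z +
      ((Real.tan r + 1 / Real.tan r : ℝ) : ℂ) * Dtheta f r θ z)

/-- The left-invariant vector field `Y` on `SU(2)` in cylindric coordinates. -/
noncomputable def Yop (f : ℝ → ℝ → ℝ → ℂ) (r θ z : ℝ) : ℂ :=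
  -(Real.sin (2 * z - θ) : ℂ) * Dr f r θ z +
    (Real.cos (2 * z - θ) : ℂ) * ((Real.tan r : ℂ) * Dz f r θ z +
      ((Real.tan r + 1 / Real.tan r : ℝ) : ℂ) * Dtheta f r θ z)

/-- The left-invariant vector field `Z = ∂/∂z`. -/
noncomputable def Zop (f : ℝ → ℝ → ℝ → ℂ) (r θ z : ℝ) : ℂ := Dz f r θ z

/-- The sublaplacian `L = X² + Y²`. -/
noncomputable def Lop (f : ℝ → ℝ → ℝ → ℂ) (r θ z : ℝ) : ℂ :=
  Xop (Xop f) r θ z + Yop (Yop f) r θ z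

/-- The complex gradient `X + iY`. -/
noncomputable def Wop (f : ℝ → ℝ → ℝ → ℂ) (r θ z : ℝ) : ℂ :=
  Xop f r θ z + Complex.I * Yop f r θ z

/-!
The fields `X`, `Y`, `Z` act on smooth functions on the chart as an `su(2)` triple:
`[X, Y] = 2Z`, `[Y, Z] = 2X`, `[Z, X] = 2Y`. The theorem is a formal consequence of these relations
in any associative algebra containing `i`. With `W = X + iY` one has `[W, X] = -2iZ` and
`[W, Y] = 2Z`, so `[W, X² + Y²] = -2i(ZW + WZ)`; since `[W, Z] = 2iW`, the right-hand side is
`-4iZW + 4W`.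

To find the brackets, note that `X` and `Y` are the members `α = 0` and `α = π/2` of the family of
vector fields obtained by replacing the phase `2z - θ` in `X` by `2z - θ + α`.
-/

open Set VectorField TopologicalSpace
open scoped ContDiff

section SU2Triple

/-- Three elements of an associative ring satisfying the commutation relations of the standard
basis of `su(2)`, normalised as for the Pauli matrices. -/
structure IsSU2Triple {A : Type*} [Ring A] (x y z : A) : Prop where
  lie_x_y : ⁅x, y⁆ = 2 • z
  lie_y_z : ⁅y, z⁆ = 2 • x
  lie_z_x : ⁅z, x⁆ = 2 • y

namespace IsSU2Triple

attribute [local instance] LieRing.ofAssociativeRing LieAlgebra.ofAssociativeAlgebra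

variable {R A : Type*} [CommRing R] [Ring A] [Algebra R A] {i : R} {x y z : A}

theorem lie_ladder_x (h : IsSU2Triple x y z) (i : R) : ⁅x + i • y, x⁆ = -(2 * i) • z := by
  have hyx : ⁅y, x⁆ = -(2 • z) := by rw [← lie_skew, h.lie_x_y]
  rw [add_lie, lie_self, smul_lie, hyx]
  module

theorem lie_ladder_y (h : IsSU2Triple x y z) (i : R) : ⁅x + i • y, y⁆ = (2 : R) • z := by
  rw [add_lie, smul_lie, lie_self, h.lie_x_y]
  module

theorem lie_ladder_z (h : IsSU2Triple x y z) (hi : i * i = -1) :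
    ⁅x + i • y, z⁆ = (2 * i) • (x + i • y) := by
  have hxz : ⁅x, z⁆ = -(2 • y) := by rw [← lie_skew, h.lie_z_x]
  rw [add_lie, smul_lie, hxz, h.lie_y_z, smul_add, smul_smul, mul_assoc, hi]
  module

theorem ladder_mul_sum_mul_self (h : IsSU2Triple x y z) (hi : i * i = -1) :
    (x + i • y) * (x * x + y * y) =
      (x * x + y * y) * (x + i • y) - (4 * i) • (z * (x + i • y)) + (4 : R) • (x + i • y) := by
  have two_eq : (2 : R) = -(2 * i * i) := by linear_combination 2 * hi
  have sq_two_mul : (2 * i) * (2 * i) = -4 := by linear_combination 4 * hi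
  calc (x + i • y) * (x * x + y * y)
    _ = (x * x + y * y) * (x + i • y) + (⁅x + i • y, x⁆ * x + x * ⁅x + i • y, x⁆)
          + (⁅x + i • y, y⁆ * y + y * ⁅x + i • y, y⁆) := by
      simp only [Ring.lie_def, mul_add, add_mul, mul_sub, sub_mul, mul_assoc]
      abel
    _ = (x * x + y * y) * (x + i • y) - (2 * i) • (z * x + x * z) + (2 : R) • (z * y + y * z) := by
      simp only [h.lie_ladder_x, h.lie_ladder_y, smul_mul_assoc, mul_smul_comm]
      module
    _ = (x * x + y * y) * (x + i • y) - (2 * i) • (z * (x + i • y) + (x + i • y) * z) := by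
      nth_rewrite 2 [two_eq]
      simp only [mul_add, add_mul, smul_mul_assoc, mul_smul_comm]
      module
    _ = (x * x + y * y) * (x + i • y)
          - (2 * i) • ((2 : R) • (z * (x + i • y)) + (2 * i) • (x + i • y)) := by
      rw [← h.lie_ladder_z hi, Ring.lie_def]
      module
    _ = _ := by
      rw [smul_add, smul_smul (2 * i) (2 * i), sq_two_mul]
      module

end IsSU2Triple

end SU2Triple

section LieDerivative

variable {E : Type*} [NormedAddCommGroup E] [NormedSpace ℝ E] {U : Opens E}
  (F 𝔸 : Type*) [NormedAddCommGroup F] [NormedSpace ℝ F]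
  [Ring 𝔸] [Module 𝔸 F] [SMulCommClass ℝ 𝔸 F] [ContinuousConstSMul 𝔸 F]

/-- The `𝔸`-module of functions `E → F` that are smooth on the open set `U`. Elements are total
functions, with arbitrary values outside `U`. For `F = E` these are the smooth vector fields
on `U`. -/
def smoothFunctions (U : Opens E) : Submodule 𝔸 (E → F) where
  carrier := {f | ContDiffOn ℝ ∞ f U}
  add_mem' hf hg := hf.add hg
  zero_mem' := contDiffOn_const
  smul_mem' c _ hf := hf.const_smul c

variable {F 𝔸} in
theorem smoothFunctions.differentiableAt (f : smoothFunctions F 𝔸 U) {x : E} (hx : x ∈ U) :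
    DifferentiableAt ℝ f.1 x :=
  (f.2.differentiableOn (by simp)).differentiableAt (U.isOpen.mem_nhds hx)

/-- Differentiation of smooth functions on `U` along the vector field `V`, as a linear operator.
The value is set to `0` outside `U`, so that identities between such operators only have to be
checked on `U`. -/
noncomputable def lieDerivative (V : smoothFunctions E ℝ U) :
    Module.End 𝔸 (smoothFunctions F 𝔸 U) where
  toFun f := ⟨(U : Set E).indicator fun x => fderiv ℝ f.1 x (V.1 x),
    ((f.2.fderiv_of_isOpen U.isOpen (by simp)).clm_apply V.2).congr fun _ hx =>
      indicator_of_mem hx _⟩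
  map_add' f g := by
    ext x
    by_cases hx : x ∈ U
    · simp [hx, fderiv_add (smoothFunctions.differentiableAt f hx)
        (smoothFunctions.differentiableAt g hx)]
    · simp [hx]
  map_smul' c f := by
    ext x
    by_cases hx : x ∈ U
    · simp [hx, fderiv_const_smul (smoothFunctions.differentiableAt f hx) c]
    · simp [hx]

variable {F 𝔸}

theorem lieDerivative_apply_of_mem (V : smoothFunctions E ℝ U) (f : smoothFunctions F 𝔸 U)
    {x : E} (hx : x ∈ U) : (lieDerivative F 𝔸 V f).1 x = fderiv ℝ f.1 x (V.1 x) :=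
  indicator_of_mem (s := (U : Set E)) hx fun y => fderiv ℝ f.1 y (V.1 y)

theorem lieDerivative_apply_of_notMem (V : smoothFunctions E ℝ U) (f : smoothFunctions F 𝔸 U)
    {x : E} (hx : x ∉ U) : (lieDerivative F 𝔸 V f).1 x = 0 :=
  indicator_of_notMem (s := (U : Set E)) hx fun y => fderiv ℝ f.1 y (V.1 y)

theorem lieDerivative_lieDerivative_apply_of_mem (V W : smoothFunctions E ℝ U)
    (f : smoothFunctions F 𝔸 U) {x : E} (hx : x ∈ U) :
    (lieDerivative F 𝔸 V (lieDerivative F 𝔸 W f)).1 x =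
      fderiv ℝ (fun y => fderiv ℝ f.1 y (W.1 y)) x (V.1 x) := by
  have h : (lieDerivative F 𝔸 W f).1 =ᶠ[nhds x] fun y => fderiv ℝ f.1 y (W.1 y) :=
    Filter.eventuallyEq_of_mem (U.isOpen.mem_nhds hx) fun _ => lieDerivative_apply_of_mem W f
  rw [lieDerivative_apply_of_mem _ _ hx, h.fderiv_eq]

theorem lieDerivative_nsmul (n : ℕ) (V : smoothFunctions E ℝ U) :
    lieDerivative F 𝔸 (n • V) = n • lieDerivative F 𝔸 V := by
  ext f x
  by_cases hx : x ∈ U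
  · simp [lieDerivative_apply_of_mem, hx]
  · simp [lieDerivative_apply_of_notMem, hx]

theorem lie_lieDerivative {V W T : smoothFunctions E ℝ U}
    (hT : EqOn (lieBracket ℝ V.1 W.1) T.1 U) :
    ⁅lieDerivative F 𝔸 V, lieDerivative F 𝔸 W⁆ = lieDerivative F 𝔸 T := by
  ext f x
  by_cases hx : x ∈ U
  · have hf : ContDiffAt ℝ 2 f.1 x :=
      (f.2.contDiffAt (U.isOpen.mem_nhds hx)).of_le (WithTop.coe_le_coe.2 le_top)
    have h := fderiv_apply_lieBracket hf (by simp)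
      (smoothFunctions.differentiableAt W hx) (smoothFunctions.differentiableAt V hx)
    change (lieDerivative F 𝔸 V (lieDerivative F 𝔸 W f)).1 x -
      (lieDerivative F 𝔸 W (lieDerivative F 𝔸 V f)).1 x = _
    rw [lieDerivative_lieDerivative_apply_of_mem V W f hx,
      lieDerivative_lieDerivative_apply_of_mem W V f hx, lieDerivative_apply_of_mem T f hx,
      ← hT hx, h]
  · simp [Ring.lie_def, lieDerivative_apply_of_notMem, hx]

end LieDerivative

section CylindricFields

theorem cos_ne_zero_of_mem_Ioo {r : ℝ} (hr : r ∈ Ioo 0 (π / 2)) : cos r ≠ 0 :=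
  (cos_pos_of_mem_Ioo ⟨by linarith [hr.1, pi_pos], hr.2⟩).ne'

theorem tan_ne_zero_of_mem_Ioo {r : ℝ} (hr : r ∈ Ioo 0 (π / 2)) : tan r ≠ 0 :=
  (tan_pos_of_pos_of_lt_pi_div_two hr.1 hr.2).ne'

theorem hasDerivAt_tan_one_add_tan_sq {r : ℝ} (hcos : cos r ≠ 0) :
    HasDerivAt tan (1 + tan r ^ 2) r :=
  (hasDerivAt_tan hcos).congr_deriv (by rw [one_div, ← inv_one_add_tan_sq hcos, inv_inv])

theorem hasDerivAt_tan_add_one_div_tan {r : ℝ} (hcos : cos r ≠ 0) (htan : tan r ≠ 0) :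
    HasDerivAt (fun r => tan r + 1 / tan r) (tan r ^ 2 - 1 / tan r ^ 2) r := by
  have h := hasDerivAt_tan_one_add_tan_sq hcos
  refine (h.add ((hasDerivAt_const r 1).div h htan)).congr_deriv ?_
  field_simp
  ring

/-- The range `(0, π/2) × ℝ × ℝ` of the cylindric coordinates `(r, θ, z)`. -/
def cylindricDomain : Opens (ℝ × ℝ × ℝ) :=
  ⟨Ioo 0 (π / 2) ×ˢ univ ×ˢ univ, isOpen_Ioo.prod (isOpen_univ.prod isOpen_univ)⟩

theorem mem_cylindricDomain {p : ℝ × ℝ × ℝ} : p ∈ cylindricDomain ↔ p.1 ∈ Ioo 0 (π / 2) := by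
  change p ∈ Ioo 0 (π / 2) ×ˢ univ ×ˢ univ ↔ _
  simp only [mem_prod, mem_univ, and_true]

/-- The left-invariant vector field `cos α • X + sin α • Y`, given by its components along
`∂/∂r`, `∂/∂θ`, `∂/∂z`. It is obtained from `X` by shifting the phase `2z - θ` by `α`. -/
noncomputable def horizontalField (α : ℝ) : smoothFunctions (ℝ × ℝ × ℝ) ℝ cylindricDomain :=
  ⟨fun p => (cos (2 * p.2.2 - p.2.1 + α),
      sin (2 * p.2.2 - p.2.1 + α) * (tan p.1 + 1 / tan p.1),
      sin (2 * p.2.2 - p.2.1 + α) * tan p.1), by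
    intro p hp
    have hr := mem_cylindricDomain.1 hp
    have htan : ContDiffAt ℝ ∞ (fun q : ℝ × ℝ × ℝ => tan q.1) p :=
      (contDiffAt_tan.2 (cos_ne_zero_of_mem_Ioo hr)).comp p contDiffAt_fst
    have hcot : ContDiffAt ℝ ∞ (fun q : ℝ × ℝ × ℝ => 1 / tan q.1) p :=
      contDiffAt_const.div htan (tan_ne_zero_of_mem_Ioo hr)
    exact ContDiffAt.contDiffWithinAt (by fun_prop)⟩

/-- The vector field `X`. -/
noncomputable abbrev fieldX : smoothFunctions (ℝ × ℝ × ℝ) ℝ cylindricDomain := horizontalField 0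

/-- The vector field `Y`, a quarter turn away from `X`. -/
noncomputable abbrev fieldY : smoothFunctions (ℝ × ℝ × ℝ) ℝ cylindricDomain :=
  horizontalField (π / 2)

/-- The vector field `Z = ∂/∂z`. -/
def fieldZ : smoothFunctions (ℝ × ℝ × ℝ) ℝ cylindricDomain :=
  ⟨fun _ => (0, 0, 1), contDiffOn_const⟩

theorem horizontalField_add_pi (α : ℝ) : horizontalField (α + π) = -horizontalField α := by
  ext p <;> simp [horizontalField, ← add_assoc, cos_add_pi, sin_add_pi]

theorem fderiv_horizontalField (α : ℝ) {r : ℝ} (hr : r ∈ Ioo 0 (π / 2)) (θ z : ℝ)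
    (v : ℝ × ℝ × ℝ) :
    fderiv ℝ (horizontalField α).1 (r, θ, z) v =
      (-sin (2 * z - θ + α) * (2 * v.2.2 - v.2.1),
        cos (2 * z - θ + α) * (2 * v.2.2 - v.2.1) * (tan r + 1 / tan r) +
          sin (2 * z - θ + α) * ((tan r ^ 2 - 1 / tan r ^ 2) * v.1),
        cos (2 * z - θ + α) * (2 * v.2.2 - v.2.1) * tan r +
          sin (2 * z - θ + α) * ((1 + tan r ^ 2) * v.1)) := by
  have hcos := cos_ne_zero_of_mem_Ioo hr
  have hfst : HasFDerivAt (fun q : ℝ × ℝ × ℝ => q.1) (.fst ℝ ℝ (ℝ × ℝ)) (r, θ, z) :=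
    hasFDerivAt_fst
  have hsnd : HasFDerivAt (fun q : ℝ × ℝ × ℝ => q.2) (.snd ℝ ℝ (ℝ × ℝ)) (r, θ, z) :=
    hasFDerivAt_snd
  have hphase := ((hsnd.snd.const_mul 2).sub hsnd.fst).add_const α
  have htan := (hasDerivAt_tan_one_add_tan_sq hcos).comp_hasFDerivAt (r, θ, z) hfst
  have htan_add_cot := (hasDerivAt_tan_add_one_div_tan hcos
    (tan_ne_zero_of_mem_Ioo hr)).comp_hasFDerivAt (r, θ, z) hfst
  have h : HasFDerivAt (horizontalField α).1 _ (r, θ, z) :=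
    hphase.cos.prodMk ((hphase.sin.mul htan_add_cot).prodMk (hphase.sin.mul htan))
  rw [h.fderiv]
  ext <;> simp <;> ring

theorem lieBracket_horizontalField (α β : ℝ) {r : ℝ} (hr : r ∈ Ioo 0 (π / 2)) (θ z : ℝ) :
    lieBracket ℝ (horizontalField α).1 (horizontalField β).1 (r, θ, z) =
      (0, 0, 2 * sin (β - α)) := by
  have htan := tan_ne_zero_of_mem_Ioo hr
  have hsin : sin (β - α) = sin (2 * z - θ + β) * cos (2 * z - θ + α) -
      cos (2 * z - θ + β) * sin (2 * z - θ + α) := by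
    rw [← sin_sub, add_sub_add_left_eq_sub]
  rw [lieBracket, fderiv_horizontalField α hr, fderiv_horizontalField β hr, hsin]
  simp only [horizontalField, Prod.mk_sub_mk, Prod.mk.injEq]
  refine ⟨?_, ?_, ?_⟩ <;> field_simp <;> ring

theorem lieBracket_fieldZ_horizontalField (α : ℝ) {r : ℝ} (hr : r ∈ Ioo 0 (π / 2)) (θ z : ℝ) :
    lieBracket ℝ fieldZ.1 (horizontalField α).1 (r, θ, z) =
      (2 • horizontalField (α + π / 2)).1 (r, θ, z) := by
  have hconst : fderiv ℝ fieldZ.1 (r, θ, z) = 0 := fderiv_const_apply _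
  rw [lieBracket, fderiv_horizontalField α hr, hconst]
  ext <;> simp [horizontalField, fieldZ, ← add_assoc, cos_add_pi_div_two, sin_add_pi_div_two] <;>
    ring

theorem lieBracket_fieldX_fieldY :
    EqOn (lieBracket ℝ fieldX.1 fieldY.1) (2 • fieldZ).1 cylindricDomain := by
  rintro ⟨r, θ, z⟩ hp
  rw [lieBracket_horizontalField 0 (π / 2) (mem_cylindricDomain.1 hp)]
  simp [fieldZ]

theorem lieBracket_fieldZ_fieldX :
    EqOn (lieBracket ℝ fieldZ.1 fieldX.1) (2 • fieldY).1 cylindricDomain := by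
  rintro ⟨r, θ, z⟩ hp
  rw [lieBracket_fieldZ_horizontalField 0 (mem_cylindricDomain.1 hp), zero_add]

theorem lieBracket_fieldY_fieldZ :
    EqOn (lieBracket ℝ fieldY.1 fieldZ.1) (2 • fieldX).1 cylindricDomain := by
  rintro ⟨r, θ, z⟩ hp
  have half_turn : horizontalField (π / 2 + π / 2) = -fieldX := by
    rw [add_halves, ← horizontalField_add_pi, zero_add]
  rw [lieBracket_swap, lieBracket_fieldZ_horizontalField (π / 2) (mem_cylindricDomain.1 hp),
    half_turn]
  simp

theorem isSU2Triple_lieDerivative (F 𝔸 : Type*) [NormedAddCommGroup F] [NormedSpace ℝ F]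
    [Ring 𝔸] [Module 𝔸 F] [SMulCommClass ℝ 𝔸 F] [ContinuousConstSMul 𝔸 F] :
    IsSU2Triple (lieDerivative F 𝔸 fieldX) (lieDerivative F 𝔸 fieldY)
      (lieDerivative F 𝔸 fieldZ) where
  lie_x_y := (lie_lieDerivative lieBracket_fieldX_fieldY).trans (lieDerivative_nsmul 2 fieldZ)
  lie_y_z := (lie_lieDerivative lieBracket_fieldY_fieldZ).trans (lieDerivative_nsmul 2 fieldX)
  lie_z_x := (lie_lieDerivative lieBracket_fieldZ_fieldX).trans (lieDerivative_nsmul 2 fieldY)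

end CylindricFields

/-- The curried function `g` of `(r, θ, z)` agrees with `G` on the coordinate range. This
translates between `Xop`, `Yop`, ..., which act on curried functions, and `lieDerivative`. -/
def Represents (G : smoothFunctions ℂ ℂ cylindricDomain) (g : ℝ → ℝ → ℝ → ℂ) : Prop :=
  ∀ ⦃r θ z : ℝ⦄, (r, θ, z) ∈ cylindricDomain → g r θ z = G.1 (r, θ, z)

namespace Represents

variable {G : smoothFunctions ℂ ℂ cylindricDomain} {g : ℝ → ℝ → ℝ → ℂ}

theorem fderiv_apply (h : Represents G g) {r θ z : ℝ} (hp : (r, θ, z) ∈ cylindricDomain)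
    (v : ℝ × ℝ × ℝ) :
    fderiv ℝ G.1 (r, θ, z) v =
      v.1 * Dr g r θ z + v.2.1 * Dtheta g r θ z + v.2.2 * Dz g r θ z := by
  have hg : HasFDerivAt (fun p : ℝ × ℝ × ℝ => g p.1 p.2.1 p.2.2) (fderiv ℝ G.1 (r, θ, z))
      (r, θ, z) :=
    (smoothFunctions.differentiableAt G hp).hasFDerivAt.congr_of_eventuallyEq
      (Filter.eventuallyEq_of_mem (cylindricDomain.isOpen.mem_nhds hp) fun _ hq => h hq)
  have hr : Dr g r θ z = fderiv ℝ G.1 (r, θ, z) (1, 0, 0) :=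
    (hg.comp_hasDerivAt (f := fun r' => (r', θ, z)) r
      ((hasDerivAt_id r).prodMk (hasDerivAt_const r (θ, z)))).deriv
  have hθ : Dtheta g r θ z = fderiv ℝ G.1 (r, θ, z) (0, 1, 0) :=
    (hg.comp_hasDerivAt (f := fun θ' => (r, θ', z)) θ
      ((hasDerivAt_const θ r).prodMk ((hasDerivAt_id θ).prodMk (hasDerivAt_const θ z)))).deriv
  have hz : Dz g r θ z = fderiv ℝ G.1 (r, θ, z) (0, 0, 1) :=
    (hg.comp_hasDerivAt (f := fun z' => (r, θ, z')) z
      ((hasDerivAt_const z r).prodMk ((hasDerivAt_const z θ).prodMk (hasDerivAt_id z)))).deriv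
  have hv : v = v.1 • (1, 0, 0) + v.2.1 • (0, 1, 0) + v.2.2 • (0, 0, 1) := by simp
  rw [hr, hθ, hz]
  conv_lhs => rw [hv]
  simp only [map_add, map_smul, Complex.real_smul]

theorem xop (h : Represents G g) : Represents (lieDerivative ℂ ℂ fieldX G) (Xop g) := by
  intro r θ z hp
  rw [lieDerivative_apply_of_mem _ _ hp, h.fderiv_apply hp]
  simp only [Xop, horizontalField, add_zero, Complex.ofReal_mul]
  ring

theorem yop (h : Represents G g) : Represents (lieDerivative ℂ ℂ fieldY G) (Yop g) := by
  intro r θ z hp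
  rw [lieDerivative_apply_of_mem _ _ hp, h.fderiv_apply hp]
  simp only [Yop, horizontalField, cos_add_pi_div_two, sin_add_pi_div_two, Complex.ofReal_neg,
    Complex.ofReal_mul]
  ring

theorem zop (h : Represents G g) : Represents (lieDerivative ℂ ℂ fieldZ G) (Zop g) := by
  intro r θ z hp
  rw [lieDerivative_apply_of_mem _ _ hp, h.fderiv_apply hp]
  simp [Zop, fieldZ]

theorem lop (h : Represents G g) :
    Represents ((lieDerivative ℂ ℂ fieldX * lieDerivative ℂ ℂ fieldX +
      lieDerivative ℂ ℂ fieldY * lieDerivative ℂ ℂ fieldY) G) (Lop g) :=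
  fun _ _ _ hp => congrArg₂ (· + ·) (h.xop.xop hp) (h.yop.yop hp)

theorem wop (h : Represents G g) :
    Represents ((lieDerivative ℂ ℂ fieldX + Complex.I • lieDerivative ℂ ℂ fieldY) G) (Wop g) :=
  fun _ _ _ hp => congrArg₂ (· + Complex.I * ·) (h.xop hp) (h.yop hp)

end Represents

/-- For every smooth function `f` of `(r, θ, z) ∈ (0, π/2) × ℝ × ℝ`,
one has `(X + iY)(L f) = (L - 4iZ + 4)((X + iY) f)`. -/
theorem stmt_1 (f : ℝ → ℝ → ℝ → ℂ)
    (hf : ContDiffOn ℝ (⊤ : ℕ∞) (fun p : ℝ × ℝ × ℝ => f p.1 p.2.1 p.2.2)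
      (Set.Ioo 0 (Real.pi / 2) ×ˢ (Set.univ : Set ℝ) ×ˢ (Set.univ : Set ℝ)))
    (r : ℝ) (hr : r ∈ Set.Ioo 0 (Real.pi / 2)) (θ z : ℝ) :
    Xop (Lop f) r θ z + Complex.I * Yop (Lop f) r θ z =
      Lop (Wop f) r θ z - 4 * Complex.I * Zop (Wop f) r θ z + 4 * Wop f r θ z := by
  let F : smoothFunctions ℂ ℂ cylindricDomain := ⟨fun p => f p.1 p.2.1 p.2.2, hf⟩
  have hF : Represents F f := fun _ _ _ _ => rfl
  have hp : (r, θ, z) ∈ cylindricDomain := mem_cylindricDomain.2 hr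
  have h := (isSU2Triple_lieDerivative ℂ ℂ).ladder_mul_sum_mul_self Complex.I_mul_I
  change Wop (Lop f) r θ z = _
  rw [hF.lop.wop hp, hF.wop.lop hp, hF.wop.zop hp, hF.wop hp]
  exact congrFun (congrArg Subtype.val (LinearMap.congr_fun h F)) (r, θ, z)
end

section
/- For t > 0, the double series defining p_t(r, z) converges, and the function (t, r, z) ↦ p_t(r, z) satisfies the heat equation ∂p_t/∂t = ∂²p_t/∂r² + 2·cot(2r)·∂p_t/∂r + tan²(r)·∂²p_t/∂z² for all t > 0, r ∈ (0, π/2), z ∈ ℝ. -/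
open Real

/-- The general term of the double series defining the subelliptic heat kernel on `SU(2)`. -/
noncomputable def heatTerm (t r z : ℝ) (n : ℤ) (k : ℕ) : ℂ :=
  (((2 * (k : ℝ) + (n.natAbs : ℝ) + 1) *
      Real.exp (-(4 * (k : ℝ) * ((k : ℝ) + (n.natAbs : ℝ) + 1) + 2 * (n.natAbs : ℝ)) * t) *
      (Real.cos r) ^ n.natAbs * jacobiP k n.natAbs (Real.cos (2 * r)) : ℝ) : ℂ) *
    Complex.exp ((n : ℂ) * (z : ℂ) * Complex.I)

/-- The subelliptic heat kernel `p_t(r,z)` on `SU(2)` in cylindric coordinates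
(the double series is real-valued). -/
noncomputable def heatP (t r z : ℝ) : ℝ := (∑' n : ℤ, ∑' k : ℕ, heatTerm t r z n k).re

/-!
Every mode of the series separates variables. Applying the Leibniz rule in the Rodrigues formula,
its radial factor is the homogeneous trigonometric polynomial
`cos^m r * P_k^(0,m)(cos 2r)
  = ∑_{i+j=k} (-1)^j * C(k,i) * C(m+k,j) * cos^(m+2i) r * sin^(2j) r`, where `m = |n|`.
After multiplication by `(sin r * cos r)^2` the radial eigenvalue equation becomes a polynomial
identity in `cos r` and `sin r` which telescopes. Homogeneity of degree `m + 2k < N := 2k + m + 1`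
bounds the `j`-th derivative of the radial factor by `N^(k+j)`, uniformly in `r`. This is beaten by
`e^{-λt}`, as the eigenvalue `λ` is at least `(2k + 1) N - 1`; hence the series may be
differentiated termwise, and the heat equation follows from that of the modes.
-/

namespace SU2HeatKernel

open Finset.HasAntidiagonal (antidiagonal mem_antidiagonal)

/-- The trigonometric monomial `cos^a r * sin^b r`. -/
noncomputable def cosPowSinPow (a b : ℕ) (r : ℝ) : ℝ := cos r ^ a * sin r ^ b

lemma contDiff_cosPowSinPow (a b : ℕ) {n : WithTop ℕ∞} : ContDiff ℝ n (cosPowSinPow a b) :=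
  (contDiff_cos.pow a).mul (contDiff_sin.pow b)

lemma deriv_cosPowSinPow (a b : ℕ) :
    deriv (cosPowSinPow a b) = fun r =>
      b * cosPowSinPow (a + 1) (b - 1) r - a * cosPowSinPow (a - 1) (b + 1) r := by
  funext r
  refine (((hasDerivAt_cos r).fun_pow a).mul ((hasDerivAt_sin r).fun_pow b)).deriv.trans ?_
  simp only [cosPowSinPow]
  ring

lemma abs_cosPowSinPow_le_one (a b : ℕ) (r : ℝ) : |cosPowSinPow a b r| ≤ 1 := by
  rw [cosPowSinPow, abs_mul, abs_pow, abs_pow]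
  exact mul_le_one₀ (pow_le_one₀ (abs_nonneg _) (abs_cos_le_one r)) (by positivity)
    (pow_le_one₀ (abs_nonneg _) (abs_sin_le_one r))

/- Differentiation preserves the degree `a + b`, and the coefficients it produces add up to at most
`a + b` in absolute value. -/
lemma abs_iteratedDeriv_cosPowSinPow_le (j a b : ℕ) (r : ℝ) :
    |iteratedDeriv j (cosPowSinPow a b) r| ≤ ((a + b : ℕ) : ℝ) ^ j := by
  induction j generalizing a b with
  | zero => simpa using abs_cosPowSinPow_le_one a b r
  | succ j ih =>
    have hsin : b * |iteratedDeriv j (cosPowSinPow (a + 1) (b - 1)) r|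
        ≤ b * ((a + b : ℕ) : ℝ) ^ j := by
      rcases Nat.eq_zero_or_pos b with rfl | hb
      · simp
      · have := ih (a + 1) (b - 1)
        rw [show a + 1 + (b - 1) = a + b by lia] at this
        gcongr
    have hcos : a * |iteratedDeriv j (cosPowSinPow (a - 1) (b + 1)) r|
        ≤ a * ((a + b : ℕ) : ℝ) ^ j := by
      rcases Nat.eq_zero_or_pos a with rfl | ha
      · simp
      · have := ih (a - 1) (b + 1)
        rw [show a - 1 + (b + 1) = a + b by lia] at this
        gcongr
    rw [iteratedDeriv_succ', deriv_cosPowSinPow, iteratedDeriv_fun_sub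
      (contDiffAt_const.mul (contDiff_cosPowSinPow _ _).contDiffAt)
      (contDiffAt_const.mul (contDiff_cosPowSinPow _ _).contDiffAt),
      iteratedDeriv_const_mul_field, iteratedDeriv_const_mul_field]
    calc _ ≤ b * |iteratedDeriv j (cosPowSinPow (a + 1) (b - 1)) r|
          + a * |iteratedDeriv j (cosPowSinPow (a - 1) (b + 1)) r| := by
          refine (abs_sub _ _).trans_eq ?_
          rw [abs_mul, abs_mul, Nat.abs_cast, Nat.abs_cast]
      _ ≤ b * ((a + b : ℕ) : ℝ) ^ j + a * ((a + b : ℕ) : ℝ) ^ j := add_le_add hsin hcos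
      _ = ((a + b : ℕ) : ℝ) ^ (j + 1) := by push_cast; ring

lemma sin_mul_cos_mul_deriv_cosPowSinPow (a b : ℕ) (r : ℝ) :
    sin r * cos r * deriv (cosPowSinPow a b) r
      = (b * cos r ^ 2 - a * sin r ^ 2) * cosPowSinPow a b r := by
  have cast_mul_pow (n : ℕ) (x : ℝ) : n * x ^ (n - 1) * x = n * x ^ n := by
    cases n <;> simp [pow_succ, mul_assoc]
  rw [deriv_cosPowSinPow]
  simp only [cosPowSinPow]
  linear_combination cos r ^ (a + 2) * cast_mul_pow b (sin r)
    - sin r ^ (b + 2) * cast_mul_pow a (cos r)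

/-- The radial part `∂²/∂r² + 2 cot(2r) ∂/∂r` of the sublaplacian of `SU(2)` in cylindric
coordinates; where `sin (2r) = 0` the first order term is dropped, since `x / 0 = 0`. -/
noncomputable def radialLaplacian (f : ℝ → ℝ) (r : ℝ) : ℝ :=
  iteratedDeriv 2 f r + 2 * (cos (2 * r) / sin (2 * r)) * deriv f r

lemma radialLaplacian_sum {ι : Type*} (s : Finset ι) (c : ι → ℝ) {f : ι → ℝ → ℝ} {r : ℝ}
    (hf : ∀ i ∈ s, ContDiffAt ℝ 2 (f i) r) :
    radialLaplacian (fun x => ∑ i ∈ s, c i * f i x) r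
      = ∑ i ∈ s, c i * radialLaplacian (f i) r := by
  have hcf (i) (hi : i ∈ s) : ContDiffAt ℝ 2 (fun x => c i * f i x) r :=
    contDiffAt_const.mul (hf i hi)
  simp only [radialLaplacian]
  rw [iteratedDeriv_fun_sum hcf,
    deriv_fun_sum fun i hi => (hcf i hi).differentiableAt two_ne_zero, Finset.mul_sum,
    ← Finset.sum_add_distrib]
  refine Finset.sum_congr rfl fun i _ => ?_
  rw [iteratedDeriv_const_mul_field, deriv_const_mul_field]
  ring

lemma sin_mul_cos_ne_zero {r : ℝ} (hr : sin (2 * r) ≠ 0) : sin r * cos r ≠ 0 := by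
  rw [sin_two_mul, mul_assoc] at hr
  exact right_ne_zero_of_mul hr

/- Differentiate `sin r * cos r * f' = (b * cos² r - a * sin² r) * f`, where `f = cos^a * sin^b`,
and multiply by `sin r * cos r`. -/
lemma radialLaplacian_cosPowSinPow (a b : ℕ) {r : ℝ} (hr : sin (2 * r) ≠ 0) :
    (sin r * cos r) ^ 2 * radialLaplacian (cosPowSinPow a b) r
      = ((b * cos r ^ 2 - a * sin r ^ 2) ^ 2 - 2 * (a + b) * (sin r * cos r) ^ 2)
        * cosPowSinPow a b r := by
  set f := cosPowSinPow a b
  have hf : HasDerivAt f (deriv f r) r :=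
    ((contDiff_cosPowSinPow a b (n := 1)).differentiable one_ne_zero r).hasDerivAt
  have hf' : HasDerivAt (deriv f) (iteratedDeriv 2 f r) r := by
    rw [iteratedDeriv_succ, iteratedDeriv_one]
    have := (contDiff_cosPowSinPow a b (n := 2)).differentiable_iteratedDeriv' 1 r
    simpa only [iteratedDeriv_one] using this.hasDerivAt
  have hlhs := ((hasDerivAt_sin r).mul (hasDerivAt_cos r)).mul hf'
  have hrhs := ((((hasDerivAt_cos r).pow 2).const_mul (b : ℝ)).sub
    (((hasDerivAt_sin r).pow 2).const_mul (a : ℝ))).mul hf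
  have hderiv := hlhs.unique <| hrhs.congr_of_eventuallyEq <|
    .of_forall (sin_mul_cos_mul_deriv_cosPowSinPow a b)
  have hcot : sin r * cos r * (2 * (cos (2 * r) / sin (2 * r))) = cos r ^ 2 - sin r ^ 2 := by
    rw [show sin r * cos r = sin (2 * r) / 2 by rw [sin_two_mul]; ring, ← cos_two_mul']
    field_simp
  simp only [radialLaplacian]
  simp only [Pi.mul_apply, Pi.sub_apply, Pi.pow_apply, Nat.cast_ofNat, Nat.add_one_sub_one,
    pow_one] at hderiv
  linear_combination sin r * cos r * hderiv + sin r * cos r * deriv f r * hcot +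
    (b * cos r ^ 2 - a * sin r ^ 2) * sin_mul_cos_mul_deriv_cosPowSinPow a b r

/-- The coefficient of `cos^(m+2i) r * sin^(2j) r` in `cos^m r * P_(i+j)^(0,m)(cos 2r)`. -/
noncomputable def radialCoeff (m i j : ℕ) : ℝ :=
  (-1) ^ j * ((i + j).choose i * (m + i + j).choose j)

lemma radialCoeff_succ (m i j : ℕ) :
    radialCoeff m i (j + 1) * (j + 1) ^ 2
      = -(radialCoeff m (i + 1) j * ((i + 1) * (m + i + 1))) := by
  have hleft : ((i + j + 1).choose (i + 1) : ℝ) * (i + 1) = (i + j + 1).choose i * (j + 1) := by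
    have := Nat.choose_succ_right_eq (i + j + 1) i
    rw [show i + j + 1 - i = j + 1 by lia] at this
    exact_mod_cast this
  have hright : ((m + i + j + 1).choose (j + 1) : ℝ) * (j + 1)
      = (m + i + j + 1).choose j * (m + i + 1) := by
    have := Nat.choose_succ_right_eq (m + i + j + 1) j
    rw [show m + i + j + 1 - j = m + i + 1 by lia] at this
    exact_mod_cast this
  simp only [radialCoeff, ← add_assoc, add_right_comm _ 1 j]
  linear_combination (-1) ^ (j + 1) * ((i + j + 1).choose i * (j + 1)) * hright
    - (-1) ^ (j + 1) * ((m + i + j + 1).choose j * (m + i + 1)) * hleft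

lemma sum_abs_radialCoeff (m k : ℕ) :
    ∑ ij ∈ antidiagonal k, |radialCoeff m ij.1 ij.2| = ((m + 2 * k).choose k : ℝ) := by
  rw [show m + 2 * k = k + (m + k) by lia, Nat.add_choose_eq]
  push_cast
  refine Finset.sum_congr rfl fun ij hij => ?_
  obtain rfl := mem_antidiagonal.mp hij
  simp [radialCoeff, abs_mul, add_assoc]

/-- The radial factor `cos^m r * P_k^(0,m)(cos 2r)` of a mode, see `cos_pow_mul_jacobiP`. -/
noncomputable def radialPart (m k : ℕ) (r : ℝ) : ℝ :=
  ∑ ij ∈ antidiagonal k, radialCoeff m ij.1 ij.2 * cosPowSinPow (m + 2 * ij.1) (2 * ij.2) r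

lemma contDiff_radialPart (m k : ℕ) {n : WithTop ℕ∞} : ContDiff ℝ n (radialPart m k) :=
  .sum fun _ _ => contDiff_const.mul (contDiff_cosPowSinPow _ _)

/-- The eigenvalue of minus the sublaplacian on the modes with indices `k` and `n`, `|n| = m`. -/
noncomputable def eigenvalue (m k : ℕ) : ℝ := 4 * k * (k + m + 1) + 2 * m

/- The two parts of the sum cancel after shifting the index in each of them. -/
lemma sum_radialCoeff_mul_eq_zero (m k : ℕ) (c s : ℝ) :
    ∑ ij ∈ antidiagonal k, radialCoeff m ij.1 ij.2 *
      ((ij.2 ^ 2 * c ^ 2 + ij.1 * (m + ij.1) * s ^ 2) *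
        (c ^ (m + 2 * ij.1) * s ^ (2 * ij.2))) = 0 := by
  simp only [add_mul (_ * c ^ 2), mul_add (radialCoeff _ _ _), Finset.sum_add_distrib]
  cases k with
  | zero => simp
  | succ k =>
    rw [Finset.Nat.sum_antidiagonal_succ', Finset.Nat.sum_antidiagonal_succ (n := k),
      add_add_add_comm, ← Finset.sum_add_distrib, Finset.sum_eq_zero]
    · simp
    · rintro ⟨i, j⟩ -
      push_cast
      linear_combination c ^ (m + 2 * i + 2) * s ^ (2 * j + 2) * radialCoeff_succ m i j

lemma radialLaplacian_cosPowSinPow_add_eigenvalue (m i j : ℕ) {r : ℝ} (hr : sin (2 * r) ≠ 0) :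
    (sin r * cos r) ^ 2 * (radialLaplacian (cosPowSinPow (m + 2 * i) (2 * j)) r
        + (eigenvalue m (i + j) - tan r ^ 2 * m ^ 2) * cosPowSinPow (m + 2 * i) (2 * j) r)
      = 4 * ((j ^ 2 * cos r ^ 2 + i * (m + i) * sin r ^ 2)
        * cosPowSinPow (m + 2 * i) (2 * j) r) := by
  have hlap := radialLaplacian_cosPowSinPow (m + 2 * i) (2 * j) hr
  have htan : tan r * cos r = sin r := tan_mul_cos (right_ne_zero_of_mul (sin_mul_cos_ne_zero hr))
  rw [eigenvalue]
  push_cast at hlap ⊢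
  linear_combination hlap
    - (tan r * cos r + sin r) * m ^ 2 * sin r ^ 2 * cosPowSinPow (m + 2 * i) (2 * j) r * htan
    + (4 * j ^ 2 * cos r ^ 2 + 4 * i * (m + i) * sin r ^ 2)
      * cosPowSinPow (m + 2 * i) (2 * j) r * sin_sq_add_cos_sq r

lemma radialLaplacian_radialPart (m k : ℕ) {r : ℝ} (hr : sin (2 * r) ≠ 0) :
    radialLaplacian (radialPart m k) r - tan r ^ 2 * m ^ 2 * radialPart m k r
      = -eigenvalue m k * radialPart m k r := by
  have hsum : (sin r * cos r) ^ 2 * (radialLaplacian (radialPart m k) r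
      + (eigenvalue m k - tan r ^ 2 * m ^ 2) * radialPart m k r) = 0 := by
    calc _ = ∑ ij ∈ antidiagonal k, radialCoeff m ij.1 ij.2 * ((sin r * cos r) ^ 2 *
          (radialLaplacian (cosPowSinPow (m + 2 * ij.1) (2 * ij.2)) r
            + (eigenvalue m k - tan r ^ 2 * m ^ 2)
              * cosPowSinPow (m + 2 * ij.1) (2 * ij.2) r)) := by
          unfold radialPart
          rw [radialLaplacian_sum _ _ fun _ _ => (contDiff_cosPowSinPow _ _).contDiffAt,
            Finset.mul_sum, ← Finset.sum_add_distrib, Finset.mul_sum]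
          exact Finset.sum_congr rfl fun _ _ => by ring
      _ = 4 * ∑ ij ∈ antidiagonal k, radialCoeff m ij.1 ij.2 *
          ((ij.2 ^ 2 * cos r ^ 2 + ij.1 * (m + ij.1) * sin r ^ 2)
            * (cos r ^ (m + 2 * ij.1) * sin r ^ (2 * ij.2))) := by
          rw [Finset.mul_sum]
          refine Finset.sum_congr rfl fun ij hij => ?_
          rw [← mem_antidiagonal.mp hij, radialLaplacian_cosPowSinPow_add_eigenvalue m _ _ hr,
            mul_left_comm]
          rfl
      _ = 0 := by rw [sum_radialCoeff_mul_eq_zero, mul_zero]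
  have hode := (mul_eq_zero.mp hsum).resolve_left
    (pow_ne_zero 2 (sin_mul_cos_ne_zero hr))
  linear_combination hode

lemma iteratedDeriv_one_add_pow (n j : ℕ) (x : ℝ) :
    iteratedDeriv j (fun y : ℝ => (1 + y) ^ n) x = n.descFactorial j * (1 + x) ^ (n - j) := by
  simpa using congrFun (iteratedDeriv_comp_const_add j (fun y : ℝ => y ^ n) 1) x

lemma iteratedDeriv_one_sub_pow (n i : ℕ) (x : ℝ) :
    iteratedDeriv i (fun y : ℝ => (1 - y) ^ n) x
      = (-1) ^ i * (n.descFactorial i * (1 - x) ^ (n - i)) := by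
  simpa using congrFun (iteratedDeriv_comp_const_sub i (fun y : ℝ => y ^ n) 1) x

lemma iteratedDeriv_one_add_pow_mul_one_sub_sq_pow (m k : ℕ) (x : ℝ) :
    iteratedDeriv k (fun y : ℝ => (1 + y) ^ m * (1 - y ^ 2) ^ k) x
      = (-1) ^ k * k.factorial * ∑ ij ∈ antidiagonal k,
        radialCoeff m ij.1 ij.2 * ((1 + x) ^ (m + ij.1) * (1 - x) ^ ij.2) := by
  have hfactor : (fun y : ℝ => (1 + y) ^ m * (1 - y ^ 2) ^ k)
      = fun y : ℝ => (1 + y) ^ (m + k) * (1 - y) ^ k := by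
    funext y
    rw [show 1 - y ^ 2 = (1 + y) * (1 - y) by ring, mul_pow, pow_add, mul_assoc]
  rw [hfactor, iteratedDeriv_fun_mul (by fun_prop) (by fun_prop), Finset.mul_sum,
    ← Finset.Nat.sum_antidiagonal_eq_sum_range_succ fun j i => k.choose j
      * iteratedDeriv j (fun y : ℝ => (1 + y) ^ (m + k)) x
      * iteratedDeriv i (fun y : ℝ => (1 - y) ^ k) x,
    ← Finset.Nat.sum_antidiagonal_swap]
  refine Finset.sum_congr rfl fun ⟨i, j⟩ hij => ?_
  obtain rfl : i + j = k := mem_antidiagonal.mp hij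
  have hleft : ((m + (i + j)).descFactorial j : ℝ) = j.factorial * (m + i + j).choose j := by
    rw [← add_assoc]
    exact_mod_cast Nat.descFactorial_eq_factorial_mul_choose _ _
  have hright : (j.factorial : ℝ) * (i + j).descFactorial i = (i + j).factorial := by
    have := Nat.factorial_mul_descFactorial (Nat.le_add_right i j)
    rw [Nat.add_sub_cancel_left] at this
    exact_mod_cast this
  have hsign : (-1 : ℝ) ^ (i + j) * (-1) ^ j = (-1) ^ i := by
    rw [pow_add, mul_assoc, ← mul_pow]
    simp
  simp only [Prod.swap_prod_mk, iteratedDeriv_one_add_pow, iteratedDeriv_one_sub_pow, hleft,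
    ← hsign, ← hright, radialCoeff, Nat.add_sub_cancel_left,
    (Nat.choose_symm_add : (i + j).choose i = (i + j).choose j),
    show m + (i + j) - j = m + i by lia]
  ring

lemma cos_pow_mul_jacobiP (m k : ℕ) (r : ℝ) :
    cos r ^ m * jacobiP k m (cos (2 * r)) = radialPart m k r := by
  rcases eq_or_ne (cos r ^ m) 0 with hzero | hne
  · obtain ⟨hcos, hm⟩ := pow_eq_zero_iff'.mp hzero
    simp [radialPart, cosPowSinPow, hcos, hm]
  · have hadd : 1 + cos (2 * r) = 2 * cos r ^ 2 := by rw [cos_two_mul]; ring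
    have hsub : 1 - cos (2 * r) = 2 * sin r ^ 2 := by rw [cos_two_mul, sin_sq]; ring
    have hfact : (k.factorial : ℝ) ≠ 0 := by positivity
    have hsign : (-1 : ℝ) ^ k * (-1) ^ k = 1 := by rw [← mul_pow]; simp
    rw [jacobiP, iteratedDeriv_one_add_pow_mul_one_sub_sq_pow, radialPart, hadd, hsub,
      ← mul_assoc, ← mul_assoc, Finset.mul_sum]
    refine Finset.sum_congr rfl fun ⟨i, j⟩ hij => ?_
    obtain rfl : i + j = k := mem_antidiagonal.mp hij
    simp only [cosPowSinPow, mul_pow, pow_add, ← pow_mul]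
    rw [mul_comm 2 m, pow_mul _ m 2]
    simp only [pow_add] at hsign
    field_simp
    linear_combination radialCoeff m i j * cos r ^ (2 * i) * sin r ^ (2 * j) * hsign

/-- The dimension `2k + m + 1` of the irreducible representation of `SU(2)` that the modes with
indices `k` and `n`, `|n| = m`, come from; all growth estimates are in terms of it. -/
noncomputable def repDim (m k : ℕ) : ℝ := 2 * k + m + 1

lemma one_le_repDim (m k : ℕ) : 1 ≤ repDim m k := by
  rw [repDim]
  exact le_add_of_nonneg_left (by positivity)

lemma abs_iteratedDeriv_radialPart_le (m k j : ℕ) (r : ℝ) :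
    |iteratedDeriv j (radialPart m k) r| ≤ repDim m k ^ k * repDim m k ^ j := by
  have hdegree : ((m + 2 * k : ℕ) : ℝ) ≤ repDim m k := by
    rw [repDim]; push_cast; linarith
  have hnonneg : 0 ≤ repDim m k := zero_le_one.trans (one_le_repDim m k)
  have hmonomial (ij) (hij : ij ∈ antidiagonal k) :
      |iteratedDeriv j (cosPowSinPow (m + 2 * ij.1) (2 * ij.2)) r| ≤ repDim m k ^ j := by
    refine (abs_iteratedDeriv_cosPowSinPow_le _ _ _ _).trans ?_
    rw [show m + 2 * ij.1 + 2 * ij.2 = m + 2 * k by rw [← mem_antidiagonal.mp hij]; ring]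
    gcongr
  unfold radialPart
  rw [iteratedDeriv_fun_sum fun _ _ =>
    contDiffAt_const.mul (contDiff_cosPowSinPow _ _).contDiffAt]
  calc _ ≤ ∑ ij ∈ antidiagonal k, |radialCoeff m ij.1 ij.2| * repDim m k ^ j := by
        refine (Finset.abs_sum_le_sum_abs _ _).trans (Finset.sum_le_sum fun ij hij => ?_)
        rw [iteratedDeriv_const_mul_field, abs_mul]
        gcongr
        exact hmonomial ij hij
    _ = (m + 2 * k).choose k * repDim m k ^ j := by
        rw [← Finset.sum_mul, sum_abs_radialCoeff]
    _ ≤ ((m + 2 * k : ℕ) : ℝ) ^ k * repDim m k ^ j := by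
        gcongr
        exact_mod_cast Nat.choose_le_pow _ _
    _ ≤ repDim m k ^ k * repDim m k ^ j := by gcongr

lemma eigenvalue_nonneg (m k : ℕ) : 0 ≤ eigenvalue m k := by
  rw [eigenvalue]
  positivity

lemma eigenvalue_le_repDim_sq (m k : ℕ) : eigenvalue m k ≤ repDim m k ^ 2 := by
  rw [← sub_nonneg, show repDim m k ^ 2 - eigenvalue m k = m ^ 2 + 1 by
    rw [eigenvalue, repDim]; ring]
  positivity

lemma le_eigenvalue (m k : ℕ) : (2 * k + 1) * repDim m k - 1 ≤ eigenvalue m k := by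
  rw [← sub_nonneg, show eigenvalue m k - ((2 * k + 1) * repDim m k - 1) = 2 * k * m + m by
    rw [eigenvalue, repDim]; ring]
  positivity

lemma abs_iteratedDeriv_exp_neg_mul_le {c s t : ℝ} (hc : 0 ≤ c) (hst : s ≤ t) (i : ℕ) :
    |iteratedDeriv i (fun t => exp (-c * t)) t| ≤ c ^ i * exp (-c * s) := by
  rw [iteratedDeriv_exp_const_mul, abs_mul, abs_pow, abs_neg, abs_of_nonneg hc, abs_exp]
  gcongr ?_ * exp ?_
  exact mul_le_mul_of_nonpos_left hst (neg_nonpos.mpr hc)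

lemma abs_iteratedDeriv_cos_const_mul_le (c z : ℝ) (l : ℕ) :
    |iteratedDeriv l (fun z => cos (c * z)) z| ≤ |c| ^ l := by
  rw [iteratedDeriv_comp_const_mul contDiff_cos, abs_mul, abs_pow]
  exact mul_le_of_le_one_right (by positivity) (abs_iteratedDeriv_cos_le_one l _)

lemma summable_exp_neg_mul_repDim {c : ℝ} (hc : 0 < c) :
    Summable fun p : ℤ × ℕ => exp (-c * repDim p.1.natAbs p.2) := by
  have hnat : Summable fun n : ℕ => exp (n * -c) :=
    summable_exp_nat_mul_iff.mpr (neg_lt_zero.mpr hc)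
  have hint : Summable fun n : ℤ => exp (n.natAbs * -c) :=
    .of_nat_of_neg (by simpa using hnat) (by simpa using hnat)
  have heven : Summable fun k : ℕ => exp (k * (-2 * c)) :=
    summable_exp_nat_mul_iff.mpr (by linarith)
  refine ((hint.mul_of_nonneg heven (fun _ => (exp_pos _).le) fun _ => (exp_pos _).le).mul_left
    (exp (-c))).congr fun p => ?_
  rw [← exp_add, ← exp_add, repDim]
  ring_nf

lemma tendsto_repDim_cofinite_atTop :
    Filter.Tendsto (fun p : ℤ × ℕ => repDim p.1.natAbs p.2) Filter.cofinite Filter.atTop := by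
  have := (summable_exp_neg_mul_repDim one_pos).tendsto_cofinite_zero
  simpa [tendsto_exp_comp_nhds_zero] using this

/- Since the eigenvalue is at least `(2k + 1) N - 1`, where `N` is the dimension, the term is at
most `e^s (N e^{-2sN})^k N^q e^{-sN}`, and `N e^{-2sN} ≤ 1` for all but finitely many modes. -/
lemma summable_repDim_pow_mul_exp_neg_eigenvalue {s : ℝ} (hs : 0 < s) (q : ℕ) :
    Summable fun p : ℤ × ℕ => repDim p.1.natAbs p.2 ^ (q + p.2)
      * exp (-eigenvalue p.1.natAbs p.2 * s) := by
  have hpow : ∀ᶠ x : ℝ in Filter.atTop, x ^ q ≤ exp (s / 2 * x) := by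
    filter_upwards [(isLittleO_pow_exp_pos_mul_atTop q (half_pos hs)).bound one_pos] with x hx
    simpa using (le_abs_self _).trans hx
  have hlin : ∀ᶠ x : ℝ in Filter.atTop, x ≤ exp (2 * s * x) := by
    filter_upwards [(isLittleO_pow_exp_pos_mul_atTop 1 (show 0 < 2 * s by linarith)).bound
      one_pos] with x hx
    simpa using (le_abs_self _).trans hx
  refine ((summable_exp_neg_mul_repDim (half_pos hs)).mul_left
    (exp s)).of_norm_bounded_eventually ?_
  filter_upwards [tendsto_repDim_cofinite_atTop.eventually (hpow.and hlin)] with p ⟨hpow, hlin⟩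
  have hone := one_le_repDim p.1.natAbs p.2
  have heig := le_eigenvalue p.1.natAbs p.2
  set N := repDim p.1.natAbs p.2
  rw [norm_of_nonneg (by positivity), pow_add]
  calc _ ≤ exp (s / 2 * N) * exp (2 * s * N) ^ p.2 * exp (-((2 * p.2 + 1) * N - 1) * s) := by
        gcongr
    _ = exp s * exp (-(s / 2) * N) := by
        rw [← exp_nat_mul, ← exp_add, ← exp_add, ← exp_add]
        ring_nf

/-- The derivative `∂_t^i ∂_r^j ∂_z^l` of the real part of the mode `p = (n, k)` of the heat
kernel. -/
noncomputable def modeDeriv (i j l : ℕ) (t r z : ℝ) (p : ℤ × ℕ) : ℝ :=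
  repDim p.1.natAbs p.2
    * iteratedDeriv i (fun t => exp (-eigenvalue p.1.natAbs p.2 * t)) t
    * iteratedDeriv j (radialPart p.1.natAbs p.2) r
    * iteratedDeriv l (fun z => cos (p.1 * z)) z

/-- The termwise derivative `∂_t^i ∂_r^j ∂_z^l` of the series defining the heat kernel. -/
noncomputable def seriesDeriv (i j l : ℕ) (t r z : ℝ) : ℝ := ∑' p, modeDeriv i j l t r z p

lemma abs_modeDeriv_le (i j l : ℕ) {s t : ℝ} (hst : s ≤ t) (r z : ℝ) (p : ℤ × ℕ) :
    |modeDeriv i j l t r z p| ≤ repDim p.1.natAbs p.2 ^ (1 + 2 * i + j + l + p.2)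
      * exp (-eigenvalue p.1.natAbs p.2 * s) := by
  obtain ⟨n, k⟩ := p
  have hN := one_le_repDim n.natAbs k
  have heig := eigenvalue_nonneg n.natAbs k
  have heigN := eigenvalue_le_repDim_sq n.natAbs k
  have htime := abs_iteratedDeriv_exp_neg_mul_le heig hst i
  have hradial := abs_iteratedDeriv_radialPart_le n.natAbs k j r
  have hangular := abs_iteratedDeriv_cos_const_mul_le n z l
  have hn : |(n : ℝ)| ≤ repDim n.natAbs k := by
    rw [repDim, Nat.cast_natAbs, Int.cast_abs]
    linarith
  rw [modeDeriv, abs_mul, abs_mul, abs_mul, abs_of_pos (by linarith)]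
  calc _ ≤ repDim n.natAbs k * ((repDim n.natAbs k ^ 2) ^ i * exp (-eigenvalue n.natAbs k * s))
        * (repDim n.natAbs k ^ k * repDim n.natAbs k ^ j) * repDim n.natAbs k ^ l := by
        gcongr
        · exact htime.trans (by gcongr)
        · exact hangular.trans (by gcongr)
    _ = _ := by ring

lemma summable_modeDeriv (i j l : ℕ) {t : ℝ} (ht : 0 < t) (r z : ℝ) :
    Summable (modeDeriv i j l t r z) :=
  .of_norm_bounded (summable_repDim_pow_mul_exp_neg_eigenvalue ht _)
    fun p => abs_modeDeriv_le i j l le_rfl r z p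

lemma hasDerivAt_iteratedDeriv {f : ℝ → ℝ} {n : ℕ} (hf : ContDiff ℝ (n + 1) f) (x : ℝ) :
    HasDerivAt (iteratedDeriv n f) (iteratedDeriv (n + 1) f x) x := by
  rw [iteratedDeriv_succ]
  exact (hf.differentiable_iteratedDeriv' n x).hasDerivAt

lemma hasDerivAt_seriesDeriv_time (i j l : ℕ) {t : ℝ} (ht : 0 < t) (r z : ℝ) :
    HasDerivAt (fun t => seriesDeriv i j l t r z) (seriesDeriv (i + 1) j l t r z) t := by
  have hmem : t ∈ Set.Ioi (t / 2) := half_lt_self ht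
  exact hasDerivAt_tsum_of_isPreconnected
    (summable_repDim_pow_mul_exp_neg_eigenvalue (half_pos ht) _) isOpen_Ioi isPreconnected_Ioi
    (fun _ t _ =>
      (((hasDerivAt_iteratedDeriv (by fun_prop) t).const_mul _).mul_const _).mul_const _)
    (fun p _ ht => abs_modeDeriv_le (i + 1) j l (le_of_lt ht) r z p)
    hmem (summable_modeDeriv i j l ht r z) hmem

lemma hasDerivAt_seriesDeriv_radial (i j l : ℕ) {t : ℝ} (ht : 0 < t) (r z : ℝ) :
    HasDerivAt (fun r => seriesDeriv i j l t r z) (seriesDeriv i (j + 1) l t r z) r :=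
  hasDerivAt_tsum (summable_repDim_pow_mul_exp_neg_eigenvalue ht _)
    (fun _ r => ((hasDerivAt_iteratedDeriv (contDiff_radialPart _ _) r).const_mul _).mul_const _)
    (fun p r => abs_modeDeriv_le i (j + 1) l le_rfl r z p) (summable_modeDeriv i j l ht r z) r

lemma hasDerivAt_seriesDeriv_angular (i j l : ℕ) {t : ℝ} (ht : 0 < t) (r z : ℝ) :
    HasDerivAt (fun z => seriesDeriv i j l t r z) (seriesDeriv i j (l + 1) t r z) z :=
  hasDerivAt_tsum (summable_repDim_pow_mul_exp_neg_eigenvalue ht _)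
    (fun _ z => (hasDerivAt_iteratedDeriv (by fun_prop) z).const_mul _)
    (fun p z => abs_modeDeriv_le i j (l + 1) le_rfl r z p) (summable_modeDeriv i j l ht r z) z

lemma modeDeriv_heat_equation (t : ℝ) {r : ℝ} (hr : sin (2 * r) ≠ 0) (z : ℝ) (p : ℤ × ℕ) :
    modeDeriv 1 0 0 t r z p
      = modeDeriv 0 2 0 t r z p
        + 2 * (cos (2 * r) / sin (2 * r)) * modeDeriv 0 1 0 t r z p
        + tan r ^ 2 * modeDeriv 0 0 2 t r z p := by
  have hradial := radialLaplacian_radialPart p.1.natAbs p.2 hr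
  have hangular : iteratedDeriv 2 (fun z => cos (p.1 * z)) z
      = -(p.1.natAbs : ℝ) ^ 2 * cos (p.1 * z) := by
    rw [iteratedDeriv_comp_const_mul contDiff_cos, Nat.cast_natAbs, Int.cast_abs, sq_abs]
    simp [iteratedDeriv_succ]
  have htime : iteratedDeriv 1 (fun t => exp (-eigenvalue p.1.natAbs p.2 * t)) t
      = -eigenvalue p.1.natAbs p.2 * exp (-eigenvalue p.1.natAbs p.2 * t) := by
    rw [iteratedDeriv_exp_const_mul, pow_one]
  simp only [modeDeriv, htime, hangular]
  simp only [iteratedDeriv_zero, iteratedDeriv_one]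
  simp only [radialLaplacian] at hradial
  linear_combination -(repDim p.1.natAbs p.2 * exp (-eigenvalue p.1.natAbs p.2 * t)
    * cos (p.1 * z)) * hradial

lemma seriesDeriv_heat_equation {t : ℝ} (ht : 0 < t) {r : ℝ} (hr : sin (2 * r) ≠ 0) (z : ℝ) :
    seriesDeriv 1 0 0 t r z
      = seriesDeriv 0 2 0 t r z
        + 2 * (cos (2 * r) / sin (2 * r)) * seriesDeriv 0 1 0 t r z
        + tan r ^ 2 * seriesDeriv 0 0 2 t r z := by
  have hsum (i j l : ℕ) := (summable_modeDeriv i j l ht r z).hasSum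
  refine (hsum 1 0 0).unique ?_
  rw [funext (modeDeriv_heat_equation t hr z)]
  exact ((hsum 0 2 0).add ((hsum 0 1 0).mul_left _)).add ((hsum 0 0 2).mul_left _)

lemma heatTerm_eq (t r z : ℝ) (n : ℤ) (k : ℕ) :
    heatTerm t r z n k = ((repDim n.natAbs k * exp (-eigenvalue n.natAbs k * t)
      * radialPart n.natAbs k r : ℝ) : ℂ) * Complex.exp (((n * z : ℝ) : ℂ) * Complex.I) := by
  rw [heatTerm, ← cos_pow_mul_jacobiP, repDim, eigenvalue]
  push_cast
  ring

lemma re_heatTerm (t r z : ℝ) (n : ℤ) (k : ℕ) :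
    (heatTerm t r z n k).re = modeDeriv 0 0 0 t r z (n, k) := by
  rw [heatTerm_eq, Complex.re_ofReal_mul, Complex.exp_ofReal_mul_I_re]
  simp only [modeDeriv, iteratedDeriv_zero]

/- At `z = 0` every mode is real, and its absolute value does not depend on `z`. -/
lemma norm_heatTerm (t r z : ℝ) (n : ℤ) (k : ℕ) :
    ‖heatTerm t r z n k‖ = |modeDeriv 0 0 0 t r 0 (n, k)| := by
  rw [heatTerm_eq, norm_mul, Complex.norm_exp_ofReal_mul_I, mul_one, Complex.norm_real]
  simp [modeDeriv]

lemma summable_heatTerm {t : ℝ} (ht : 0 < t) (r z : ℝ) :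
    Summable fun p : ℤ × ℕ => heatTerm t r z p.1 p.2 := by
  refine .of_norm ?_
  simpa only [norm_heatTerm] using (summable_modeDeriv 0 0 0 ht r 0).abs

lemma heatP_eq_seriesDeriv {t : ℝ} (ht : 0 < t) (r z : ℝ) :
    heatP t r z = seriesDeriv 0 0 0 t r z := by
  have hsum := summable_heatTerm ht r z
  rw [heatP, ← hsum.tsum_prod, Complex.re_tsum hsum]
  exact tsum_congr fun p => re_heatTerm t r z p.1 p.2

lemma deriv_heatP_time {t : ℝ} (ht : 0 < t) (r z : ℝ) :
    deriv (fun t' => heatP t' r z) t = seriesDeriv 1 0 0 t r z := by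
  refine ((hasDerivAt_seriesDeriv_time 0 0 0 ht r z).congr_of_eventuallyEq ?_).deriv
  filter_upwards [lt_mem_nhds ht] with t' ht'
  exact heatP_eq_seriesDeriv ht' r z

lemma deriv_heatP_radial {t : ℝ} (ht : 0 < t) (r z : ℝ) :
    deriv (fun r' => heatP t r' z) r = seriesDeriv 0 1 0 t r z := by
  simp only [heatP_eq_seriesDeriv ht]
  exact (hasDerivAt_seriesDeriv_radial 0 0 0 ht r z).deriv

lemma deriv_heatP_angular {t : ℝ} (ht : 0 < t) (r z : ℝ) :
    deriv (fun z' => heatP t r z') z = seriesDeriv 0 0 1 t r z := by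
  simp only [heatP_eq_seriesDeriv ht]
  exact (hasDerivAt_seriesDeriv_angular 0 0 0 ht r z).deriv

end SU2HeatKernel

open SU2HeatKernel in
theorem stmt_2_general :
    (∀ t : ℝ, 0 < t → ∀ r z : ℝ, Summable (fun nk : ℤ × ℕ => heatTerm t r z nk.1 nk.2)) ∧
    (∀ t : ℝ, 0 < t → ∀ r : ℝ, sin (2 * r) ≠ 0 → ∀ z : ℝ,
      deriv (fun t' => heatP t' r z) t =
        deriv (fun r' => deriv (fun r'' => heatP t r'' z) r') r
          + 2 * (cos (2 * r) / sin (2 * r)) * deriv (fun r' => heatP t r' z) r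
          + tan r ^ 2 * deriv (fun z' => deriv (fun z'' => heatP t r z'') z') z) := by
  refine ⟨fun t ht => summable_heatTerm ht, fun t ht r hr z => ?_⟩
  simp only [deriv_heatP_time ht, deriv_heatP_radial ht, deriv_heatP_angular ht,
    (hasDerivAt_seriesDeriv_radial 0 1 0 ht r z).deriv,
    (hasDerivAt_seriesDeriv_angular 0 0 1 ht r z).deriv]
  exact seriesDeriv_heat_equation ht hr z

/-- For `t > 0` the double series defining `p_t(r,z)` converges (absolutely), and
`p` satisfies the heat equation `∂p/∂t = ∂²p/∂r² + 2 cot(2r) ∂p/∂r + tan²(r) ∂²p/∂z²`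
for all `t > 0`, `r ∈ (0, π/2)`, `z ∈ ℝ`. -/
theorem stmt_2 :
    (∀ t : ℝ, 0 < t → ∀ r z : ℝ, Summable (fun nk : ℤ × ℕ => heatTerm t r z nk.1 nk.2)) ∧
    (∀ t : ℝ, 0 < t → ∀ r ∈ Set.Ioo 0 (Real.pi / 2), ∀ z : ℝ,
      deriv (fun t' => heatP t' r z) t =
        deriv (fun r' => deriv (fun r'' => heatP t r'' z) r') r
          + 2 * (Real.cos (2 * r) / Real.sin (2 * r)) * deriv (fun r' => heatP t r' z) r
          + Real.tan r ^ 2 * deriv (fun z' => deriv (fun z'' => heatP t r z'') z') z) := by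
  refine ⟨stmt_2_general.1, fun t ht r hr z => stmt_2_general.2 t ht r (ne_of_gt ?_) z⟩
  exact sin_pos_of_pos_of_lt_pi (by linarith [hr.1]) (by linarith [hr.2])
end

section
/- For every smooth function f : [0, π/2] × ℝ → ℝ which is 2π-periodic in its second variable, one has lim_{t → 0⁺} (1/2π) ∫_0^{π/2} ∫_0^{2π} p_t(r, z) · f(r, z) · sin(2r) dz dr = f(0, 0). -/
open Real

/-!
In the coordinate `w = cos r * exp (z * I)` the terms of the heat series are multiples of
polynomials `φ_{n,k}` in `w` and `conj w` that are orthogonal for the probability measure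
`sin (2r) dr dz / 2π`, equal to `1` at `w = 1`, and eigenfunctions of the sub-Laplacian `Δ` of
`SU(2)`, which is a sum of two second derivatives along horizontal great circles. Hence `Δ` obeys
the minimum principle, so the resolvents `(1 - sΔ)⁻¹` preserve positivity on the span of the
`φ_{n,k}`, and so does `exp (tΔ) = lim (1 - (t/N) Δ)^(-N)`. As this span is dense among continuous
functions on the disc and pairing with `p_t` evaluates `exp (tΔ)` at `w = 1`, we get `p_t ≥ 0`.

Reading off the coefficients of `φ_{0,0} = 1` and `φ_{1,0} = w`, the kernel `p_t` has mass `1` and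
`∫ p_t (1 - Re w) = 1 - exp (-2t) → 0`. Since `1 - Re w ≥ 0` vanishes only at `w = 1`, the mass
concentrates there, in the manner of Korovkin's theorem.
-/

section ShiftedJacobi

open Polynomial

/-- The coefficient of `X ^ i` in `shiftedJacobi m k`. -/
noncomputable def shiftedJacobiCoeff (m k i : ℕ) : ℝ :=
  (-1) ^ (k + i) * k.choose i * (m + k + i).choose k

/-- The Jacobi polynomial `P_k^{0,m}` transported from `[-1, 1]` to `[0, 1]`, that is
`P_k^{0,m}(2 X - 1)`. Its coefficients come from expanding `(1 - x²)ᵏ` in powers of `1 + x` in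
Rodrigues' formula. -/
noncomputable def shiftedJacobi (m k : ℕ) : ℝ[X] :=
  ∑ i ∈ Finset.range (k + 1), C (shiftedJacobiCoeff m k i) * X ^ i

/-- The integral over `[0, 1]` as a linear functional on polynomials. -/
noncomputable def unitIntegral : ℝ[X] →ₗ[ℝ] ℝ where
  toFun p := ∫ s in (0 : ℝ)..1, p.eval s
  map_add' p q := by
    simp only [eval_add]
    exact intervalIntegral.integral_add (p.continuous.intervalIntegrable _ _)
      (q.continuous.intervalIntegrable _ _)
  map_smul' c p := by simp

lemma shiftedJacobiCoeff_eq_zero_of_lt (m : ℕ) {k i : ℕ} (h : k < i) :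
    shiftedJacobiCoeff m k i = 0 := by
  simp [shiftedJacobiCoeff, Nat.choose_eq_zero_of_lt h]

lemma shiftedJacobiCoeff_self_ne_zero (m k : ℕ) : shiftedJacobiCoeff m k k ≠ 0 := by
  have : (m + k + k).choose k ≠ 0 := (Nat.choose_pos (by omega)).ne'
  simp [shiftedJacobiCoeff, this]

lemma shiftedJacobiCoeff_succ (m k i : ℕ) :
    ((m : ℝ) + i + 1) * (i + 1) * shiftedJacobiCoeff m k (i + 1) =
      -((k : ℝ) - i) * (m + k + i + 1) * shiftedJacobiCoeff m k i := by
  have choose_lower : (k.choose (i + 1) : ℝ) * (i + 1) = k.choose i * ((k : ℝ) - i) := by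
    rcases le_or_gt i k with h | h
    · rw [← Nat.cast_sub h]
      exact_mod_cast Nat.choose_succ_right_eq k i
    · simp [Nat.choose_eq_zero_of_lt h, Nat.choose_eq_zero_of_lt (h.trans i.lt_succ_self)]
  have choose_upper : ((m + k + (i + 1)).choose k : ℝ) * (m + i + 1) =
      (m + k + i).choose k * (m + k + i + 1) := by
    have := Nat.choose_mul_succ_eq (m + k + i) k
    rw [show m + k + i + 1 - k = m + i + 1 by omega] at this
    exact_mod_cast this.symm
  have sign : (-1 : ℝ) ^ (k + (i + 1)) = -(-1) ^ (k + i) := by ring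
  unfold shiftedJacobiCoeff
  linear_combination ((m + k + (i + 1)).choose k * ((m : ℝ) + i + 1) *
    ((k.choose (i + 1) : ℝ) * (i + 1))) * sign - (-1 : ℝ) ^ (k + i) *
    ((m + k + (i + 1)).choose k * ((m : ℝ) + i + 1) * choose_lower +
      k.choose i * ((k : ℝ) - i) * choose_upper)

lemma coeff_shiftedJacobi (m k i : ℕ) :
    (shiftedJacobi m k).coeff i = shiftedJacobiCoeff m k i := by
  simp only [shiftedJacobi, finsetSum_coeff, coeff_C_mul_X_pow, Finset.sum_ite_eq,
    Finset.mem_range]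
  exact ite_eq_left_iff.2 fun h => (shiftedJacobiCoeff_eq_zero_of_lt m (by omega)).symm

lemma degree_shiftedJacobi (m k : ℕ) : (shiftedJacobi m k).degree = k := by
  refine degree_eq_of_le_of_coeff_ne_zero ?_ ?_
  · refine (degree_le_iff_coeff_zero _ _).2 fun i hi => ?_
    rw [coeff_shiftedJacobi, shiftedJacobiCoeff_eq_zero_of_lt m (by exact_mod_cast hi)]
  · rw [coeff_shiftedJacobi]
    exact shiftedJacobiCoeff_self_ne_zero m k

lemma eval_shiftedJacobi (m k : ℕ) (s : ℝ) :
    (shiftedJacobi m k).eval s =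
      ∑ i ∈ Finset.range (k + 1), shiftedJacobiCoeff m k i * s ^ i := by
  simp [shiftedJacobi, eval_finsetSum]

-- The sum of the coefficients is the `k`-th finite difference of `x ↦ x.choose k`.
lemma eval_one_shiftedJacobi (m k : ℕ) : (shiftedJacobi m k).eval 1 = 1 := by
  have fwdDiff_choose := fwdDiff_iter_eq_sum_shift (1 : ℕ)
    (fun x : ℕ => (x.choose (k + 0) : ℤ)) k (m + k)
  rw [fwdDiff_iter_choose] at fwdDiff_choose
  have sum_eq_one := congrArg (Int.cast : ℤ → ℝ) fwdDiff_choose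
  simp only [Nat.choose_zero_right] at sum_eq_one
  push_cast at sum_eq_one
  rw [eval_shiftedJacobi]
  refine Eq.trans (Finset.sum_congr rfl fun i hi => ?_) sum_eq_one.symm
  have hik : i ≤ k := Finset.mem_range_succ_iff.1 hi
  have sign : (-1 : ℝ) ^ (k + i) = (-1) ^ (k - i) := by
    rw [show k + i = (k - i) + 2 * i by omega, pow_add, pow_mul]
    simp
  simp [shiftedJacobiCoeff, sign]

lemma iteratedDeriv_jacobi_weight (m k : ℕ) (x : ℝ) :
    iteratedDeriv k (fun y : ℝ => (1 + y) ^ m * (1 - y ^ 2) ^ k) x =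
      ∑ i ∈ Finset.range (k + 1), (k.choose i * 2 ^ (k - i) * (-1) ^ i) *
        ((m + k + i).descFactorial k * (1 + x) ^ (m + i)) := by
  have expansion : (fun y : ℝ => (1 + y) ^ m * (1 - y ^ 2) ^ k) = fun y : ℝ =>
      ∑ i ∈ Finset.range (k + 1), (k.choose i * 2 ^ (k - i) * (-1) ^ i) *
        (1 + y) ^ (m + k + i) := by
    funext y
    rw [show 1 - y ^ 2 = (1 + y) * (-(1 + y) + 2) by ring, mul_pow, add_pow (-(1 + y)),
      Finset.mul_sum, Finset.mul_sum]
    refine Finset.sum_congr rfl fun i _ => ?_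
    rw [neg_pow]
    ring
  rw [expansion, iteratedDeriv_fun_sum fun i _ => by fun_prop]
  refine Finset.sum_congr rfl fun i _ => ?_
  rw [iteratedDeriv_const_mul_field,
    congrFun (iteratedDeriv_comp_const_add k (fun z : ℝ => z ^ (m + k + i)) 1) x,
    iteratedDeriv_pow, show m + k + i - k = m + i by omega]

lemma jacobiP_eq_eval_shiftedJacobi (k m : ℕ) {s : ℝ} (h : s ^ m ≠ 0) :
    jacobiP k m (2 * s - 1) = (shiftedJacobi m k).eval s := by
  rw [jacobiP, iteratedDeriv_jacobi_weight, eval_shiftedJacobi, Finset.mul_sum]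
  refine Finset.sum_congr rfl fun i hi => ?_
  have two_pow : (2 : ℝ) ^ k = 2 ^ (k - i) * 2 ^ i := by
    rw [← pow_add, Nat.sub_add_cancel (Finset.mem_range_succ_iff.1 hi)]
  rw [Nat.descFactorial_eq_factorial_mul_choose, shiftedJacobiCoeff,
    show 1 + (2 * s - 1) = 2 * s by ring, mul_pow, mul_pow, two_pow]
  have : (k.factorial : ℝ) ≠ 0 := by positivity
  push_cast
  field_simp
  ring

lemma hypergeometric_ode_shiftedJacobi (m k : ℕ) :
    X * (1 - X) * derivative (derivative (shiftedJacobi m k)) +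
        (C (m + 1 : ℝ) - C (m + 2 : ℝ) * X) * derivative (shiftedJacobi m k) =
      C (-(k * (k + m + 1)) : ℝ) * shiftedJacobi m k := by
  ext i
  have recurrence := shiftedJacobiCoeff_succ m k i
  simp only [sub_mul, mul_sub, mul_assoc, one_mul, coeff_add, coeff_sub, coeff_C_mul]
  rcases i with _ | _ | i <;>
  · simp [coeff_X_mul, coeff_derivative, coeff_shiftedJacobi] at recurrence ⊢
    linear_combination recurrence

lemma sturmLiouville_shiftedJacobi (m k : ℕ) :
    derivative (X ^ (m + 1) * (1 - X) * derivative (shiftedJacobi m k)) =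
      C (-(k * (k + m + 1)) : ℝ) * (X ^ m * shiftedJacobi m k) := by
  have ode := hypergeometric_ode_shiftedJacobi m k
  simp only [derivative_mul, derivative_X_pow, derivative_sub, derivative_one, derivative_X,
    Nat.add_sub_cancel, Nat.cast_add, Nat.cast_one, map_add, map_natCast, map_one,
    map_ofNat] at ode ⊢
  linear_combination X ^ m * ode

lemma unitIntegral_derivative (p : ℝ[X]) :
    unitIntegral (derivative p) = p.eval 1 - p.eval 0 :=
  intervalIntegral.integral_eq_sub_of_hasDerivAt (fun s _ => p.hasDerivAt s)
    (p.derivative.continuous.intervalIntegrable _ _)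

lemma unitIntegral_shiftedJacobi_mul_of_ne (m : ℕ) {k j : ℕ} (h : k ≠ j) :
    unitIntegral (X ^ m * shiftedJacobi m k * shiftedJacobi m j) = 0 := by
  set P := shiftedJacobi m k
  set Q := shiftedJacobi m j
  have wronskian : derivative (X ^ (m + 1) * (1 - X) * derivative P * Q -
        X ^ (m + 1) * (1 - X) * derivative Q * P) =
      ((j * (j + m + 1) : ℝ) - k * (k + m + 1)) • (X ^ m * P * Q) := by
    rw [derivative_sub, derivative_mul, derivative_mul (g := P), sturmLiouville_shiftedJacobi,
      sturmLiouville_shiftedJacobi, smul_eq_C_mul, C_sub, C_neg, C_neg]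
    ring
  have eigenvalue_ne : (j * (j + m + 1) : ℝ) - k * (k + m + 1) ≠ 0 := by
    rw [show (j * (j + m + 1) : ℝ) - k * (k + m + 1) = (j - k) * (j + k + m + 1) by ring]
    exact mul_ne_zero (sub_ne_zero.2 (by exact_mod_cast h.symm)) (by positivity)
  have boundary := congrArg unitIntegral wronskian
  rw [unitIntegral_derivative, map_smul] at boundary
  simpa [eigenvalue_ne] using boundary.symm

/-- The polynomials `shiftedJacobi m k`, `k = 0, 1, …`, as a polynomial sequence. -/
noncomputable def shiftedJacobiSequence (m : ℕ) : Sequence ℝ where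
  elems' := shiftedJacobi m
  degree_eq' := degree_shiftedJacobi m

lemma isUnit_leadingCoeff_shiftedJacobiSequence (m k : ℕ) :
    IsUnit (shiftedJacobiSequence m k).leadingCoeff :=
  (leadingCoeff_ne_zero.2 ((shiftedJacobiSequence m).ne_zero k)).isUnit

lemma span_range_shiftedJacobi (m : ℕ) :
    Submodule.span ℝ (Set.range (shiftedJacobi m)) = ⊤ :=
  (shiftedJacobiSequence m).span (isUnit_leadingCoeff_shiftedJacobiSequence m)

lemma unitIntegral_shiftedJacobi_mul_of_degree_lt (m : ℕ) {k : ℕ} {p : ℝ[X]}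
    (hp : p.degree < k) : unitIntegral (X ^ m * shiftedJacobi m k * p) = 0 := by
  have span_le : Submodule.span ℝ (shiftedJacobi m '' Set.Iio k) ≤
      LinearMap.ker (unitIntegral ∘ₗ LinearMap.mulLeft ℝ (X ^ m * shiftedJacobi m k)) := by
    rw [Submodule.span_le]
    rintro _ ⟨j, hj, rfl⟩
    exact unitIntegral_shiftedJacobi_mul_of_ne m (ne_of_gt hj)
  refine span_le ?_
  have := (shiftedJacobiSequence m).span_degreeLT (m := k)
    fun i _ => isUnit_leadingCoeff_shiftedJacobiSequence m i
  exact this.ge (mem_degreeLT.2 hp)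

lemma degree_X_mul_derivative_sub_lt (m k : ℕ) :
    (X * derivative (shiftedJacobi m k) - C (k : ℝ) * shiftedJacobi m k).degree <
      (k : WithBot ℕ) := by
  refine (degree_lt_iff_coeff_zero _ _).2 fun i hi => ?_
  have coeff_euler : (X * derivative (shiftedJacobi m k)).coeff i =
      i * shiftedJacobiCoeff m k i := by
    rcases i with _ | i
    · simp
    · rw [coeff_X_mul, coeff_derivative, coeff_shiftedJacobi]
      push_cast
      ring
  rw [coeff_sub, coeff_euler, coeff_C_mul, coeff_shiftedJacobi, ← sub_mul]
  rcases hi.eq_or_lt with rfl | hlt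
  · simp
  · simp [shiftedJacobiCoeff_eq_zero_of_lt m hlt]

-- Modulo polynomials of degree `< k`, the Euler operator `X d/dX` acts on `shiftedJacobi m k` as
-- multiplication by `k`, so the integral of `d/dX (X ^ (m + 1) * P ^ 2)` determines the norm.
lemma unitIntegral_shiftedJacobi_mul_self (m k : ℕ) :
    unitIntegral (X ^ m * shiftedJacobi m k * shiftedJacobi m k) = 1 / (2 * k + m + 1) := by
  set P := shiftedJacobi m k with hP
  have lower : unitIntegral (X ^ m * P * (X * derivative P - C (k : ℝ) * P)) = 0 :=
    unitIntegral_shiftedJacobi_mul_of_degree_lt m (degree_X_mul_derivative_sub_lt m k)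
  have product_rule : derivative (X ^ (m + 1) * P * P) =
      (2 * k + m + 1 : ℝ) • (X ^ m * P * P) +
        (2 : ℝ) • (X ^ m * P * (X * derivative P - C (k : ℝ) * P)) := by
    simp only [derivative_mul, derivative_X_pow, Nat.add_sub_cancel, smul_eq_C_mul, C_add, C_mul,
      C_1, Nat.cast_add, Nat.cast_one, map_ofNat]
    ring
  have boundary := congrArg unitIntegral product_rule
  rw [unitIntegral_derivative, map_add, map_smul, map_smul, lower] at boundary
  simp only [eval_mul, eval_pow, eval_X, hP, eval_one_shiftedJacobi] at boundary
  rw [eq_div_iff (by positivity)]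
  simpa [mul_comm] using boundary.symm

end ShiftedJacobi

section SecondDerivative

open Filter Topology

variable {E F : Type*} [NormedAddCommGroup E] [NormedSpace ℝ E]
  [NormedAddCommGroup F] [NormedSpace ℝ F]

/-- `g` is differentiable near `x` and its derivative has derivative `b` at `x`. -/
def HasSecondDerivAt (g : ℝ → E) (b : E) (x : ℝ) : Prop :=
  ∃ g' : ℝ → E, (∀ᶠ y in 𝓝 x, HasDerivAt g (g' y) y) ∧ HasDerivAt g' b x

namespace HasSecondDerivAt

variable {g h : ℝ → E} {b c : E} {x : ℝ}

lemma add (hg : HasSecondDerivAt g b x) (hh : HasSecondDerivAt h c x) :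
    HasSecondDerivAt (fun y => g y + h y) (b + c) x := by
  obtain ⟨g', hg', hb⟩ := hg
  obtain ⟨h', hh', hc⟩ := hh
  refine ⟨fun y => g' y + h' y, ?_, hb.fun_add hc⟩
  filter_upwards [hg', hh'] with y hgy hhy using hgy.fun_add hhy

lemma clm_comp (hg : HasSecondDerivAt g b x) (A : E →L[ℝ] F) :
    HasSecondDerivAt (fun y => A (g y)) (A b) x := by
  obtain ⟨g', hg', hb⟩ := hg
  refine ⟨fun y => A (g' y), ?_, A.hasFDerivAt.comp_hasDerivAt x hb⟩
  filter_upwards [hg'] with y hgy using A.hasFDerivAt.comp_hasDerivAt y hgy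

lemma deriv_deriv (hg : HasSecondDerivAt g b x) : deriv (deriv g) x = b := by
  obtain ⟨g', hg', hb⟩ := hg
  have deriv_eq : deriv g =ᶠ[𝓝 x] g' := by
    filter_upwards [hg'] with y hgy using hgy.deriv
  rw [deriv_eq.deriv_eq, hb.deriv]

-- If the second derivative were negative, `x` would also be a local maximum, so `g` would be
-- constant near `x`.
lemma nonneg_of_isLocalMin {g : ℝ → ℝ} {b x : ℝ} (hg : HasSecondDerivAt g b x)
    (hmin : IsLocalMin g x) : 0 ≤ b := by
  have deriv_deriv_eq := hg.deriv_deriv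
  obtain ⟨g', hg', -⟩ := hg
  by_contra! hneg
  have hmax : IsLocalMax g x := isLocalMax_of_deriv_deriv_neg (deriv_deriv_eq ▸ hneg)
    hmin.deriv_eq_zero hg'.self_of_nhds.continuousAt
  have hconst : g =ᶠ[𝓝 x] fun _ => g x := by
    filter_upwards [hmin, hmax] with y hle hge using le_antisymm hge hle
  have : deriv (deriv g) x = 0 := by
    rw [hconst.deriv.deriv_eq]
    simp
  linarith

end HasSecondDerivAt

end SecondDerivative

section ClosedDisc

open Polynomial ComplexConjugate

/-- The closed unit disc of `ℂ`. The heat kernel in the coordinates `(r, z)` is a function of the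
point `cos r * exp (z * I)` of this disc. -/
abbrev ClosedDisc : Type := Metric.closedBall (0 : ℂ) 1

/-- The monomial `w ^ a * conj w ^ b` on the closed disc. -/
noncomputable def discMonomial (a b : ℕ) : C(ClosedDisc, ℂ) :=
  .restrict _ (.id ℂ) ^ a * star (.restrict _ (.id ℂ)) ^ b

/-- The function `p(|w|²) wⁿ` on the closed disc, where for negative `n` the power `wⁿ` stands for
`conj w ^ (-n)`. -/
noncomputable def discLift (n : ℤ) : ℝ[X] →ₗ[ℝ] C(ClosedDisc, ℂ) :=
  LinearMap.mulLeft ℝ (discMonomial n.toNat (-n).toNat) ∘ₗ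
    (aeval (discMonomial 1 1)).toLinearMap

/-- The disc polynomials `φ_{n,k}`: the eigenfunctions `(cos r)^|n| P_k^{0,|n|}(cos 2r) e^{inz}`
of the heat expansion, as functions of `w = cos r * exp (z * I)`. -/
noncomputable def discPolynomial (x : ℤ × ℕ) : C(ClosedDisc, ℂ) :=
  discLift x.1 (shiftedJacobi x.1.natAbs x.2)

/-- The point `cos r * exp (z * I)` of the closed disc, as a function of `p = (r, z)`. -/
noncomputable def discPoint (p : ℝ × ℝ) : ClosedDisc :=
  ⟨cos p.1 * Complex.exp (p.2 * Complex.I), by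
    rw [mem_closedBall_zero_iff, norm_mul, Complex.norm_exp_ofReal_mul_I, mul_one,
      Complex.norm_real]
    exact abs_cos_le_one p.1⟩

lemma discMonomial_apply (a b : ℕ) (w : ClosedDisc) :
    discMonomial a b w = (w : ℂ) ^ a * conj (w : ℂ) ^ b := rfl

lemma discMonomial_mul (a b c d : ℕ) :
    discMonomial a b * discMonomial c d = discMonomial (a + c) (b + d) := by
  simp only [discMonomial]
  ring

lemma discMonomial_pow (a b i : ℕ) :
    discMonomial a b ^ i = discMonomial (a * i) (b * i) := by
  simp only [discMonomial, mul_pow, pow_mul]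

lemma star_discMonomial (a b : ℕ) : star (discMonomial a b) = discMonomial b a := by
  simp [discMonomial, mul_comm]

lemma norm_discMonomial_le (a b : ℕ) : ‖discMonomial a b‖ ≤ 1 := by
  refine (ContinuousMap.norm_le _ zero_le_one).2 fun w => ?_
  have hw : ‖(w : ℂ)‖ ≤ 1 := mem_closedBall_zero_iff.1 w.2
  rw [discMonomial_apply, norm_mul, norm_pow, norm_pow, RCLike.norm_conj]
  exact mul_le_one₀ (pow_le_one₀ (norm_nonneg _) hw) (by positivity)
    (pow_le_one₀ (norm_nonneg _) hw)

lemma discLift_apply (n : ℤ) (p : ℝ[X]) :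
    discLift n p = discMonomial n.toNat (-n).toNat * aeval (discMonomial 1 1) p := rfl

lemma discLift_C_mul_X_pow (n : ℤ) (c : ℝ) (i : ℕ) :
    discLift n (C c * X ^ i) = (c : ℂ) • discMonomial (n.toNat + i) ((-n).toNat + i) := by
  rw [← smul_eq_C_mul, map_smul, discLift_apply, map_pow, aeval_X, discMonomial_pow,
    discMonomial_mul, one_mul, ← algebraMap_smul ℂ]
  rfl

lemma discMonomial_eq_discLift (a b : ℕ) :
    discMonomial a b = discLift ((a : ℤ) - b) (X ^ min a b) := by
  have := discLift_C_mul_X_pow ((a : ℤ) - b) 1 (min a b)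
  rw [C_1, one_mul, Complex.ofReal_one, one_smul] at this
  rw [this]
  congr <;> omega

lemma discPolynomial_zero_zero : discPolynomial (0, 0) = 1 := by
  simp [discPolynomial, discLift_apply, shiftedJacobi, shiftedJacobiCoeff, discMonomial]

lemma discPolynomial_one_zero : discPolynomial (1, 0) = discMonomial 1 0 := by
  simp [discPolynomial, discLift_apply, shiftedJacobi, shiftedJacobiCoeff]

lemma star_discLift (n : ℤ) (p : ℝ[X]) : star (discLift n p) = discLift (-n) p := by
  induction p using Polynomial.induction_on' with
  | add p q hp hq => simp [hp, hq]
  | monomial i c =>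
    rw [← C_mul_X_pow_eq_monomial, discLift_C_mul_X_pow, discLift_C_mul_X_pow, star_smul,
      star_discMonomial, neg_neg]
    simp

lemma star_discPolynomial (x : ℤ × ℕ) :
    star (discPolynomial x) = discPolynomial (-x.1, x.2) := by
  simp [discPolynomial, star_discLift]

lemma discMonomial_discPoint (a b : ℕ) (r z : ℝ) :
    discMonomial a b (discPoint (r, z)) =
      (cos r : ℂ) ^ (a + b) * Complex.exp ((a - b) * z * Complex.I) := by
  have conj_exp : conj (Complex.exp (z * Complex.I)) = Complex.exp (-(z * Complex.I)) := by
    rw [← Complex.exp_conj]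
    simp
  rw [discMonomial_apply, discPoint, map_mul, Complex.conj_ofReal, conj_exp, mul_pow, mul_pow,
    ← Complex.exp_nat_mul, ← Complex.exp_nat_mul,
    show (a - b : ℂ) * z * Complex.I = a * (z * Complex.I) + b * -(z * Complex.I) by ring,
    Complex.exp_add]
  ring

lemma discLift_discPoint (n : ℤ) (p : ℝ[X]) (r z : ℝ) :
    discLift n p (discPoint (r, z)) =
      ((cos r ^ n.natAbs * p.eval (cos r ^ 2) : ℝ) : ℂ) * Complex.exp (n * z * Complex.I) := by
  induction p using Polynomial.induction_on' with
  | add p q hp hq => simp [hp, hq, mul_add, add_mul]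
  | monomial i c =>
    have toNat_sub : (n.toNat : ℂ) - (-n).toNat = n := by
      exact_mod_cast congrArg (Int.cast : ℤ → ℂ) n.toNat_sub_toNat_neg
    have toNat_add : n.toNat + (-n).toNat = n.natAbs := n.toNat_add_toNat_neg_eq_natAbs
    rw [← C_mul_X_pow_eq_monomial, discLift_C_mul_X_pow, ContinuousMap.smul_apply,
      discMonomial_discPoint, Nat.cast_add, Nat.cast_add, add_sub_add_right_eq_sub, toNat_sub,
      add_add_add_comm, toNat_add, smul_eq_mul]
    push_cast [eval_mul, eval_C, eval_pow, eval_X]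
    ring

lemma continuous_discPoint : Continuous discPoint := by
  unfold discPoint
  fun_prop

lemma discLift_mem_span_discPolynomial (n : ℤ) (p : ℝ[X]) :
    discLift n p ∈ Submodule.span ℂ (Set.range discPolynomial) := by
  have hp : p ∈ Submodule.span ℝ (Set.range (shiftedJacobi n.natAbs)) := by
    simp [span_range_shiftedJacobi]
  induction hp using Submodule.span_induction with
  | mem p hp =>
    obtain ⟨k, rfl⟩ := hp
    exact Submodule.subset_span ⟨(n, k), rfl⟩
  | zero => simp
  | add p q _ _ hp hq => simpa using add_mem hp hq
  | smul c p _ hp => simpa using Submodule.smul_of_tower_mem _ c hp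

lemma dense_span_discPolynomial :
    Dense (Submodule.span ℂ (Set.range discPolynomial) : Set C(ClosedDisc, ℂ)) := by
  have dense_adjoin :
      Dense (StarAlgebra.adjoin ℂ {(.restrict _ (.id ℂ) : C(ClosedDisc, ℂ))} :
        Set C(ClosedDisc, ℂ)) := by
    rw [dense_iff_closure_eq, ← StarSubalgebra.topologicalClosure_coe]
    exact congrArg _ (ContinuousMap.elemental_id_eq_top (Metric.closedBall (0 : ℂ) 1))
  refine dense_adjoin.mono fun u hu => ?_
  rw [SetLike.mem_coe, ← StarSubalgebra.mem_toSubalgebra,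
    StarAlgebra.adjoin_toSubalgebra, ← Subalgebra.mem_toSubmodule, Set.star_singleton,
    Set.singleton_union, Algebra.adjoin_eq_span] at hu
  refine Submodule.span_le.2 (fun v hv => ?_) hu
  obtain ⟨a, b, rfl⟩ := (Submonoid.mem_closure_pair _ _ _).1 hv
  change discMonomial a b ∈ _
  rw [discMonomial_eq_discLift]
  exact discLift_mem_span_discPolynomial _ _

end ClosedDisc

section SubLaplacian

open Polynomial ComplexConjugate Filter

/-- The initial velocity of `horizontalCurve α w`. -/
noncomputable def horizontalVelocity (α : ℝ) (w : ClosedDisc) : ℂ :=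
  √(1 - ‖(w : ℂ)‖ ^ 2) * Complex.exp (α * Complex.I)

lemma norm_sq_horizontalVelocity (α : ℝ) (w : ClosedDisc) :
    ‖horizontalVelocity α w‖ ^ 2 = 1 - ‖(w : ℂ)‖ ^ 2 := by
  rw [horizontalVelocity, norm_mul, Complex.norm_exp_ofReal_mul_I, mul_one, Complex.norm_real,
    norm_eq_abs, sq_abs]
  exact sq_sqrt (sub_nonneg.2 (pow_le_one₀ (norm_nonneg _) (mem_closedBall_zero_iff.1 w.2)))

/-- The first coordinate of a horizontal great circle of `SU(2) = S³ ⊆ ℂ²` issued from a point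
over `w`, in the horizontal direction of angle `α`. -/
noncomputable def horizontalCurve (α : ℝ) (w : ClosedDisc) (θ : ℝ) : ClosedDisc :=
  ⟨cos θ * w + sin θ * horizontalVelocity α w, by
    rw [mem_closedBall_zero_iff]
    refine (norm_add_le _ _).trans ?_
    rw [norm_mul, norm_mul, Complex.norm_real, Complex.norm_real, norm_eq_abs, norm_eq_abs]
    nlinarith [sq_nonneg (|cos θ| - ‖(w : ℂ)‖), sq_nonneg (|sin θ| - ‖horizontalVelocity α w‖),
      sq_abs (cos θ), sq_abs (sin θ), sin_sq_add_cos_sq θ, norm_sq_horizontalVelocity α w]⟩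

/-- The graph of the sub-Laplacian of `SU(2)` acting on functions of `w`: the sum of the second
derivatives in two orthogonal horizontal directions, encoded as the set of pairs `(u, Δu)`. -/
noncomputable def subLaplacianGraph : Submodule ℂ (C(ClosedDisc, ℂ) × C(ClosedDisc, ℂ)) where
  carrier := {p | ∀ w, ∃ a b : ℂ, a + b = p.2 w ∧
    HasSecondDerivAt (fun θ => p.1 (horizontalCurve 0 w θ)) a 0 ∧
    HasSecondDerivAt (fun θ => p.1 (horizontalCurve (π / 2) w θ)) b 0}
  zero_mem' w := ⟨0, 0, add_zero 0,
    ⟨0, .of_forall fun _ => hasDerivAt_const _ _, hasDerivAt_const _ _⟩,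
    ⟨0, .of_forall fun _ => hasDerivAt_const _ _, hasDerivAt_const _ _⟩⟩
  add_mem' {p q} hp hq w := by
    obtain ⟨a, b, hab, ha, hb⟩ := hp w
    obtain ⟨a', b', hab', ha', hb'⟩ := hq w
    refine ⟨a + a', b + b', ?_, ha.add ha', hb.add hb'⟩
    rw [add_add_add_comm, hab, hab']
    rfl
  smul_mem' c p hp w := by
    obtain ⟨a, b, hab, ha, hb⟩ := hp w
    refine ⟨c * a, c * b, ?_, ha.clm_comp (ContinuousLinearMap.mul ℝ ℂ c),
      hb.clm_comp (ContinuousLinearMap.mul ℝ ℂ c)⟩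
    rw [← mul_add, hab]
    rfl

lemma horizontalCurve_zero (α : ℝ) (w : ClosedDisc) : horizontalCurve α w 0 = w := by
  simp [horizontalCurve]

-- A minimum of `Re u` is a minimum along both curves through it.
lemma re_nonneg_of_mem_subLaplacianGraph {u v : C(ClosedDisc, ℂ)}
    (huv : (u, v) ∈ subLaplacianGraph) {w : ClosedDisc} (hw : ∀ w', (u w).re ≤ (u w').re) :
    0 ≤ (v w).re := by
  have nonneg_along {α : ℝ} {a : ℂ}
      (ha : HasSecondDerivAt (fun θ => u (horizontalCurve α w θ)) a 0) : 0 ≤ a.re := by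
    refine (ha.clm_comp Complex.reCLM).nonneg_of_isLocalMin (Eventually.of_forall fun θ => ?_)
    simpa [horizontalCurve_zero] using hw (horizontalCurve α w θ)
  obtain ⟨a, b, hab, ha, hb⟩ := huv w
  rw [← hab, Complex.add_re]
  exact add_nonneg (nonneg_along ha) (nonneg_along hb)

lemma hasSecondDerivAt_pow_mul_pow {f f' g g' : ℝ → ℂ} {f'' g'' : ℂ} {x : ℝ}
    (hf : ∀ y, HasDerivAt f (f' y) y) (hf' : HasDerivAt f' f'' x)
    (hg : ∀ y, HasDerivAt g (g' y) y) (hg' : HasDerivAt g' g'' x) (a b : ℕ) :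
    HasSecondDerivAt (fun y => f y ^ a * g y ^ b)
      (a * ((a - 1 : ℕ) * f x ^ (a - 1 - 1) * f' x ^ 2 + f x ^ (a - 1) * f'') * g x ^ b +
        f x ^ a * (b * ((b - 1 : ℕ) * g x ^ (b - 1 - 1) * g' x ^ 2 + g x ^ (b - 1) * g'')) +
        2 * (a * f x ^ (a - 1) * f' x) * (b * g x ^ (b - 1) * g' x)) x := by
  refine ⟨_, .of_forall fun y => ((hf y).fun_pow a).fun_mul ((hg y).fun_pow b), ?_⟩
  have hfa := (((hf x).fun_pow (a - 1)).const_mul (a : ℂ)).fun_mul hf'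
  have hgb := (((hg x).fun_pow (b - 1)).const_mul (b : ℂ)).fun_mul hg'
  refine ((hfa.fun_mul ((hg x).fun_pow b)).fun_add
    (((hf x).fun_pow a).fun_mul hgb)).congr_deriv ?_
  ring

lemma hasDerivAt_cos_mul_add_sin_mul (c d : ℂ) (θ : ℝ) :
    HasDerivAt (fun θ : ℝ => (cos θ : ℂ) * c + sin θ * d) (cos θ * d + sin θ * -c) θ := by
  refine (((hasDerivAt_cos θ).ofReal_comp.mul_const c).fun_add
    ((hasDerivAt_sin θ).ofReal_comp.mul_const d)).congr_deriv ?_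
  push_cast
  ring

lemma natCast_mul_pow_pred_mul {R : Type*} [Semiring R] (a : ℕ) (z : R) :
    (a : R) * (z ^ (a - 1) * z) = a * z ^ a := by
  rcases a with _ | a
  · simp
  · rw [Nat.add_sub_cancel, pow_succ]

lemma hasSecondDerivAt_discMonomial (a b : ℕ) (α : ℝ) (w : ClosedDisc) :
    HasSecondDerivAt (fun θ => discMonomial a b (horizontalCurve α w θ))
      (a * (a - 1 : ℕ) * (w : ℂ) ^ (a - 1 - 1) * conj (w : ℂ) ^ b * horizontalVelocity α w ^ 2 +
        b * (b - 1 : ℕ) * (w : ℂ) ^ a * conj (w : ℂ) ^ (b - 1 - 1) *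
          conj (horizontalVelocity α w) ^ 2 +
        2 * a * b * (w : ℂ) ^ (a - 1) * conj (w : ℂ) ^ (b - 1) *
          (horizontalVelocity α w * conj (horizontalVelocity α w)) -
        (a + b) * discMonomial a b w) 0 := by
  set v := horizontalVelocity α w
  have second_deriv := hasSecondDerivAt_pow_mul_pow (hasDerivAt_cos_mul_add_sin_mul w v)
    (hasDerivAt_cos_mul_add_sin_mul v (-(w : ℂ)) 0)
    (hasDerivAt_cos_mul_add_sin_mul (conj (w : ℂ)) (conj v))
    (hasDerivAt_cos_mul_add_sin_mul (conj v) (-conj (w : ℂ)) 0) a b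
  convert second_deriv using 1
  · funext θ
    simp only [discMonomial_apply, horizontalCurve, map_add, map_mul, Complex.conj_ofReal, v]
  · simp only [discMonomial_apply, cos_zero, sin_zero, Complex.ofReal_one, Complex.ofReal_zero,
      one_mul, zero_mul, add_zero]
    linear_combination conj (w : ℂ) ^ b * natCast_mul_pow_pred_mul a (w : ℂ) +
      (w : ℂ) ^ a * natCast_mul_pow_pred_mul b (conj (w : ℂ))

-- The terms in `v ^ 2` cancel because the velocities in the two directions differ by a factor `I`.
lemma discMonomial_mem_subLaplacianGraph (a b : ℕ) :
    (discMonomial a b, (4 * a * b : ℂ) • ((1 - discMonomial 1 1) * discMonomial (a - 1) (b - 1)) -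
      (2 * (a + b) : ℂ) • discMonomial a b) ∈ subLaplacianGraph := by
  intro w
  refine ⟨_, _, ?_, hasSecondDerivAt_discMonomial a b 0 w,
    hasSecondDerivAt_discMonomial a b (π / 2) w⟩
  have velocity_pi_div_two : horizontalVelocity (π / 2) w = horizontalVelocity 0 w * Complex.I := by
    simp [horizontalVelocity, Complex.exp_pi_div_two_mul_I]
  have velocity_sq : horizontalVelocity 0 w * conj (horizontalVelocity 0 w) =
      1 - w * conj (w : ℂ) := by
    rw [Complex.mul_conj', Complex.mul_conj']
    exact_mod_cast congrArg Complex.ofReal (norm_sq_horizontalVelocity 0 w)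
  simp only [velocity_pi_div_two, map_mul, Complex.conj_I, ContinuousMap.sub_apply,
    ContinuousMap.smul_apply, ContinuousMap.mul_apply, ContinuousMap.one_apply, smul_eq_mul,
    discMonomial_apply, pow_one]
  set v := horizontalVelocity 0 w
  linear_combination (a * (a - 1 : ℕ) * (w : ℂ) ^ (a - 1 - 1) * conj (w : ℂ) ^ b * v ^ 2 +
      b * (b - 1 : ℕ) * (w : ℂ) ^ a * conj (w : ℂ) ^ (b - 1 - 1) * conj v ^ 2 -
      2 * a * b * (w : ℂ) ^ (a - 1) * conj (w : ℂ) ^ (b - 1) * (v * conj v)) * Complex.I_sq +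
    4 * a * b * (w : ℂ) ^ (a - 1) * conj (w : ℂ) ^ (b - 1) * velocity_sq

/-- The polynomial differential operator `4 (X (1 - X) p'' + (m + 1 - (m + 2) X) p') - 2 m p` to
which the sub-Laplacian reduces on functions `p(|w|²) wⁿ` with `|n| = m`. -/
noncomputable def radialOperator (m : ℕ) : ℝ[X] →ₗ[ℝ] ℝ[X] :=
  (4 : ℝ) • (LinearMap.mulLeft ℝ (X * (1 - X)) ∘ₗ derivative ∘ₗ derivative +
    LinearMap.mulLeft ℝ (C (m + 1 : ℝ) - C (m + 2 : ℝ) * X) ∘ₗ derivative) -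
  (2 * m : ℝ) • LinearMap.id

lemma radialOperator_C_mul_X_pow (m i : ℕ) (c : ℝ) :
    radialOperator m (C c * X ^ i) = C (c * (4 * i * (m + i))) * X ^ (i - 1) -
      C (c * (4 * i * (m + i + 1) + 2 * m)) * X ^ i := by
  simp only [radialOperator, LinearMap.sub_apply, LinearMap.smul_apply, LinearMap.add_apply,
    LinearMap.comp_apply, LinearMap.mulLeft_apply, LinearMap.id_apply, smul_eq_C_mul,
    derivative_C_mul_X_pow]
  rcases i with _ | _ | i <;>
  · simp only [map_add, map_mul, map_natCast, map_ofNat, map_one]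
    push_cast [Nat.add_sub_cancel]
    ring

lemma discLift_mem_subLaplacianGraph (n : ℤ) (p : ℝ[X]) :
    (discLift n p, discLift n (radialOperator n.natAbs p)) ∈ subLaplacianGraph := by
  induction p using Polynomial.induction_on' with
  | add p q hp hq => simpa using add_mem hp hq
  | monomial i c =>
    rw [← C_mul_X_pow_eq_monomial, discLift_C_mul_X_pow]
    convert Submodule.smul_mem _ (c : ℂ)
      (discMonomial_mem_subLaplacianGraph (n.toNat + i) ((-n).toNat + i)) using 1
    have toNat_mul : (n.toNat : ℂ) * (-n).toNat = 0 := by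
      rcases le_total 0 n with h | h <;> simp [h]
    have natAbs_eq : (n.natAbs : ℂ) = n.toNat + (-n).toNat := by
      exact_mod_cast congrArg (Nat.cast : ℕ → ℂ) n.toNat_add_toNat_neg_eq_natAbs.symm
    rw [radialOperator_C_mul_X_pow, map_sub, discLift_C_mul_X_pow, discLift_C_mul_X_pow]
    refine Prod.ext rfl (ContinuousMap.ext fun w => ?_)
    simp only [ContinuousMap.sub_apply, ContinuousMap.smul_apply, ContinuousMap.mul_apply,
      ContinuousMap.one_apply, smul_eq_mul, discMonomial_apply, Prod.smul_snd]
    push_cast [natAbs_eq]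
    rcases i with _ | i
    · simp only [Nat.cast_zero]
      linear_combination (-4 * (c : ℂ) * (1 - w * conj (w : ℂ)) *
        (w : ℂ) ^ (n.toNat - 1) * conj (w : ℂ) ^ ((-n).toNat - 1)) * toNat_mul
    · simp only [← add_assoc, Nat.add_sub_cancel]
      push_cast
      linear_combination (-4 * (c : ℂ) * (1 - w * conj (w : ℂ)) *
        (w : ℂ) ^ (n.toNat + i) * conj (w : ℂ) ^ ((-n).toNat + i)) * toNat_mul

/-- The eigenvalue `4k(k + |n| + 1) + 2|n|` of `-Δ` on `discPolynomial (n, k)`. -/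
noncomputable def heatEigenvalue (x : ℤ × ℕ) : ℝ :=
  4 * x.2 * (x.2 + x.1.natAbs + 1) + 2 * x.1.natAbs

lemma discPolynomial_mem_subLaplacianGraph (x : ℤ × ℕ) :
    (discPolynomial x, (-heatEigenvalue x : ℂ) • discPolynomial x) ∈ subLaplacianGraph := by
  have mem := discLift_mem_subLaplacianGraph x.1 (shiftedJacobi x.1.natAbs x.2)
  have eigen : radialOperator x.1.natAbs (shiftedJacobi x.1.natAbs x.2) =
      (-heatEigenvalue x) • shiftedJacobi x.1.natAbs x.2 := by
    have ode := hypergeometric_ode_shiftedJacobi x.1.natAbs x.2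
    simp only [radialOperator, LinearMap.sub_apply, LinearMap.smul_apply, LinearMap.add_apply,
      LinearMap.comp_apply, LinearMap.mulLeft_apply, LinearMap.id_apply, ode, smul_eq_C_mul,
      heatEigenvalue]
    simp only [map_neg, map_add, map_mul, map_natCast, map_ofNat, map_one]
    ring
  rw [eigen, map_smul, ← algebraMap_smul ℂ] at mem
  simpa [discPolynomial] using mem

end SubLaplacian

section PositiveMultiplier

open Filter Topology

/-- The diagonal operator `∑ c x φ_x ↦ ∑ g x c x φ_x` on the span of the disc polynomials preserves
nonnegativity of the real part. -/
def IsPositiveMultiplier (g : ℤ × ℕ → ℝ) : Prop :=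
  ∀ (S : Finset (ℤ × ℕ)) (c : ℤ × ℕ → ℂ),
    (∀ w, 0 ≤ ((∑ x ∈ S, c x • discPolynomial x) w).re) →
      ∀ w, 0 ≤ ((∑ x ∈ S, (g x * c x) • discPolynomial x) w).re

namespace IsPositiveMultiplier

lemma one : IsPositiveMultiplier 1 := fun S c h w => by simpa using h w

lemma mul {g h : ℤ × ℕ → ℝ} (hg : IsPositiveMultiplier g) (hh : IsPositiveMultiplier h) :
    IsPositiveMultiplier (g * h) := fun S c hc w => by
  simpa [mul_assoc] using hg S _ (hh S c hc) w

lemma pow {g : ℤ × ℕ → ℝ} (hg : IsPositiveMultiplier g) : ∀ N : ℕ, IsPositiveMultiplier (g ^ N)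
  | 0 => by simpa using one
  | N + 1 => by simpa [pow_succ] using (hg.pow N).mul hg

lemma of_tendsto {ι : Type*} {l : Filter ι} [l.NeBot] {g : ι → ℤ × ℕ → ℝ} {g' : ℤ × ℕ → ℝ}
    (hg : ∀ i, IsPositiveMultiplier (g i)) (hlim : Tendsto g l (𝓝 g')) :
    IsPositiveMultiplier g' := by
  intro S c hc w
  have tendsto_coeff (x : ℤ × ℕ) : Tendsto (fun i => ((g i x : ℝ) : ℂ)) l (𝓝 (g' x)) :=
    (Complex.continuous_ofReal.tendsto _).comp (tendsto_pi_nhds.1 hlim x)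
  have tendsto_sum : Tendsto (fun i => ((∑ x ∈ S, (g i x * c x) • discPolynomial x) w).re) l
      (𝓝 ((∑ x ∈ S, (g' x * c x) • discPolynomial x) w).re) := by
    simp only [ContinuousMap.sum_apply, ContinuousMap.smul_apply]
    exact (Complex.continuous_re.tendsto _).comp <| tendsto_finsetSum _ fun x _ =>
      ((tendsto_coeff x).mul_const _).smul_const _
  exact ge_of_tendsto' tendsto_sum fun i => hg i S c hc w

end IsPositiveMultiplier

lemma heatEigenvalue_nonneg (x : ℤ × ℕ) : 0 ≤ heatEigenvalue x := by
  unfold heatEigenvalue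
  positivity

-- `v = (1 - sΔ)⁻¹ u` satisfies `v = u + sΔv`, and `Re Δv ≥ 0` where `Re v` is minimal.
lemma isPositiveMultiplier_resolvent {s : ℝ} (hs : 0 ≤ s) :
    IsPositiveMultiplier fun x => (1 + s * heatEigenvalue x)⁻¹ := by
  intro S c hc
  set d : ℤ × ℕ → ℂ := fun x => ((1 + s * heatEigenvalue x)⁻¹ : ℝ) * c x
  set v := ∑ x ∈ S, d x • discPolynomial x
  set v' := ∑ x ∈ S, d x • (-heatEigenvalue x : ℂ) • discPolynomial x
  have mem_graph : (v, v') ∈ subLaplacianGraph := by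
    rw [show (v, v') = ∑ x ∈ S, d x • (discPolynomial x,
      (-heatEigenvalue x : ℂ) • discPolynomial x) by simp [v, v', Prod.ext_iff, Prod.fst_sum,
        Prod.snd_sum]]
    exact sum_mem fun x _ => Submodule.smul_mem _ _ (discPolynomial_mem_subLaplacianGraph x)
  have resolvent_eq : v = ∑ x ∈ S, c x • discPolynomial x + (s : ℂ) • v' := by
    rw [Finset.smul_sum, ← Finset.sum_add_distrib]
    refine Finset.sum_congr rfl fun x _ => ?_
    have : (1 + s * heatEigenvalue x : ℂ) ≠ 0 := by
      exact_mod_cast (by have := heatEigenvalue_nonneg x; positivity :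
        1 + s * heatEigenvalue x ≠ 0)
    rw [smul_smul, smul_smul, ← add_smul]
    congr 1
    simp only [d]
    push_cast
    field_simp
    ring
  obtain ⟨w₀, -, hw₀⟩ := isCompact_univ.exists_isMinOn ⟨(0 : ClosedDisc), trivial⟩
    (Complex.continuous_re.comp v.continuous).continuousOn
  intro w
  calc 0 ≤ ((∑ x ∈ S, c x • discPolynomial x) w₀).re + s * (v' w₀).re :=
        add_nonneg (hc w₀) <| mul_nonneg hs <|
          re_nonneg_of_mem_subLaplacianGraph mem_graph fun w => hw₀ (Set.mem_univ w)
    _ = (v w₀).re := by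
        rw [resolvent_eq, ContinuousMap.add_apply, ContinuousMap.smul_apply, Complex.add_re,
          smul_eq_mul, Complex.re_ofReal_mul]
    _ ≤ (v w).re := hw₀ (Set.mem_univ w)

lemma isPositiveMultiplier_exp {t : ℝ} (ht : 0 ≤ t) :
    IsPositiveMultiplier fun x => exp (-heatEigenvalue x * t) := by
  refine .of_tendsto (l := atTop)
    (fun N : ℕ => (isPositiveMultiplier_resolvent (div_nonneg ht N.cast_nonneg)).pow N)
    (tendsto_pi_nhds.2 fun x => ?_)
  have tendsto_inv :=
    (tendsto_one_add_div_pow_exp (t * heatEigenvalue x)).inv₀ (exp_ne_zero _)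
  rw [← exp_neg] at tendsto_inv
  convert tendsto_inv using 2 with N
  · simp only [Pi.pow_apply, inv_pow]
    ring_nf
  · ring_nf

end PositiveMultiplier

section CylinderMeasure

open MeasureTheory Polynomial

/-- The domain `[0, π/2] × [0, 2π]` of the cylindric coordinates `(r, z)`. -/
def cylinderBox : Set (ℝ × ℝ) := Set.Icc 0 (π / 2) ×ˢ Set.Icc 0 (2 * π)

/-- The normalised Haar measure of `SU(2)` in cylindric coordinates, with density
`sin (2 * r) / (2 * π)` on `cylinderBox`. -/
noncomputable def cylinderMeasure : Measure (ℝ × ℝ) :=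
  (volume.restrict cylinderBox).withDensity fun p => ENNReal.ofReal (sin (2 * p.1) / (2 * π))

lemma isCompact_cylinderBox : IsCompact cylinderBox := isCompact_Icc.prod isCompact_Icc

lemma cylinderMeasure_restrict : cylinderMeasure.restrict cylinderBox = cylinderMeasure := by
  rw [cylinderMeasure, restrict_withDensity isCompact_cylinderBox.measurableSet,
    Measure.restrict_restrict isCompact_cylinderBox.measurableSet, Set.inter_self]

lemma ae_mem_cylinderBox : ∀ᵐ p ∂cylinderMeasure, p ∈ cylinderBox :=
  cylinderMeasure_restrict ▸ ae_restrict_mem isCompact_cylinderBox.measurableSet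

instance : IsFiniteMeasure cylinderMeasure :=
  isFiniteMeasure_withDensity_ofReal
    (ContinuousOn.integrableOn_compact isCompact_cylinderBox (by fun_prop)).2

lemma integrable_cylinderMeasure {E : Type*} [NormedAddCommGroup E] {F : ℝ × ℝ → E}
    (hF : ContinuousOn F cylinderBox) : Integrable F cylinderMeasure := by
  have := hF.integrableOn_compact (μ := cylinderMeasure) isCompact_cylinderBox
  rwa [IntegrableOn, cylinderMeasure_restrict] at this

lemma integral_cylinderMeasure {E : Type*} [NormedAddCommGroup E] [NormedSpace ℝ E]
    (F : ℝ × ℝ → E) : ∫ p, F p ∂cylinderMeasure =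
      ∫ p in cylinderBox, (sin (2 * p.1) / (2 * π)) • F p := by
  rw [cylinderMeasure, integral_withDensity_eq_integral_toReal_smul (by fun_prop)
    (.of_forall fun _ => ENNReal.ofReal_lt_top)]
  refine setIntegral_congr_fun isCompact_cylinderBox.measurableSet fun p hp => ?_
  have sin_nonneg : 0 ≤ sin (2 * p.1) :=
    sin_nonneg_of_nonneg_of_le_pi (by linarith [hp.1.1]) (by linarith [hp.1.2])
  simp only [ENNReal.toReal_ofReal (div_nonneg sin_nonneg two_pi_pos.le)]

lemma integral_cylinderMeasure_eq_intervalIntegral {F : ℝ × ℝ → ℝ}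
    (hF : ContinuousOn F cylinderBox) :
    ∫ p, F p ∂cylinderMeasure =
      1 / (2 * π) * ∫ r in 0..π / 2, ∫ z in 0..2 * π, F (r, z) * sin (2 * r) := by
  have integrable : IntegrableOn (fun p : ℝ × ℝ => F p * sin (2 * p.1)) cylinderBox
      (volume.prod volume) :=
    (hF.mul (by fun_prop)).integrableOn_compact isCompact_cylinderBox
  calc ∫ p, F p ∂cylinderMeasure
      = 1 / (2 * π) * ∫ p in cylinderBox, F p * sin (2 * p.1) ∂volume.prod volume := by
        rw [integral_cylinderMeasure, ← integral_const_mul]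
        congr 1 with p
        rw [smul_eq_mul]
        ring
    _ = _ := by
        rw [cylinderBox, setIntegral_prod _ integrable]
        simp only [integral_Icc_eq_integral_Ioc, intervalIntegral.integral_of_le two_pi_pos.le,
          intervalIntegral.integral_of_le pi_div_two_pos.le]

lemma integral_eval_cos_sq_mul_sin_two_mul (p : ℝ[X]) :
    ∫ r in 0..π / 2, p.eval (cos r ^ 2) * sin (2 * r) = unitIntegral p := by
  have hasDerivAt_cos_sq (r : ℝ) : HasDerivAt (fun r => cos r ^ 2) (-sin (2 * r)) r := by
    refine ((hasDerivAt_cos r).fun_pow 2).congr_deriv ?_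
    rw [sin_two_mul]
    push_cast
    ring
  have substitution := intervalIntegral.integral_comp_mul_deriv (a := 0) (b := π / 2)
    (fun r _ => hasDerivAt_cos_sq r) (by fun_prop) p.continuous
  simp only [cos_zero, cos_pi_div_two, Function.comp_apply, mul_neg,
    intervalIntegral.integral_neg] at substitution
  norm_num at substitution
  rw [intervalIntegral.integral_symm 0 1, neg_inj] at substitution
  exact substitution

lemma integral_exp_int_mul_mul_I (n : ℤ) :
    ∫ z in 0..2 * π, Complex.exp (n * z * Complex.I) = if n = 0 then 2 * (π : ℂ) else 0 := by
  split_ifs with hn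
  · simp [hn]
  · have ne_zero : (n : ℂ) * Complex.I ≠ 0 := by simp [hn]
    have periodic : (n : ℂ) * Complex.I * ((2 * π : ℝ) : ℂ) = n * (2 * π * Complex.I) := by
      push_cast
      ring
    simp only [mul_right_comm (n : ℂ) _ Complex.I]
    rw [integral_exp_mul_complex ne_zero, periodic, Complex.exp_int_mul_two_pi_mul_I]
    simp

/-- Integration of continuous functions on the disc against `cylinderMeasure`, through
`discPoint`. -/
noncomputable def discIntegral : C(ClosedDisc, ℂ) →L[ℂ] ℂ :=
  LinearMap.mkContinuous
    { toFun u := ∫ p, u (discPoint p) ∂cylinderMeasure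
      map_add' u v := integral_add
        (integrable_cylinderMeasure (u.continuous.comp continuous_discPoint).continuousOn)
        (integrable_cylinderMeasure (v.continuous.comp continuous_discPoint).continuousOn)
      map_smul' c u := integral_const_mul c _ }
    (cylinderMeasure.real Set.univ) fun u => by
      rw [mul_comm]
      exact norm_integral_le_of_norm_le_const (.of_forall fun p => u.norm_coe_le_norm _)

lemma discIntegral_apply (u : C(ClosedDisc, ℂ)) :
    discIntegral u = ∫ p, u (discPoint p) ∂cylinderMeasure := rfl

lemma discIntegral_discLift_mul_discLift (n m : ℤ) (p q : ℝ[X]) :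
    discIntegral (discLift n p * discLift m q) =
      if n + m = 0 then (unitIntegral (X ^ n.natAbs * p * q) : ℂ) else 0 := by
  have split (s : ℝ × ℝ) : (sin (2 * s.1) / (2 * π)) •
      (discLift n p * discLift m q) (discPoint s) =
        ((cos s.1 ^ (n.natAbs + m.natAbs) * (p * q).eval (cos s.1 ^ 2) * sin (2 * s.1) : ℝ) : ℂ) *
          ((2 * π : ℂ)⁻¹ * Complex.exp ((n + m : ℤ) * s.2 * Complex.I)) := by
    rw [ContinuousMap.mul_apply, discLift_discPoint, discLift_discPoint, Complex.real_smul,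
      Int.cast_add, add_mul, add_mul, Complex.exp_add, eval_mul]
    push_cast
    ring
  rw [discIntegral_apply, integral_cylinderMeasure]
  simp only [split]
  rw [cylinderBox, Measure.volume_eq_prod, setIntegral_prod_mul (L := ℂ)
    (fun r : ℝ => ((cos r ^ (n.natAbs + m.natAbs) * (p * q).eval (cos r ^ 2) *
      sin (2 * r) : ℝ) : ℂ))
    (fun z : ℝ => (2 * π : ℂ)⁻¹ * Complex.exp ((n + m : ℤ) * z * Complex.I)),
    integral_const_mul, integral_Icc_eq_integral_Ioc, integral_Icc_eq_integral_Ioc,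
    ← intervalIntegral.integral_of_le pi_div_two_pos.le,
    ← intervalIntegral.integral_of_le two_pi_pos.le, integral_exp_int_mul_mul_I]
  split_ifs with h
  · have natAbs_eq : m.natAbs = n.natAbs := by omega
    have two_pi_ne_zero : (2 * π : ℂ) ≠ 0 := by exact_mod_cast two_pi_pos.ne'
    rw [inv_mul_cancel₀ two_pi_ne_zero, mul_one, natAbs_eq, mul_assoc (X ^ _),
      ← integral_eval_cos_sq_mul_sin_two_mul, intervalIntegral.integral_ofReal]
    simp only [eval_mul, eval_pow, eval_X, ← two_mul, pow_mul]
  · simp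

lemma discIntegral_discPolynomial_mul_discPolynomial (x y : ℤ × ℕ) :
    discIntegral (discPolynomial x * discPolynomial y) =
      if x = (-y.1, y.2) then 1 / (2 * (y.2 : ℂ) + y.1.natAbs + 1) else 0 := by
  obtain ⟨n, k⟩ := x
  obtain ⟨m, j⟩ := y
  rw [discPolynomial, discPolynomial, discIntegral_discLift_mul_discLift]
  by_cases hn : n = -m
  · subst hn
    by_cases hk : k = j
    · subst hk
      simp [unitIntegral_shiftedJacobi_mul_self, -Nat.cast_natAbs]
    · simp [unitIntegral_shiftedJacobi_mul_of_ne _ hk, hk]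
  · rw [if_neg (by omega), if_neg (by simp [hn])]

end CylinderMeasure

section HeatKernel

open Filter Topology Polynomial MeasureTheory

/-- The degree of `discPolynomial x` in `w` and `conj w`. -/
def discDegree (x : ℤ × ℕ) : ℕ := 2 * x.2 + x.1.natAbs

/-- The coefficient of `discPolynomial x` in the expansion of the heat kernel at time `t`. -/
noncomputable def heatWeight (t : ℝ) (x : ℤ × ℕ) : ℝ :=
  (discDegree x + 1) * exp (-heatEigenvalue x * t)

/-- The heat kernel at time `t` as a function on the closed disc; `heatP` is its expression in the
coordinates `(r, z)`. -/
noncomputable def discHeatKernel (t : ℝ) : C(ClosedDisc, ℂ) :=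
  ∑' x, (heatWeight t x : ℂ) • discPolynomial x

lemma tendsto_discDegree_cofinite_atTop : Tendsto discDegree cofinite atTop := by
  rw [← Nat.cofinite_eq_atTop]
  refine .cofinite_of_finite_preimage_singleton fun N => ?_
  refine Set.Finite.subset ((Set.finite_Icc (-N : ℤ) N).prod (Set.finite_Iic N)) fun x hx => ?_
  have hx : 2 * x.2 + x.1.natAbs = N := hx
  exact ⟨⟨by omega, by omega⟩, Set.mem_Iic.2 (by omega)⟩

lemma summable_pow_discDegree {q : ℝ} (hq₀ : 0 ≤ q) (hq₁ : q < 1) :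
    Summable fun x => q ^ discDegree x := by
  have summable_int : Summable fun n : ℤ => q ^ n.natAbs := by
    apply Summable.of_nat_of_neg <;> simpa using summable_geometric_of_lt_one hq₀ hq₁
  have summable_nat : Summable fun k : ℕ => (q ^ 2) ^ k :=
    summable_geometric_of_lt_one (by positivity) (pow_lt_one₀ hq₀ hq₁ two_ne_zero)
  refine (summable_int.mul_of_nonneg summable_nat (fun n => by positivity)
    fun k => by positivity).congr fun x => ?_
  rw [discDegree, pow_add, pow_mul, mul_comm]

lemma abs_shiftedJacobiCoeff_le {m k i : ℕ} (hi : i ≤ k) :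
    |shiftedJacobiCoeff m k i| ≤ k.choose i * (2 * k + m : ℕ) ^ k := by
  have choose_le : (m + k + i).choose k ≤ (2 * k + m) ^ k :=
    (Nat.choose_le_choose k (by omega)).trans (Nat.choose_le_pow _ _)
  rw [shiftedJacobiCoeff, abs_mul, abs_mul, abs_neg_one_pow, one_mul, Nat.abs_cast, Nat.abs_cast]
  gcongr
  exact_mod_cast choose_le

lemma norm_discPolynomial_le (x : ℤ × ℕ) :
    ‖discPolynomial x‖ ≤ (2 * discDegree x : ℝ) ^ x.2 := by
  rw [discPolynomial, shiftedJacobi, map_sum]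
  calc ‖∑ i ∈ Finset.range (x.2 + 1),
          discLift x.1 (C (shiftedJacobiCoeff x.1.natAbs x.2 i) * X ^ i)‖
      ≤ ∑ i ∈ Finset.range (x.2 + 1), (x.2.choose i : ℝ) * discDegree x ^ x.2 := by
        refine norm_sum_le_of_le _ fun i hi => ?_
        rw [discLift_C_mul_X_pow, norm_smul, Complex.norm_real, norm_eq_abs]
        exact (mul_le_of_le_one_right (abs_nonneg _) (norm_discMonomial_le _ _)).trans
          (abs_shiftedJacobiCoeff_le (Finset.mem_range_succ_iff.1 hi))
    _ = (2 * discDegree x : ℝ) ^ x.2 := by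
        rw [← Finset.sum_mul, mul_pow]
        congr 1
        exact_mod_cast Nat.sum_range_choose x.2

lemma discDegree_mul_le_heatEigenvalue (x : ℤ × ℕ) :
    2 * discDegree x * (x.2 + 1) ≤ heatEigenvalue x := by
  have : (0 : ℝ) ≤ x.2 * x.1.natAbs := by positivity
  rw [heatEigenvalue, discDegree]
  push_cast
  linarith

lemma heatWeight_nonneg (t : ℝ) (x : ℤ × ℕ) : 0 ≤ heatWeight t x := by
  unfold heatWeight
  positivity

lemma norm_heatWeight_smul_discPolynomial_le {t : ℝ} (ht : 0 ≤ t) (x : ℤ × ℕ) :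
    ‖(heatWeight t x : ℂ) • discPolynomial x‖ ≤
      ((2 * discDegree x + 1) * exp (-t) ^ (2 * discDegree x)) ^ (x.2 + 1) := by
  set N := discDegree x
  have weight_le : heatWeight t x ≤ (2 * N + 1) * (exp (-t) ^ (2 * N)) ^ (x.2 + 1) := by
    have exponent_le :=
      mul_le_mul_of_nonneg_right (neg_le_neg (discDegree_mul_le_heatEigenvalue x)) ht
    rw [← pow_mul, ← exp_nat_mul, heatWeight]
    refine mul_le_mul ?_ (exp_le_exp.2 (exponent_le.trans_eq ?_)) (exp_pos _).le (by positivity)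
    · linarith [(Nat.cast_nonneg N : (0 : ℝ) ≤ N)]
    · push_cast
      ring
  calc ‖(heatWeight t x : ℂ) • discPolynomial x‖
      = heatWeight t x * ‖discPolynomial x‖ := by
        rw [norm_smul, Complex.norm_real, norm_of_nonneg (heatWeight_nonneg t x)]
    _ ≤ (2 * N + 1) * (exp (-t) ^ (2 * N)) ^ (x.2 + 1) * (2 * N + 1) ^ x.2 := by
        gcongr
        refine (norm_discPolynomial_le x).trans ?_
        gcongr
        linarith
    _ = ((2 * N + 1) * exp (-t) ^ (2 * N)) ^ (x.2 + 1) := by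
        rw [mul_pow, pow_succ (2 * N + 1 : ℝ)]
        ring

lemma summable_heatWeight_smul_discPolynomial {t : ℝ} (ht : 0 < t) :
    Summable fun x => (heatWeight t x : ℂ) • discPolynomial x := by
  set q := exp (-t)
  have hq₁ : q < 1 := exp_lt_one_iff.2 (neg_lt_zero.2 ht)
  have hq₀ : 0 ≤ q := (exp_pos _).le
  have tendsto_zero : Tendsto (fun N : ℕ => (2 * N + 1) * q ^ N) atTop (𝓝 0) := by
    simpa [add_mul, mul_assoc] using
      ((tendsto_self_mul_const_pow_of_lt_one hq₀ hq₁).const_mul 2).add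
        (tendsto_pow_atTop_nhds_zero_of_lt_one hq₀ hq₁)
  refine (summable_pow_discDegree hq₀ hq₁).of_norm_bounded_eventually ?_
  filter_upwards [tendsto_discDegree_cofinite_atTop.eventually
    (tendsto_zero.eventually_le_const one_pos)] with x hx
  have base_le : (2 * discDegree x + 1) * q ^ (2 * discDegree x) ≤ q ^ discDegree x := by
    rw [two_mul (discDegree x), pow_add, ← mul_assoc]
    exact mul_le_of_le_one_left (by positivity) hx
  calc ‖(heatWeight t x : ℂ) • discPolynomial x‖
      ≤ ((2 * discDegree x + 1) * q ^ (2 * discDegree x)) ^ (x.2 + 1) :=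
        norm_heatWeight_smul_discPolynomial_le ht.le x
    _ ≤ (q ^ discDegree x) ^ (x.2 + 1) := by gcongr
    _ ≤ q ^ discDegree x :=
        pow_le_of_le_one (by positivity) (pow_le_one₀ hq₀ hq₁.le) x.2.succ_ne_zero

lemma heatTerm_eq_heatWeight_smul (t r z : ℝ) (n : ℤ) (k : ℕ) :
    heatTerm t r z n k =
      ((heatWeight t (n, k) : ℂ) • discPolynomial (n, k)) (discPoint (r, z)) := by
  have cos_pow_mul_jacobiP : cos r ^ n.natAbs * jacobiP k n.natAbs (cos (2 * r)) =
      cos r ^ n.natAbs * (shiftedJacobi n.natAbs k).eval (cos r ^ 2) := by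
    by_cases h : cos r ^ n.natAbs = 0
    · rw [h, zero_mul, zero_mul]
    · rw [cos_two_mul, jacobiP_eq_eval_shiftedJacobi]
      rwa [← pow_mul, mul_comm, pow_mul, pow_ne_zero_iff two_ne_zero]
  rw [ContinuousMap.smul_apply, discPolynomial, discLift_discPoint, smul_eq_mul, ← mul_assoc,
    ← Complex.ofReal_mul, ← cos_pow_mul_jacobiP, heatTerm, ← mul_assoc, heatWeight, discDegree,
    heatEigenvalue]
  push_cast
  rfl

lemma star_discHeatKernel (t : ℝ) : star (discHeatKernel t) = discHeatKernel t := by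
  have heatWeight_neg (n : ℤ) (k : ℕ) : heatWeight t (-n, k) = heatWeight t (n, k) := by
    simp only [heatWeight, heatEigenvalue, discDegree, Int.natAbs_neg]
  rw [discHeatKernel, tsum_star, ← ((Equiv.neg ℤ).prodCongr (.refl ℕ)).tsum_eq]
  refine tsum_congr fun ⟨n, k⟩ => ?_
  simp [star_discPolynomial, heatWeight_neg]

lemma ofReal_heatP {t : ℝ} (ht : 0 < t) (p : ℝ × ℝ) :
    (heatP t p.1 p.2 : ℂ) = discHeatKernel t (discPoint p) := by
  have summable := summable_heatWeight_smul_discPolynomial ht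
  have tsum_heatTerm : ∑' n : ℤ, ∑' k : ℕ, heatTerm t p.1 p.2 n k =
      discHeatKernel t (discPoint p) := by
    rw [discHeatKernel, ← ContinuousMap.tsum_apply summable,
      ((ContinuousMap.summable_apply summable) _).tsum_prod]
    simp only [heatTerm_eq_heatWeight_smul]
  rw [heatP, tsum_heatTerm]
  exact Complex.conj_eq_iff_re.1 (DFunLike.congr_fun (star_discHeatKernel t) (discPoint p))

lemma continuous_heatP {t : ℝ} (ht : 0 < t) : Continuous fun p : ℝ × ℝ => heatP t p.1 p.2 := by
  refine (Complex.continuous_re.comp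
    ((discHeatKernel t).continuous.comp continuous_discPoint)).congr fun p => ?_
  simp [← ofReal_heatP ht]

lemma integral_heatP_mul_re {t : ℝ} (ht : 0 < t) (u : C(ClosedDisc, ℂ)) :
    ∫ p, heatP t p.1 p.2 * (u (discPoint p)).re ∂cylinderMeasure =
      (discIntegral (discHeatKernel t * u)).re := by
  have integrable : Integrable (fun p => (discHeatKernel t * u) (discPoint p)) cylinderMeasure :=
    integrable_cylinderMeasure ((ContinuousMap.continuous _).comp continuous_discPoint).continuousOn
  rw [discIntegral_apply, ← Complex.reCLM_apply, ← Complex.reCLM.integral_comp_comm integrable]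
  simp only [ContinuousMap.mul_apply, ← ofReal_heatP ht, Complex.reCLM_apply,
    Complex.re_ofReal_mul]

lemma discIntegral_discHeatKernel_mul_discPolynomial {t : ℝ} (ht : 0 < t) (y : ℤ × ℕ) :
    discIntegral (discHeatKernel t * discPolynomial y) = exp (-heatEigenvalue y * t) := by
  have hasSum := ((summable_heatWeight_smul_discPolynomial ht).hasSum.mul_right
    (discPolynomial y)).mapL discIntegral
  have degree_ne_zero : (2 * y.2 + y.1.natAbs + 1 : ℂ) ≠ 0 := by
    exact_mod_cast (2 * y.2 + y.1.natAbs).succ_ne_zero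
  rw [discHeatKernel, ← hasSum.tsum_eq, tsum_eq_single (-y.1, y.2) fun x hx => ?_]
  · rw [smul_mul_assoc, map_smul, discIntegral_discPolynomial_mul_discPolynomial, if_pos rfl,
      heatWeight, heatEigenvalue, heatEigenvalue, discDegree, Int.natAbs_neg, smul_eq_mul]
    push_cast
    field_simp
  · rw [smul_mul_assoc, map_smul, discIntegral_discPolynomial_mul_discPolynomial, if_neg hx,
      smul_zero]

lemma integral_heatP_mul_re_discPolynomial {t : ℝ} (ht : 0 < t) (y : ℤ × ℕ) :
    ∫ p, heatP t p.1 p.2 * (discPolynomial y (discPoint p)).re ∂cylinderMeasure =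
      exp (-heatEigenvalue y * t) := by
  rw [integral_heatP_mul_re ht, discIntegral_discHeatKernel_mul_discPolynomial ht,
    Complex.ofReal_re]

end HeatKernel

section Positivity

open MeasureTheory

lemma setOf_re_nonneg_subset_closure_inter {X : Type*} [TopologicalSpace X] [CompactSpace X]
    {V : Set C(X, ℂ)} (hV : Dense V) :
    {u : C(X, ℂ) | ∀ w, 0 ≤ (u w).re} ⊆ closure (V ∩ {u | ∀ w, 0 ≤ (u w).re}) := by
  intro u hu
  refine Metric.mem_closure_iff.2 fun ε hε => ?_
  obtain ⟨v, hvV, hv⟩ := hV.exists_dist_lt (u + .const X ((ε / 2 : ℝ) : ℂ)) (half_pos hε)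
  have dist_apply (w : X) : ‖u w + (ε / 2 : ℝ) - v w‖ < ε / 2 := by
    simpa [dist_eq_norm] using (ContinuousMap.dist_apply_le_dist w).trans_lt hv
  refine ⟨v, ⟨hvV, fun w => ?_⟩, ?_⟩
  · have := (Complex.abs_re_le_norm _).trans_lt (dist_apply w)
    rw [Complex.sub_re, Complex.add_re, Complex.ofReal_re, abs_lt] at this
    linarith [hu w]
  · refine (dist_triangle _ _ _).trans_lt (add_lt_add_of_le_of_lt ?_ hv |>.trans_eq (add_halves ε))
    refine (ContinuousMap.dist_le (half_pos hε).le).2 fun w => ?_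
    simp [abs_of_pos hε]

lemma discPolynomial_discPoint_zero (x : ℤ × ℕ) : discPolynomial x (discPoint (0, 0)) = 1 := by
  simp [discPolynomial, discLift_discPoint, eval_one_shiftedJacobi]

-- On the span of the disc polynomials the pairing is evaluation at `w = 1` of the heat semigroup.
lemma re_discIntegral_discHeatKernel_mul_nonneg_of_mem_span {t : ℝ} (ht : 0 < t)
    {u : C(ClosedDisc, ℂ)} (hu : u ∈ Submodule.span ℂ (Set.range discPolynomial))
    (hu₀ : ∀ w, 0 ≤ (u w).re) : 0 ≤ (discIntegral (discHeatKernel t * u)).re := by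
  obtain ⟨c, rfl⟩ := Finsupp.mem_span_range_iff_exists_finsupp.1 hu
  have := isPositiveMultiplier_exp ht.le c.support c hu₀ (discPoint (0, 0))
  simpa only [Finsupp.sum, Finset.mul_sum, map_sum, mul_smul_comm, map_smul,
    discIntegral_discHeatKernel_mul_discPolynomial ht, ContinuousMap.sum_apply,
    ContinuousMap.smul_apply, discPolynomial_discPoint_zero, smul_eq_mul, mul_one,
    mul_comm (c _)] using this

lemma re_discIntegral_discHeatKernel_mul_nonneg {t : ℝ} (ht : 0 < t) {u : C(ClosedDisc, ℂ)}
    (hu : ∀ w, 0 ≤ (u w).re) : 0 ≤ (discIntegral (discHeatKernel t * u)).re := by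
  have isClosed : IsClosed {u | 0 ≤ (discIntegral (discHeatKernel t * u)).re} :=
    isClosed_le continuous_const (by fun_prop)
  exact closure_minimal
    (fun v hv => re_discIntegral_discHeatKernel_mul_nonneg_of_mem_span ht hv.1 hv.2) isClosed
    (setOf_re_nonneg_subset_closure_inter dense_span_discPolynomial hu)

-- Pairing `heatP` with its negative part gives minus the integral of the square of the latter.
lemma heatP_nonneg_ae {t : ℝ} (ht : 0 < t) :
    ∀ᵐ p ∂cylinderMeasure, 0 ≤ heatP t p.1 p.2 := by
  let negPart : C(ClosedDisc, ℂ) := ⟨fun w => ((discHeatKernel t w).re⁻ : ℝ), by fun_prop⟩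
  have integral_nonneg := re_discIntegral_discHeatKernel_mul_nonneg ht (u := negPart)
    fun w => negPart_nonneg _
  have integrand_eq (p : ℝ × ℝ) : heatP t p.1 p.2 * (negPart (discPoint p)).re =
      -(heatP t p.1 p.2)⁻ ^ 2 := by
    simp only [negPart, ContinuousMap.coe_mk, ← ofReal_heatP ht, Complex.ofReal_re]
    rcases le_total 0 (heatP t p.1 p.2) with h | h
    · simp [h]
    · simp [h, sq]
  rw [← integral_heatP_mul_re ht] at integral_nonneg
  simp only [integrand_eq, integral_neg] at integral_nonneg
  have integrable : Integrable (fun p : ℝ × ℝ => (heatP t p.1 p.2)⁻ ^ 2) cylinderMeasure :=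
    integrable_cylinderMeasure (by have := continuous_heatP ht; fun_prop)
  have integral_eq_zero := le_antisymm (neg_nonneg.1 integral_nonneg)
    (MeasureTheory.integral_nonneg fun p => sq_nonneg _)
  filter_upwards [(integral_eq_zero_iff_of_nonneg (fun p => sq_nonneg _) integrable).1
    integral_eq_zero] with p hp
  simpa using hp

end Positivity

section Concentration

open Filter Topology MeasureTheory

lemma exists_abs_le_add_mul_of_isCompact {X : Type*} [TopologicalSpace X] [T2Space X] {K : Set X}
    (hK : IsCompact K) {F D : X → ℝ} (hF : ContinuousOn F K) (hD : ContinuousOn D K)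
    (hD₀ : ∀ x ∈ K, 0 ≤ D x) (hFD : ∀ x ∈ K, D x = 0 → F x = 0) {ε : ℝ} (hε : 0 < ε) :
    ∃ C, ∀ x ∈ K, |F x| ≤ ε + C * D x := by
  have isCompact_far : IsCompact (K ∩ (fun x => |F x|) ⁻¹' Set.Ici ε) :=
    hK.of_isClosed_subset (hF.abs.preimage_isClosed_of_isClosed hK.isClosed isClosed_Ici)
      Set.inter_subset_left
  have D_ne_zero : ∀ x ∈ K ∩ (fun x => |F x|) ⁻¹' Set.Ici ε, D x ≠ 0 := fun x hx hDx =>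
    hε.not_ge (by simpa [hFD x hx.1 hDx] using hx.2)
  obtain ⟨C, hC⟩ := isCompact_far.exists_bound_of_continuousOn
    ((hF.mono Set.inter_subset_left).div (hD.mono Set.inter_subset_left) D_ne_zero)
  refine ⟨max C 0, fun x hx => ?_⟩
  rcases le_or_gt ε |F x| with far | near
  · have D_pos : 0 < D x := (hD₀ x hx).lt_of_ne' (D_ne_zero x ⟨hx, far⟩)
    have abs_le : |F x| ≤ C * D x := by
      simpa [abs_of_pos D_pos, div_le_iff₀ D_pos] using hC x ⟨hx, far⟩
    linarith [mul_le_mul_of_nonneg_right (le_max_left C 0) D_pos.le]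
  · linarith [mul_nonneg (le_max_right C 0) (hD₀ x hx)]

lemma tendsto_integral_mul_of_concentration {X ι : Type*} [MeasurableSpace X] {μ : Measure X}
    {l : Filter ι} {p : ι → X → ℝ} {D F : X → ℝ} {a : ℝ}
    (hp : ∀ᶠ i in l, 0 ≤ᵐ[μ] p i) (hmass : ∀ᶠ i in l, ∫ x, p i x ∂μ = 1)
    (hpD_int : ∀ᶠ i in l, Integrable (fun x => p i x * D x) μ)
    (hpF_int : ∀ᶠ i in l, Integrable (fun x => p i x * F x) μ)
    (hD : Tendsto (fun i => ∫ x, p i x * D x ∂μ) l (𝓝 0))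
    (hF : ∀ ε > 0, ∃ C, ∀ᵐ x ∂μ, |F x - a| ≤ ε + C * D x) :
    Tendsto (fun i => ∫ x, p i x * F x ∂μ) l (𝓝 a) := by
  rw [Metric.tendsto_nhds]
  intro ε hε
  obtain ⟨C, hC⟩ := hF (ε / 2) (half_pos hε)
  have tail : ∀ᶠ i in l, C * ∫ x, p i x * D x ∂μ < ε / 2 :=
    (hD.const_mul C).eventually_lt_const (by simpa using hε)
  filter_upwards [hp, hmass, hpD_int, hpF_int, tail] with i hp hmass hpD_int hpF_int tail
  have hp_int : Integrable (p i) μ := .of_integral_ne_zero (hmass ▸ one_ne_zero)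
  have integral_sub_eq : ∫ x, p i x * F x ∂μ - a = ∫ x, (p i x * F x - p i x * a) ∂μ := by
    rw [integral_sub hpF_int (hp_int.mul_const a), integral_mul_const, hmass, one_mul]
  have integral_add_eq : ε / 2 + C * ∫ x, p i x * D x ∂μ =
      ∫ x, (p i x * (ε / 2) + C * (p i x * D x)) ∂μ := by
    rw [integral_add (hp_int.mul_const _) (hpD_int.const_mul C), integral_mul_const, hmass,
      one_mul, integral_const_mul]
  have integral_le : ‖∫ x, (p i x * F x - p i x * a) ∂μ‖ ≤
      ∫ x, (p i x * (ε / 2) + C * (p i x * D x)) ∂μ := by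
    refine norm_integral_le_of_norm_le ((hp_int.mul_const _).add (hpD_int.const_mul C)) ?_
    filter_upwards [hp, hC] with x hpx hCx
    rw [← mul_sub, norm_mul, norm_of_nonneg hpx, norm_eq_abs]
    linarith [mul_le_mul_of_nonneg_left hCx hpx]
  rw [dist_eq_norm, integral_sub_eq]
  linarith

lemma re_discPolynomial_one_zero_discPoint (p : ℝ × ℝ) :
    (discPolynomial (1, 0) (discPoint p)).re = cos p.1 * cos p.2 := by
  rw [discPolynomial_one_zero, discMonomial_apply, pow_one, pow_zero, mul_one, discPoint,
    Complex.re_ofReal_mul, Complex.exp_ofReal_mul_I_re]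

lemma integral_heatP {t : ℝ} (ht : 0 < t) :
    ∫ p, heatP t p.1 p.2 ∂cylinderMeasure = 1 := by
  simpa [discPolynomial_zero_zero, heatEigenvalue] using
    integral_heatP_mul_re_discPolynomial ht (0, 0)

lemma integral_heatP_mul_one_sub_cos_mul_cos {t : ℝ} (ht : 0 < t) :
    ∫ p, heatP t p.1 p.2 * (1 - cos p.1 * cos p.2) ∂cylinderMeasure = 1 - exp (-(2 * t)) := by
  have integral_cos := integral_heatP_mul_re_discPolynomial ht (1, 0)
  simp only [re_discPolynomial_one_zero_discPoint, heatEigenvalue] at integral_cos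
  have := continuous_heatP ht
  simp only [mul_sub, mul_one]
  rw [integral_sub (integrable_cylinderMeasure this.continuousOn)
    (integrable_cylinderMeasure (by fun_prop)), integral_heatP ht, integral_cos]
  norm_num

lemma cos_mul_cos_le_one (r z : ℝ) : cos r * cos z ≤ 1 :=
  (le_abs_self _).trans ((abs_mul _ _).trans_le
    (mul_le_one₀ (abs_cos_le_one r) (abs_nonneg _) (abs_cos_le_one z)))

lemma eq_or_eq_of_cos_mul_cos_eq_one {p : ℝ × ℝ} (hp : p ∈ cylinderBox)
    (h : cos p.1 * cos p.2 = 1) : p = (0, 0) ∨ p = (0, 2 * π) := by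
  obtain ⟨⟨hr₀, hr₁⟩, hz₀, hz₁⟩ := hp
  have cos_nonneg : 0 ≤ cos p.1 :=
    cos_nonneg_of_neg_pi_div_two_le_of_le (by linarith [pi_pos]) hr₁
  have cos_r : cos p.1 = 1 := by nlinarith [cos_le_one p.1, cos_le_one p.2]
  have cos_z : cos p.2 = 1 := by rwa [cos_r, one_mul] at h
  have r_eq : p.1 = 0 :=
    (cos_eq_one_iff_of_lt_of_lt (by linarith [pi_pos]) (by linarith [pi_pos])).1 cos_r
  rcases hz₁.lt_or_eq with hz | hz
  · exact .inl (Prod.ext r_eq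
      ((cos_eq_one_iff_of_lt_of_lt (by linarith [pi_pos]) hz).1 cos_z))
  · exact .inr (Prod.ext r_eq hz)

lemma tendsto_integral_heatP_mul {F : ℝ × ℝ → ℝ} (hF : ContinuousOn F cylinderBox)
    (hper : F (0, 2 * π) = F (0, 0)) :
    Tendsto (fun t => ∫ p, heatP t p.1 p.2 * F p ∂cylinderMeasure) (𝓝[>] 0) (𝓝 (F (0, 0))) := by
  have ht : ∀ᶠ t : ℝ in 𝓝[>] 0, 0 < t := self_mem_nhdsWithin
  refine tendsto_integral_mul_of_concentration (D := fun p => 1 - cos p.1 * cos p.2)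
    (ht.mono fun t ht => heatP_nonneg_ae ht) (ht.mono fun t ht => integral_heatP ht)
    (ht.mono fun t ht => integrable_cylinderMeasure ?_)
    (ht.mono fun t ht => integrable_cylinderMeasure ((continuous_heatP ht).continuousOn.mul hF))
    ?_ fun ε hε => ?_
  · have := continuous_heatP ht
    fun_prop
  · have tendsto_exp : Tendsto (fun t : ℝ => 1 - exp (-(2 * t))) (𝓝[>] 0) (𝓝 0) := by
      have : Continuous fun t : ℝ => 1 - exp (-(2 * t)) := by fun_prop
      simpa using this.continuousWithinAt (s := Set.Ioi 0) (x := 0) |>.tendsto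
    exact tendsto_exp.congr' (ht.mono fun t ht => (integral_heatP_mul_one_sub_cos_mul_cos ht).symm)
  · have F_eq : ∀ p ∈ cylinderBox, 1 - cos p.1 * cos p.2 = 0 → F p - F (0, 0) = 0 := by
      intro p hp h
      rcases eq_or_eq_of_cos_mul_cos_eq_one hp (sub_eq_zero.1 h).symm with rfl | rfl
      · exact sub_self _
      · exact sub_eq_zero.2 hper
    obtain ⟨C, hC⟩ := exists_abs_le_add_mul_of_isCompact isCompact_cylinderBox
      (hF.sub continuousOn_const) (by fun_prop)
      (fun p _ => sub_nonneg.2 (cos_mul_cos_le_one p.1 p.2)) F_eq hε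
    exact ⟨C, ae_mem_cylinderBox.mono hC⟩

end Concentration

theorem stmt_3_general {f : ℝ → ℝ → ℝ}
    (hf : ContinuousOn (fun p : ℝ × ℝ => f p.1 p.2) (Set.Icc 0 (π / 2) ×ˢ Set.Icc 0 (2 * π)))
    (hper : f 0 (2 * π) = f 0 0) :
    Filter.Tendsto
      (fun t : ℝ => (1 / (2 * π)) *
        ∫ r in (0 : ℝ)..(π / 2), ∫ z in (0 : ℝ)..(2 * π), heatP t r z * f r z * sin (2 * r))
      (nhdsWithin 0 (Set.Ioi 0)) (nhds (f 0 0)) := by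
  refine (tendsto_integral_heatP_mul hf hper).congr' ?_
  filter_upwards [self_mem_nhdsWithin] with t ht
  exact integral_cylinderMeasure_eq_intervalIntegral ((continuous_heatP ht).continuousOn.mul hf)

/-- For every smooth `f : [0, π/2] × ℝ → ℝ` that is `2π`-periodic in its second variable,
`(1/2π) ∫₀^{π/2} ∫₀^{2π} p_t(r,z) f(r,z) sin(2r) dz dr → f(0,0)` as `t → 0⁺`. -/
theorem stmt_3 (f : ℝ → ℝ → ℝ)
    (hf : ContDiffOn ℝ (⊤ : ℕ∞) (fun p : ℝ × ℝ => f p.1 p.2)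
      (Set.Icc 0 (Real.pi / 2) ×ˢ (Set.univ : Set ℝ)))
    (hper : ∀ r z : ℝ, f r (z + 2 * Real.pi) = f r z) :
    Filter.Tendsto
      (fun t : ℝ => (1 / (2 * Real.pi)) *
        ∫ r in (0 : ℝ)..(Real.pi / 2), ∫ z in (0 : ℝ)..(2 * Real.pi),
          heatP t r z * f r z * Real.sin (2 * r))
      (nhdsWithin 0 (Set.Ioi 0)) (nhds (f 0 0)) := by
  exact stmt_3_general (hf.continuousOn.mono (Set.prod_mono_right (Set.subset_univ _)))
    (by simpa using hper 0 0)
end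

section
/- The function u(t, r, z) := q_t(cos r · cos z) satisfies the heat equation of the round 3-sphere in cylindric coordinates: ∂u/∂t = ∂²u/∂r² + 2·cot(2r)·∂u/∂r + (1/cos²r)·∂²u/∂z², for all t > 0, r ∈ (0, π/2), z ∈ ℝ. -/
open Real

/-- The heat kernel `q_t(x) = Σ_{m=0}^∞ (m+1) e^{-m(m+2)t} U_m(x)` of the round 3-sphere,
where `U_m` is the Chebyshev polynomial of the second kind. -/
noncomputable def qKer (t x : ℝ) : ℝ :=
  ∑' m : ℕ, ((m : ℝ) + 1) * Real.exp (-((m : ℝ) * ((m : ℝ) + 2)) * t) *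
    (Polynomial.Chebyshev.U ℝ (m : ℤ)).eval x

/-!
On functions of `x = cos r cos z` the Laplacian of the 3-sphere acts as the Chebyshev operator
`f ↦ (1 - x²) f'' - 3 x f'`, of which `U_m` is an eigenfunction with eigenvalue `-m (m + 2)`.
So each term of the series `q_t` solves the heat equation. The series may be differentiated
termwise: the derivatives of `U_m` of each order grow at most geometrically in `m`, locally
uniformly in `x`, whereas `e^{-m(m+2)t}` decays like a Gaussian.
-/

open Polynomial in
theorem eval_iterate_derivative_U_add_two {R : Type*} [CommRing R] (k : ℕ) (n : ℤ) (x : R) :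
    (derivative^[k] (Chebyshev.U R (n + 2))).eval x =
      2 * x * (derivative^[k] (Chebyshev.U R (n + 1))).eval x +
        2 * k * (derivative^[k - 1] (Chebyshev.U R (n + 1))).eval x -
          (derivative^[k] (Chebyshev.U R n)).eval x := by
  have two_mul_X_mul : 2 * X * Chebyshev.U R (n + 1) =
      ((2 : ℕ) : R[X]) * (Chebyshev.U R (n + 1) * X) := by
    push_cast
    ring
  rw [Chebyshev.U_add_two, iterate_derivative_sub, two_mul_X_mul, iterate_derivative_natCast_mul,
    iterate_derivative_mul_X]
  simp only [eval_sub, eval_mul, eval_add, eval_natCast, eval_ofNat, eval_X, nsmul_eq_mul,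
    Nat.cast_ofNat]
  ring

open Polynomial in
theorem abs_eval_iterate_derivative_U_le (k n : ℕ) (x : ℝ) :
    |(derivative^[k] (Chebyshev.U ℝ n)).eval x| ≤ (2 * |x| + 2 * k + 1) ^ n := by
  induction n using Nat.twoStepInduction generalizing k with
  | zero => rcases k with _ | k <;> simp [iterate_derivative_one]
  | one =>
    rcases k with _ | _ | k
    · simp [abs_mul]
    · have derivative_U_one : derivative (Chebyshev.U ℝ 1) = 2 := by simp
      simp only [Nat.cast_one, zero_add, Function.iterate_one, derivative_U_one, eval_ofNat,
        abs_two, pow_one]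
      linarith [abs_nonneg x]
    · have iterate_derivative_U_one : derivative^[k + 2] (Chebyshev.U ℝ 1) = 0 := by simp
      simp only [Nat.cast_one, iterate_derivative_U_one, eval_zero, abs_zero]
      positivity
  | more n ih_n ih_succ =>
    set b : ℝ := 2 * |x| + 2 * k + 1 with hb
    have one_le_b : 1 ≤ b := by
      rw [hb]
      linarith [abs_nonneg x, k.cast_nonneg (α := ℝ)]
    have ih_pred : |(derivative^[k - 1] (Chebyshev.U ℝ (n + 1 : ℕ))).eval x| ≤ b ^ (n + 1) := by
      refine (ih_succ (k - 1)).trans ?_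
      gcongr
      simp [hb]
    have ih_succ := ih_succ k
    push_cast at ih_pred ih_succ ⊢
    rw [eval_iterate_derivative_U_add_two]
    calc _ ≤ |2 * x * (derivative^[k] (Chebyshev.U ℝ (n + 1))).eval x| +
            |2 * k * (derivative^[k - 1] (Chebyshev.U ℝ (n + 1))).eval x| +
              |(derivative^[k] (Chebyshev.U ℝ n)).eval x| :=
          (abs_sub _ _).trans (by gcongr; exact abs_add_le _ _)
      _ ≤ 2 * |x| * b ^ (n + 1) + 2 * k * b ^ (n + 1) + b ^ (n + 1) := by
          simp only [abs_mul, abs_two, Nat.abs_cast]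
          gcongr
          exact (ih_n k).trans (pow_le_pow_right₀ one_le_b n.le_succ)
      _ = b ^ (n + 2) := by
          rw [hb]
          ring

-- Completing the square, `m (m + 2) = (m + 1)² - 1`, turns this into a shifted theta series.
theorem summable_pow_mul_exp_mul_pow (j : ℕ) {s b : ℝ} (hs : 0 < s) (hb : 0 < b) :
    Summable fun m : ℕ ↦ ((m : ℝ) + 1) ^ j * exp (-((m : ℝ) * (m + 2)) * s) * b ^ m := by
  have theta_summable := (summable_pow_mul_jacobiTheta₂_term_bound (log b / (2 * π))
    (div_pos hs pi_pos) j).comp_injective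
      ((add_left_injective (1 : ℤ)).comp Nat.cast_injective)
  refine (theta_summable.mul_left (exp s / b)).congr fun m ↦ ?_
  have abs_succ : |(m : ℝ) + 1| = m + 1 := abs_of_nonneg (by positivity)
  have exponent_eq : -π * (s / π * ((m : ℝ) + 1) ^ 2 - 2 * (log b / (2 * π)) * (m + 1)) =
      -((m : ℝ) * (m + 2)) * s + -s + m * log b + log b := by
    field_simp
    ring
  simp only [Function.comp_apply, Int.cast_abs, Int.cast_add, Int.cast_natCast, Int.cast_one,
    abs_succ, exponent_eq, exp_add, exp_nat_mul, exp_log hb, exp_neg s]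
  field_simp

/-- The `m`-th term of the series for `qKer t x`, differentiated `k` times in `x`. -/
noncomputable def qTerm (k m : ℕ) (t x : ℝ) : ℝ :=
  (m + 1) * exp (-(m * (m + 2)) * t) *
    (Polynomial.derivative^[k] (Polynomial.Chebyshev.U ℝ m)).eval x

/-- The `k`-th derivative of `qKer t` at `x`, encoded as the termwise differentiated series;
`hasDerivAt_qKerDeriv` justifies the name for `t > 0`. -/
noncomputable def qKerDeriv (k : ℕ) (t x : ℝ) : ℝ :=
  ∑' m, qTerm k m t x

theorem qKerDeriv_zero : qKerDeriv 0 = qKer := rfl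

theorem hasDerivAt_qTerm (k m : ℕ) (t x : ℝ) :
    HasDerivAt (qTerm k m t) (qTerm (k + 1) m t x) x := by
  simp only [qTerm, Function.iterate_succ_apply']
  exact (Polynomial.hasDerivAt _ _).const_mul _

theorem hasDerivAt_qTerm_time (k m : ℕ) (t x : ℝ) :
    HasDerivAt (fun s ↦ qTerm k m s x) (-(m * (m + 2)) * qTerm k m t x) t := by
  have hasDerivAt_exp := ((hasDerivAt_id t).const_mul (-((m : ℝ) * (m + 2)))).exp
  refine ((hasDerivAt_exp.const_mul ((m : ℝ) + 1)).mul_const _).congr_deriv ?_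
  simp only [qTerm, id]
  ring

theorem neg_mul_qTerm_zero_eq (m : ℕ) (t x : ℝ) :
    -(m * (m + 2)) * qTerm 0 m t x = (1 - x ^ 2) * qTerm 2 m t x - 3 * x * qTerm 1 m t x := by
  have chebyshev_ode :=
    Polynomial.Chebyshev.one_sub_X_sq_mul_iterate_derivative_U_eval (m : ℤ) 0 x
  push_cast at chebyshev_ode
  simp only [qTerm]
  linear_combination (-((m : ℝ) + 1) * exp (-(m * (m + 2)) * t)) * chebyshev_ode

theorem abs_qTerm_le (k m : ℕ) {s t x ρ : ℝ} (hst : s ≤ t) (hx : |x| ≤ ρ) :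
    |qTerm k m t x| ≤ (m + 1) * exp (-(m * (m + 2)) * s) * (2 * ρ + 2 * k + 1) ^ m := by
  have exp_le : exp (-((m : ℝ) * (m + 2)) * t) ≤ exp (-((m : ℝ) * (m + 2)) * s) :=
    exp_le_exp.mpr (mul_le_mul_of_nonpos_left hst (by simp only [neg_nonpos]; positivity))
  rw [qTerm, abs_mul, abs_of_nonneg (by positivity)]
  gcongr
  exact (abs_eval_iterate_derivative_U_le k m x).trans (by gcongr)

theorem abs_neg_mul_qTerm_le (k m : ℕ) {s t : ℝ} (hst : s ≤ t) (x : ℝ) :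
    |-(m * (m + 2)) * qTerm k m t x| ≤
      ((m : ℝ) + 1) ^ 3 * exp (-(m * (m + 2)) * s) * (2 * |x| + 2 * k + 1) ^ m := by
  rw [abs_mul, abs_neg, abs_of_nonneg (by positivity)]
  calc _ ≤ ((m : ℝ) + 1) ^ 2 *
          ((m + 1) * exp (-(m * (m + 2)) * s) * (2 * |x| + 2 * k + 1) ^ m) := by
        gcongr
        · linarith
        · exact abs_qTerm_le k m hst le_rfl
    _ = _ := by ring

theorem summable_qTerm_bound (k : ℕ) {t ρ : ℝ} (ht : 0 < t) (hρ : 0 ≤ ρ) :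
    Summable fun m : ℕ ↦
      ((m : ℝ) + 1) * exp (-(m * (m + 2)) * t) * (2 * ρ + 2 * k + 1) ^ m := by
  simpa only [pow_one] using
    summable_pow_mul_exp_mul_pow 1 ht (show 0 < 2 * ρ + 2 * k + 1 by positivity)

theorem summable_qTerm (k : ℕ) {t : ℝ} (ht : 0 < t) (x : ℝ) :
    Summable fun m ↦ qTerm k m t x :=
  (summable_qTerm_bound k ht (abs_nonneg x)).of_norm_bounded
    fun m ↦ abs_qTerm_le k m le_rfl le_rfl

theorem hasDerivAt_qKerDeriv (k : ℕ) {t : ℝ} (ht : 0 < t) (x : ℝ) :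
    HasDerivAt (qKerDeriv k t) (qKerDeriv (k + 1) t x) x := by
  have x_mem : x ∈ Metric.ball (0 : ℝ) (|x| + 1) := by simp
  exact hasDerivAt_tsum_of_isPreconnected
    (summable_qTerm_bound (k + 1) ht (show 0 ≤ |x| + 1 by positivity))
    Metric.isOpen_ball (convex_ball _ _).isPreconnected
    (fun m y _ ↦ hasDerivAt_qTerm k m t y)
    (fun m y hy ↦ abs_qTerm_le (k + 1) m le_rfl (mem_ball_zero_iff.mp hy).le)
    x_mem (summable_qTerm k ht x) x_mem

theorem hasDerivAt_qKerDeriv_time (k : ℕ) {t : ℝ} (ht : 0 < t) (x : ℝ) :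
    HasDerivAt (fun s ↦ qKerDeriv k s x) (∑' m : ℕ, -(m * (m + 2)) * qTerm k m t x) t := by
  have t_mem : t ∈ Set.Ioi (t / 2) := half_lt_self ht
  exact hasDerivAt_tsum_of_isPreconnected
    (summable_pow_mul_exp_mul_pow 3 (half_pos ht) (by positivity))
    isOpen_Ioi isPreconnected_Ioi
    (fun m s _ ↦ hasDerivAt_qTerm_time k m s x)
    (fun m s hs ↦ abs_neg_mul_qTerm_le k m hs.le x)
    t_mem (summable_qTerm k ht x) t_mem

theorem hasDerivAt_qKer_time {t : ℝ} (ht : 0 < t) (x : ℝ) :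
    HasDerivAt (fun s ↦ qKer s x)
      ((1 - x ^ 2) * qKerDeriv 2 t x - 3 * x * qKerDeriv 1 t x) t := by
  refine (hasDerivAt_qKerDeriv_time 0 ht x).congr_deriv ?_
  simp only [neg_mul_qTerm_zero_eq, qKerDeriv]
  rw [((summable_qTerm 2 ht x).mul_left _).tsum_sub ((summable_qTerm 1 ht x).mul_left _),
    tsum_mul_left, tsum_mul_left]

/-- The Laplace–Beltrami operator of the round 3-sphere in cylindric coordinates `(r, θ, z)`,
acting on functions independent of `θ`. The coordinates degenerate where `sin (2 * r) = 0`; there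
the coefficients take junk values. -/
noncomputable def cylindricLaplacian (u : ℝ → ℝ → ℝ) (r z : ℝ) : ℝ :=
  deriv (fun r' ↦ deriv (fun r'' ↦ u r'' z) r') r
    + 2 * (cos (2 * r) / sin (2 * r)) * deriv (fun r' ↦ u r' z) r
    + (1 / cos r ^ 2) * deriv (fun z' ↦ deriv (fun z'' ↦ u r z'') z') z

section CompCos

variable {f f' f'' : ℝ → ℝ}

theorem hasDerivAt_comp_cos_mul (hf : ∀ x, HasDerivAt f (f' x) x) (c θ : ℝ) :
    HasDerivAt (fun θ' ↦ f (cos θ' * c)) (f' (cos θ * c) * (-sin θ * c)) θ :=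
  (hf _).comp θ ((hasDerivAt_cos θ).mul_const c)

theorem deriv_deriv_comp_cos_mul (hf : ∀ x, HasDerivAt f (f' x) x)
    (hf' : ∀ x, HasDerivAt f' (f'' x) x) (c θ : ℝ) :
    deriv (fun θ' ↦ deriv (fun θ'' ↦ f (cos θ'' * c)) θ') θ =
      f'' (cos θ * c) * (sin θ * c) ^ 2 - f' (cos θ * c) * (cos θ * c) := by
  have deriv_eq : (fun θ' ↦ deriv (fun θ'' ↦ f (cos θ'' * c)) θ') =
      fun θ' ↦ f' (cos θ' * c) * (-sin θ' * c) :=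
    funext fun θ' ↦ (hasDerivAt_comp_cos_mul hf c θ').deriv
  rw [deriv_eq]
  refine ((hasDerivAt_comp_cos_mul hf' c θ).mul
    ((hasDerivAt_sin θ).neg.mul_const c)).deriv.trans ?_
  simp only [Pi.neg_apply]
  ring

theorem cylindricLaplacian_comp_cos_mul_cos (hf : ∀ x, HasDerivAt f (f' x) x)
    (hf' : ∀ x, HasDerivAt f' (f'' x) x) {r : ℝ} (hr : sin (2 * r) ≠ 0) (z : ℝ) :
    cylindricLaplacian (fun r z ↦ f (cos r * cos z)) r z =
      (1 - (cos r * cos z) ^ 2) * f'' (cos r * cos z) -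
        3 * (cos r * cos z) * f' (cos r * cos z) := by
  have deriv_deriv_z : deriv (fun z' ↦ deriv (fun z'' ↦ f (cos r * cos z'')) z') z =
      f'' (cos r * cos z) * (sin z * cos r) ^ 2 - f' (cos r * cos z) * (cos r * cos z) := by
    simpa only [mul_comm (cos r)] using deriv_deriv_comp_cos_mul hf hf' (cos r) z
  rw [cylindricLaplacian, deriv_deriv_comp_cos_mul hf hf', (hasDerivAt_comp_cos_mul hf _ r).deriv,
    deriv_deriv_z]
  rw [sin_two_mul] at hr ⊢
  have sin_ne_zero : sin r ≠ 0 := by grind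
  have cos_ne_zero : cos r ≠ 0 := by grind
  rw [cos_two_mul]
  field_simp
  rw [sin_sq, sin_sq]
  ring

end CompCos

theorem stmt_4_general {t : ℝ} (ht : 0 < t) {r : ℝ} (hr : sin (2 * r) ≠ 0) (z : ℝ) :
    deriv (fun t' ↦ qKer t' (cos r * cos z)) t =
      cylindricLaplacian (fun r z ↦ qKer t (cos r * cos z)) r z := by
  rw [(hasDerivAt_qKer_time ht _).deriv, ← qKerDeriv_zero,
    cylindricLaplacian_comp_cos_mul_cos (hasDerivAt_qKerDeriv 0 ht) (hasDerivAt_qKerDeriv 1 ht) hr]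

/-- The function `u(t,r,z) = q_t(cos r cos z)` satisfies the heat equation of the round
3-sphere in cylindric coordinates:
`∂u/∂t = ∂²u/∂r² + 2 cot(2r) ∂u/∂r + (1/cos²r) ∂²u/∂z²`. -/
theorem stmt_4 (t : ℝ) (ht : 0 < t) (r : ℝ) (hr : r ∈ Set.Ioo 0 (Real.pi / 2)) (z : ℝ) :
    deriv (fun t' => qKer t' (Real.cos r * Real.cos z)) t =
      deriv (fun r' => deriv (fun r'' => qKer t (Real.cos r'' * Real.cos z)) r') r
        + 2 * (Real.cos (2 * r) / Real.sin (2 * r)) *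
            deriv (fun r' => qKer t (Real.cos r' * Real.cos z)) r
        + (1 / Real.cos r ^ 2) *
            deriv (fun z' => deriv (fun z'' => qKer t (Real.cos r * Real.cos z'')) z') z :=
  stmt_4_general ht
    (sin_pos_of_pos_of_lt_pi (by linarith [hr.1]) (by linarith [hr.2])).ne' z
end

section
/- For every t > 0 and every θ ∈ ℝ, one has the identity Σ_{m=0}^∞ (m+1) · e^{-m(m+2)t} · sin((m+1)θ) = (√π · e^t / (4 t^{3/2})) · Σ_{k∈ℤ} (θ + 2kπ) · e^{-(θ+2kπ)²/(4t)}. Equivalently, for sin θ ≠ 0, q_t(cos θ) = (√π · e^t / (4 t^{3/2})) · (1/sin θ) · Σ_{k∈ℤ} (θ + 2kπ) · e^{-(θ+2kπ)²/(4t)}. -/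
open Real

/-!
With `a = θ / (2π)`, the sine series is, up to the factor `e^t / 2`, the kernel
`HurwitzZeta.sinKernel a (t / π)`, because `m (m + 2) = (m + 1)² - 1`. The Gaussian series is
`2π` times `HurwitzZeta.oddKernel a (π / t)`. The functional equation relating the two kernels is
the Poisson summation formula for `x ↦ x e^{-π x²}`.
-/

open HurwitzZeta

lemma rpow_three_halves {x : ℝ} (hx : 0 ≤ x) : x ^ (3 / 2 : ℝ) = x * √x := by
  rw [sqrt_eq_rpow, ← rpow_one_add' hx (by norm_num)]
  norm_num

lemma oddKernel_pi_div (a : UnitAddCircle) {t : ℝ} (ht : 0 ≤ t) :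
    oddKernel a (π / t) = t ^ (3 / 2 : ℝ) / (π * √π) * sinKernel a (t / π) := by
  rw [oddKernel_functional_equation, div_rpow pi_pos.le ht, one_div_div, one_div_div,
    rpow_three_halves pi_pos.le]

lemma hasSum_succ_mul_exp_neg_sq_mul_sin {t : ℝ} (ht : 0 < t) (θ : ℝ) :
    HasSum (fun m : ℕ ↦ ((m : ℝ) + 1) * exp (-((m : ℝ) + 1) ^ 2 * t) * sin (((m : ℝ) + 1) * θ))
      (sinKernel ↑(θ / (2 * π)) (t / π) / 2) := by
  have hsum := (hasSum_nat_add_iff' 1).mpr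
    (hasSum_nat_sinKernel (θ / (2 * π)) (div_pos ht pi_pos))
  simp only [Finset.sum_range_one, Nat.cast_zero, mul_zero, zero_mul, sub_zero] at hsum
  refine (hsum.div_const 2).congr_fun fun m ↦ ?_
  have exponent_eq : -π * ((m + 1 : ℕ) : ℝ) ^ 2 * (t / π) = -((m : ℝ) + 1) ^ 2 * t := by
    push_cast
    field_simp
  have angle_eq : 2 * π * (θ / (2 * π)) * ((m + 1 : ℕ) : ℝ) = ((m : ℝ) + 1) * θ := by
    push_cast
    field_simp
  rw [exponent_eq, angle_eq]
  push_cast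
  ring

lemma hasSum_add_two_mul_pi_mul_exp_neg_sq_div {t : ℝ} (ht : 0 < t) (θ : ℝ) :
    HasSum (fun k : ℤ ↦ (θ + 2 * (k : ℝ) * π) * exp (-(θ + 2 * (k : ℝ) * π) ^ 2 / (4 * t)))
      (2 * π * oddKernel ↑(θ / (2 * π)) (π / t)) := by
  refine ((hasSum_int_oddKernel (θ / (2 * π)) (div_pos pi_pos ht)).mul_left (2 * π)).congr_fun
    fun k ↦ ?_
  have point_eq : θ + 2 * (k : ℝ) * π = 2 * π * ((k : ℝ) + θ / (2 * π)) := by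
    field_simp
    ring
  have exponent_eq : -(2 * π * ((k : ℝ) + θ / (2 * π))) ^ 2 / (4 * t) =
      -π * ((k : ℝ) + θ / (2 * π)) ^ 2 * (π / t) := by
    ring
  rw [point_eq, exponent_eq, mul_assoc]

theorem tsum_succ_mul_exp_neg_sq_mul_sin {t : ℝ} (ht : 0 < t) (θ : ℝ) :
    ∑' m : ℕ, ((m : ℝ) + 1) * exp (-((m : ℝ) + 1) ^ 2 * t) * sin (((m : ℝ) + 1) * θ) =
      √π / (4 * t ^ (3 / 2 : ℝ)) *
        ∑' k : ℤ, (θ + 2 * (k : ℝ) * π) * exp (-(θ + 2 * (k : ℝ) * π) ^ 2 / (4 * t)) := by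
  rw [(hasSum_succ_mul_exp_neg_sq_mul_sin ht θ).tsum_eq,
    (hasSum_add_two_mul_pi_mul_exp_neg_sq_div ht θ).tsum_eq, oddKernel_pi_div _ ht.le]
  field_simp
  ring

lemma tsum_succ_mul_exp_mul_sin_eq_exp_mul_tsum (t θ : ℝ) :
    ∑' m : ℕ, ((m : ℝ) + 1) * exp (-((m : ℝ) * ((m : ℝ) + 2)) * t) * sin (((m : ℝ) + 1) * θ) =
      exp t *
        ∑' m : ℕ, ((m : ℝ) + 1) * exp (-((m : ℝ) + 1) ^ 2 * t) * sin (((m : ℝ) + 1) * θ) := by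
  rw [← tsum_mul_left]
  refine tsum_congr fun m ↦ ?_
  have exp_eq : exp (-((m : ℝ) * ((m : ℝ) + 2)) * t) = exp t * exp (-((m : ℝ) + 1) ^ 2 * t) := by
    rw [← exp_add]
    ring_nf
  rw [exp_eq]
  ring

lemma qKer_cos_mul_sin (t θ : ℝ) :
    qKer t (cos θ) * sin θ =
      ∑' m : ℕ, ((m : ℝ) + 1) * exp (-((m : ℝ) * ((m : ℝ) + 2)) * t) *
        sin (((m : ℝ) + 1) * θ) := by
  rw [qKer, ← tsum_mul_right]
  refine tsum_congr fun m ↦ ?_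
  rw [mul_assoc, Polynomial.Chebyshev.U_real_cos, Int.cast_natCast]

/-- Poisson-summation identity: for `t > 0` and `θ ∈ ℝ`,
`Σ_{m≥0} (m+1) e^{-m(m+2)t} sin((m+1)θ)
  = (√π e^t/(4 t^{3/2})) Σ_{k∈ℤ} (θ+2kπ) e^{-(θ+2kπ)²/(4t)}`;
equivalently, for `sin θ ≠ 0`,
`q_t(cos θ) = (√π e^t/(4 t^{3/2})) (1/sin θ) Σ_{k∈ℤ} (θ+2kπ) e^{-(θ+2kπ)²/(4t)}`. -/
theorem stmt_6 (t : ℝ) (ht : 0 < t) (θ : ℝ) :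
    (∑' m : ℕ, ((m : ℝ) + 1) * Real.exp (-((m : ℝ) * ((m : ℝ) + 2)) * t) *
        Real.sin (((m : ℝ) + 1) * θ)) =
      (Real.sqrt Real.pi * Real.exp t / (4 * t ^ ((3 : ℝ) / 2))) *
        ∑' k : ℤ, (θ + 2 * (k : ℝ) * Real.pi) *
          Real.exp (-(θ + 2 * (k : ℝ) * Real.pi) ^ 2 / (4 * t)) ∧
    (Real.sin θ ≠ 0 → qKer t (Real.cos θ) =
      (Real.sqrt Real.pi * Real.exp t / (4 * t ^ ((3 : ℝ) / 2))) * (1 / Real.sin θ) *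
        ∑' k : ℤ, (θ + 2 * (k : ℝ) * Real.pi) *
          Real.exp (-(θ + 2 * (k : ℝ) * Real.pi) ^ 2 / (4 * t))) := by
  have sine_series := tsum_succ_mul_exp_mul_sin_eq_exp_mul_tsum t θ
  rw [tsum_succ_mul_exp_neg_sq_mul_sin ht θ, ← mul_assoc, mul_div_assoc', mul_comm (exp t)]
    at sine_series
  refine ⟨sine_series, fun hsin ↦ ?_⟩
  rw [eq_div_of_mul_eq hsin (qKer_cos_mul_sin t θ), sine_series]
  ring
end
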